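/- arXiv:1304.6746 — 7 statements merged into one kernel-verified Lean document; each statement's English description precedes it below -/
import Mathlib

section
/- (Glonek's theorem) If f(x) = x₁x₂ and Σ is any positive semidefinite 2×2 matrix with positive diagonal entries, then W_{f,Σ} is distributed as (1/4)·χ²₁. -/
open MeasureTheory ProbabilityTheory Matrix MvPolynomial Real

noncomputable section

/-- The distribution of a vector of independent standard normal random variables. -/
def stdGaussian (ι : Type*) [Fintype ι] : Measure (ι → ℝ) :=
  Measure.pi fun _ => gaussianReal 0 1

/-- `μ` is the distribution of a centered Gaussian random vector with covariance matrix `S`,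
i.e. `μ` is the law of `A Z` for a vector `Z` of i.i.d. standard normals with `A Aᵀ = S`. -/
def IsCenteredGaussian {ι : Type*} [Fintype ι] (μ : Measure (ι → ℝ))
    (S : Matrix ι ι ℝ) : Prop :=
  ∃ A : Matrix ι ι ℝ, A * Aᵀ = S ∧ μ = (stdGaussian ι).map A.mulVec

/-- The gradient of a polynomial. -/
def polyGrad {ι : Type*} [Fintype ι] (f : MvPolynomial ι ℝ) (x : ι → ℝ) : ι → ℝ :=
  fun i => eval x (pderiv i f)

/-- The Wald ratio `W_{f,S}(x) = f(x)² / (∇f(x)ᵀ S ∇f(x))`. -/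
def waldRV {ι : Type*} [Fintype ι] (f : MvPolynomial ι ℝ) (S : Matrix ι ι ℝ)
    (x : ι → ℝ) : ℝ :=
  (eval x f) ^ 2 / (polyGrad f x ⬝ᵥ S.mulVec (polyGrad f x))

/-- The chi-square distribution with `k` degrees of freedom. -/
def chiSq (k : ℕ) : Measure ℝ :=
  (stdGaussian (Fin k)).map fun z => ∑ i, (z i) ^ 2


/-- Unnormalised Cauchy measure. -/
def cauchyNu : Measure ℝ := volume.withDensity (fun t => ENNReal.ofReal (1 + t ^ 2)⁻¹)

lemma cauchyNu_set {s : Set ℝ} (hs : MeasurableSet s) :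
    cauchyNu s = ENNReal.ofReal (∫ t in s, (1 + t ^ 2)⁻¹) := by
  rw [cauchyNu, withDensity_apply _ hs,
    ofReal_integral_eq_lintegral_ofReal integrable_inv_one_add_sq.integrableOn]
  exact Filter.Eventually.of_forall fun t => by positivity

instance cauchyNu_finite : IsFiniteMeasure cauchyNu := by
  refine ⟨?_⟩
  rw [cauchyNu_set MeasurableSet.univ]
  exact ENNReal.ofReal_lt_top

instance cauchyNu_nullSingleton : NullSingletonClass cauchyNu := by
  unfold cauchyNu; infer_instance

lemma cauchyNu_Iic (a : ℝ) : cauchyNu (Set.Iic a) = ENNReal.ofReal (arctan a + π / 2) := by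
  rw [cauchyNu_set measurableSet_Iic, integral_Iic_inv_one_add_sq]

lemma cauchyNu_Ioi (a : ℝ) : cauchyNu (Set.Ioi a) = ENNReal.ofReal (π / 2 - arctan a) := by
  rw [cauchyNu_set measurableSet_Ioi, integral_Ioi_inv_one_add_sq]

lemma cauchyNu_Ioc {a b : ℝ} (h : a ≤ b) :
    cauchyNu (Set.Ioc a b) = ENNReal.ofReal (arctan b - arctan a) := by
  rw [cauchyNu_set measurableSet_Ioc, ← intervalIntegral.integral_of_le h]
  have := integral_inv_one_add_sq (a := a) (b := b)
  rw [← this]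

lemma cauchyNu_map {c d : ℝ} (hc : 0 < c) (hd : 0 < d) (hcd : c + d = 1) :
    cauchyNu.map (fun t => c / t - d * t) = cauchyNu := by
  have hm : Measurable (fun t : ℝ => c / t - d * t) := by fun_prop
  refine Measure.ext_of_Iic _ _ fun a => ?_
  rw [Measure.map_apply hm measurableSet_Iic, cauchyNu_Iic]
  set D := √(a ^ 2 + 4 * c * d) with hD
  have hcdp : 0 < c * d := mul_pos hc hd
  have hDsq : D ^ 2 = a ^ 2 + 4 * c * d := Real.sq_sqrt (by positivity)
  have hDa : |a| < D := by
    apply abs_lt_of_sq_lt_sq _ (Real.sqrt_nonneg _)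
    rw [← hD, hDsq]; linarith
  obtain ⟨h1, h2⟩ := abs_lt.mp hDa
  set t1 := (-a - D) / (2 * d) with ht1
  set t2 := (-a + D) / (2 * d) with ht2
  have ht1n : t1 < 0 := div_neg_of_neg_of_pos (by linarith) (by linarith)
  have ht2p : 0 < t2 := div_pos (by linarith) (by linarith)
  have hsum : d * (t1 + t2) = -a := by rw [ht1, ht2]; field_simp; ring
  have hprod : d * (t1 * t2) = -c := by
    rw [ht1, ht2]; field_simp; linear_combination (-1 : ℝ) * hDsq
  have hfac : ∀ t, c - d * t ^ 2 - a * t = - d * ((t - t1) * (t - t2)) := by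
    intro t; linear_combination (-t) * hsum + hprod
  have hset : (fun t : ℝ => c / t - d * t) ⁻¹' Set.Iic a =ᵐ[cauchyNu]
      (Set.Ioc t1 0 ∪ Set.Ioi t2 : Set ℝ) := by
    have hne : ∀ x : ℝ, ∀ᵐ t ∂cauchyNu, t ≠ x := fun x => by
      simp [ae_iff]
    filter_upwards [hne 0, hne t1, hne t2] with t h0 hh1 hh2
    apply propext
    change c / t - d * t ≤ a ↔ (t1 < t ∧ t ≤ 0) ∨ t2 < t
    have e : c / t - d * t - a = (- d * ((t - t1) * (t - t2))) / t := by
      rw [← hfac]; field_simp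
    rw [← sub_nonpos, e]
    rcases lt_or_gt_of_ne h0 with ht | ht
    · rw [div_nonpos_iff]
      have : t - t2 < 0 := by linarith
      constructor
      · rintro (⟨h, -⟩ | ⟨_, h⟩)
        · left
          refine ⟨?_, ht.le⟩
          by_contra hcon
          have : t - t1 < 0 := by
            rcases lt_or_eq_of_le (not_lt.mp hcon) with h | h
            · linarith
            · exact absurd h hh1
          nlinarith [mul_pos hd (mul_pos_of_neg_of_neg this ‹t - t2 < 0›)]
        · linarith
      · rintro (⟨h, -⟩ | h)
        · left
          refine ⟨?_, ht.le⟩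
          nlinarith [mul_pos hd (mul_pos (sub_pos.mpr h) (neg_pos.mpr this))]
        · linarith
    · rw [div_nonpos_iff]
      have : 0 < t - t1 := by linarith
      constructor
      · rintro (⟨_, h⟩ | ⟨h, -⟩)
        · linarith
        · right
          by_contra hcon
          have h3 : 0 < t2 - t := by
            rcases lt_or_eq_of_le (not_lt.mp hcon) with h | h
            · linarith
            · exact absurd h hh2
          nlinarith [mul_pos hd (mul_pos this h3)]
      · rintro (⟨_, h⟩ | h)
        · linarith
        · right
          refine ⟨?_, ht.le⟩
          nlinarith [mul_pos hd (mul_pos this (sub_pos.mpr h))]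
  rw [measure_congr hset, measure_union _ measurableSet_Ioi, cauchyNu_Ioc ht1n.le, cauchyNu_Ioi,
    ← ENNReal.ofReal_add]
  · congr 1
    have hlt : t1 * t2 < 1 := by nlinarith [mul_pos (neg_pos.mpr ht1n) ht2p]
    have := arctan_add hlt
    have h4 : (t1 + t2) / (1 - t1 * t2) = -a := by
      rw [div_eq_iff (by linarith)]
      have : d * (t1 + t2 - (-a * (1 - t1 * t2))) = 0 := by
        linear_combination hsum - a * hprod + a * hcd
      rcases mul_eq_zero.mp this with h | h
      · linarith
      · linarith
    rw [h4, arctan_neg] at this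
    rw [arctan_zero]; linarith
  · rw [arctan_zero]
    have := arctan_strictMono ht1n
    rw [arctan_zero] at this; linarith
  · linarith [arctan_lt_pi_div_two t2]
  · rw [Set.disjoint_left]
    rintro x ⟨_, hx⟩ hx2
    have : t2 < x := hx2
    linarith

lemma lint_scale {a : ℝ} (ha : a ≠ 0) {f : ℝ → ENNReal} (hf : Measurable f) :
    ∫⁻ y, f y = ENNReal.ofReal |a| * ∫⁻ t, f (a * t) := by
  have h := Real.smul_map_volume_mul_left ha
  conv_lhs => rw [← h]
  rw [lintegral_smul_measure, lintegral_map hf (by fun_prop), smul_eq_mul]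

/-- Radial weight. -/
def radW (s : ℝ) : ENNReal := ENNReal.ofReal (|s| * ((2 * π)⁻¹ * Real.exp (-s ^ 2 / 2)))

lemma gauss_pdf_mul (x y : ℝ) : gaussianPDF 0 1 x * gaussianPDF 0 1 y =
    ENNReal.ofReal ((2 * π)⁻¹ * Real.exp (-(x ^ 2 + y ^ 2) / 2)) := by
  rw [gaussianPDF, gaussianPDF, ← ENNReal.ofReal_mul (gaussianPDFReal_nonneg _ _ _)]
  congr 1
  simp only [gaussianPDFReal, sub_zero, NNReal.coe_one, mul_one]
  have h1 : (√(2 * π))⁻¹ * (√(2 * π))⁻¹ = (2 * π)⁻¹ := by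
    rw [← mul_inv, Real.mul_self_sqrt (by positivity)]
  rw [mul_mul_mul_comm, h1, ← Real.exp_add]
  congr 2; ring

lemma polarish {H : ℝ × ℝ → ENNReal} (hH : Measurable H) :
    ∫⁻ p, H p ∂((gaussianReal 0 1).prod (gaussianReal 0 1)) =
      ∫⁻ t, (∫⁻ s, radW s * H ((√(1 + t ^ 2))⁻¹ * s, (√(1 + t ^ 2))⁻¹ * s * t)) ∂cauchyNu := by
  have hpdf := measurable_gaussianPDF 0 1
  set Φ : ℝ → ℝ → ENNReal := fun x y => gaussianPDF 0 1 x * gaussianPDF 0 1 y * H (x, y) with hΦ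
  have hΦm : Measurable (Function.uncurry Φ) := by
    simp only [hΦ, Function.uncurry_def]
    fun_prop
  have hradm : Measurable radW := by unfold radW; fun_prop
  calc ∫⁻ p, H p ∂((gaussianReal 0 1).prod (gaussianReal 0 1))
      = ∫⁻ x, ∫⁻ y, Φ x y := by
        rw [lintegral_prod _ hH.aemeasurable, gaussianReal_of_var_ne_zero _ one_ne_zero,
          lintegral_withDensity_eq_lintegral_mul _ hpdf]
        · refine lintegral_congr fun x => ?_
          rw [Pi.mul_apply, lintegral_withDensity_eq_lintegral_mul _ hpdf (by fun_prop),
            ← lintegral_const_mul _ (by fun_prop)]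
          refine lintegral_congr fun y => ?_
          simp only [hΦ, Pi.mul_apply, mul_assoc]
        · rw [← gaussianReal_of_var_ne_zero _ one_ne_zero]
          exact hH.lintegral_prod_right'
    _ = ∫⁻ x : ℝ, ∫⁻ t : ℝ, ENNReal.ofReal |x| * Φ x (x * t) := by
        have : ∀ᵐ x : ℝ, x ≠ 0 := by simp [ae_iff]
        refine lintegral_congr_ae ?_
        filter_upwards [this] with x hx
        rw [lint_scale hx (by fun_prop), lintegral_const_mul _ (by fun_prop)]
    _ = ∫⁻ t : ℝ, ∫⁻ x : ℝ, ENNReal.ofReal |x| * Φ x (x * t) := by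
        rw [lintegral_lintegral_swap]
        refine Measurable.aemeasurable ?_
        simp only [hΦ, Function.uncurry_def]
        fun_prop
    _ = _ := by
        rw [cauchyNu, lintegral_withDensity_eq_lintegral_mul _ (by fun_prop)]
        · refine lintegral_congr fun t => ?_
          have ht : 0 < 1 + t ^ 2 := by positivity
          set a := (√(1 + t ^ 2))⁻¹ with ha
          have hap : 0 < a := by positivity
          have ha2 : a ^ 2 = (1 + t ^ 2)⁻¹ := by rw [ha, inv_pow, Real.sq_sqrt ht.le]
          rw [lint_scale hap.ne' (by simp only [hΦ]; fun_prop), Pi.mul_apply,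
            ← lintegral_const_mul _ (by simp only [hΦ]; fun_prop),
            ← lintegral_const_mul _ (by fun_prop)]
          refine lintegral_congr fun s => ?_
          simp only [hΦ, gauss_pdf_mul, radW]
          rw [← mul_assoc, ← mul_assoc, ← mul_assoc, ← ENNReal.ofReal_mul (by positivity),
            ← ENNReal.ofReal_mul (by positivity), ← ENNReal.ofReal_mul (by positivity), ← ha2]
          congr 2
          have : (a * s) ^ 2 + (a * s * t) ^ 2 = s ^ 2 := by
            have : a ^ 2 * (1 + t ^ 2) = 1 := by rw [ha2]; field_simp
            linear_combination s ^ 2 * this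
          rw [this, abs_mul, abs_of_pos hap, neg_div]
          ring
        · refine Measurable.lintegral_prod_right' (f := fun p : ℝ × ℝ => radW p.2 *
            H ((√(1 + p.1 ^ 2))⁻¹ * p.2, (√(1 + p.1 ^ 2))⁻¹ * p.2 * p.1)) ?_
          fun_prop

lemma key_pos {c d : ℝ} (hc : 0 < c) (hd : 0 < d) (hcd : c + d = 1) {F : ℝ → ENNReal}
    (hF : Measurable F) :
    ∫⁻ p : ℝ × ℝ, F ((c * p.1 ^ 2 - d * p.2 ^ 2) ^ 2 / (c ^ 2 * p.1 ^ 2 + d ^ 2 * p.2 ^ 2))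
      ∂((gaussianReal 0 1).prod (gaussianReal 0 1)) =
    ∫⁻ p : ℝ × ℝ, F (p.2 ^ 2) ∂((gaussianReal 0 1).prod (gaussianReal 0 1)) := by
  have hradm : Measurable radW := by unfold radW; fun_prop
  rw [polarish (by fun_prop), polarish (by fun_prop)]
  set K : ℝ → ENNReal := fun t => ∫⁻ s, radW s * F (s ^ 2 * (t ^ 2 / (1 + t ^ 2))) with hK
  have hKm : Measurable K := by
    refine Measurable.lintegral_prod_right' (f := fun p : ℝ × ℝ => radW p.2 *
            F (p.2 ^ 2 * (p.1 ^ 2 / (1 + p.1 ^ 2)))) ?_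
    fun_prop
  have hsq : ∀ t : ℝ, ((√(1 + t ^ 2))⁻¹) ^ 2 = (1 + t ^ 2)⁻¹ := fun t => by
    rw [inv_pow, Real.sq_sqrt (by positivity)]
  have e2 : ∀ t s : ℝ, ((√(1 + t ^ 2))⁻¹ * s * t) ^ 2 = s ^ 2 * (t ^ 2 / (1 + t ^ 2)) := by
    intro t s
    rw [mul_pow, mul_pow, hsq]; ring
  simp only [e2]
  change _ = ∫⁻ t, K t ∂cauchyNu
  have hm : Measurable (fun t : ℝ => c / t - d * t) := by fun_prop
  conv_rhs => rw [← cauchyNu_map hc hd hcd, lintegral_map hKm hm]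
  have hne : ∀ᵐ t ∂cauchyNu, t ≠ 0 := by simp [ae_iff]
  refine lintegral_congr_ae ?_
  filter_upwards [hne] with t ht
  refine lintegral_congr fun s => ?_
  congr 2
  rw [mul_pow, hsq]
  have hd1 : 0 < 1 + t ^ 2 := by positivity
  have hq : 0 < c ^ 2 + d ^ 2 * t ^ 2 := by positivity
  have hC : c / t - d * t = (c - d * t ^ 2) / t := by field_simp
  have hden : t ^ 2 + (c - d * t ^ 2) ^ 2 = (c ^ 2 + d ^ 2 * t ^ 2) * (1 + t ^ 2) := by
    linear_combination (-t ^ 2) * (c + d + 1) * hcd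
  have hR : (c / t - d * t) ^ 2 / (1 + (c / t - d * t) ^ 2) =
      (c - d * t ^ 2) ^ 2 / ((c ^ 2 + d ^ 2 * t ^ 2) * (1 + t ^ 2)) := by
    rw [← hden, hC]
    have : 0 < t ^ 2 + (c - d * t ^ 2) ^ 2 := by positivity
    have h5 : 1 + ((c - d * t ^ 2) / t) ^ 2 = (t ^ 2 + (c - d * t ^ 2) ^ 2) / t ^ 2 := by
      field_simp
    rw [h5, div_pow, div_div_div_cancel_right₀ (by positivity)]
  rw [hR]
  by_cases hs : s = 0
  · subst hs; simp
  · have : c ^ 2 * ((1 + t ^ 2)⁻¹ * s ^ 2) + d ^ 2 * (s ^ 2 * (t ^ 2 / (1 + t ^ 2))) =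
      (1 + t ^ 2)⁻¹ * s ^ 2 * (c ^ 2 + d ^ 2 * t ^ 2) := by ring
    rw [this]
    field_simp

lemma key {c d : ℝ} (hc : 0 ≤ c) (hd : 0 ≤ d) (hcd : c + d = 1) {F : ℝ → ENNReal}
    (hF : Measurable F) :
    ∫⁻ p : ℝ × ℝ, F ((c * p.1 ^ 2 - d * p.2 ^ 2) ^ 2 / (c ^ 2 * p.1 ^ 2 + d ^ 2 * p.2 ^ 2))
      ∂((gaussianReal 0 1).prod (gaussianReal 0 1)) =
    ∫⁻ z : ℝ, F (z ^ 2) ∂(gaussianReal 0 1) := by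
  have hq : ∀ z : ℝ, (z ^ 2) ^ 2 / z ^ 2 = z ^ 2 := fun z => by
    by_cases hz : z = 0
    · simp [hz]
    · field_simp
  have h2 : ∫⁻ p : ℝ × ℝ, F (p.2 ^ 2) ∂((gaussianReal 0 1).prod (gaussianReal 0 1)) =
      ∫⁻ z : ℝ, F (z ^ 2) ∂(gaussianReal 0 1) := by
    rw [lintegral_prod _ (by fun_prop)]; simp
  have h1 : ∫⁻ p : ℝ × ℝ, F (p.1 ^ 2) ∂((gaussianReal 0 1).prod (gaussianReal 0 1)) =
      ∫⁻ z : ℝ, F (z ^ 2) ∂(gaussianReal 0 1) := by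
    rw [lintegral_prod _ (by fun_prop)]; simp
  rcases hc.eq_or_lt with h | hc'
  · subst h
    obtain rfl : d = 1 := by linarith
    simp [hq, h2]
  rcases hd.eq_or_lt with h | hd'
  · subst h
    obtain rfl : c = 1 := by linarith
    simp [hq, h1]
  rw [key_pos hc' hd' hcd hF, h2]

lemma wald_formula (S : Matrix (Fin 2) (Fin 2) ℝ) (x : Fin 2 → ℝ) :
    waldRV (X 0 * X 1) S x = (x 0 * x 1) ^ 2 /
      (S 0 0 * x 1 ^ 2 + (S 0 1 + S 1 0) * (x 0 * x 1) + S 1 1 * x 0 ^ 2) := by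
  have h0 : polyGrad (X 0 * X 1 : MvPolynomial (Fin 2) ℝ) x 0 = x 1 := by
    simp [polyGrad, pderiv_X]
  have h1 : polyGrad (X 0 * X 1 : MvPolynomial (Fin 2) ℝ) x 1 = x 0 := by
    simp [polyGrad, pderiv_X]
  unfold waldRV
  simp only [dotProduct, Matrix.mulVec, Fin.sum_univ_two, h0, h1, eval_mul, eval_X]
  congr 1
  ring

lemma exists_polar (a b : ℝ) : ∃ s α : ℝ, s ^ 2 = a ^ 2 + b ^ 2 ∧ a = s * cos α ∧ b = s * sin α := by
  refine ⟨‖(⟨a, b⟩ : ℂ)‖, Complex.arg ⟨a, b⟩, ?_, ?_, ?_⟩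
  · rw [Complex.sq_norm, Complex.normSq_mk]; ring
  · rw [Complex.norm_mul_cos_arg]
  · rw [Complex.norm_mul_sin_arg]

/-- Glonek's theorem: If `f(x) = x₁x₂` and `Σ` is any positive semidefinite
`2×2` matrix with positive diagonal entries, then `W_{f,Σ} ~ (1/4)·χ²₁`. -/
theorem glonek (S : Matrix (Fin 2) (Fin 2) ℝ) (hS : S.PosSemidef)
    (hSdiag : ∀ i, 0 < S i i)
    (μ : Measure (Fin 2 → ℝ)) (hμ : IsCenteredGaussian μ S) :
    μ.map (waldRV (X 0 * X 1) S) =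
      (gaussianReal 0 1).map (fun z => (1 / 4) * z ^ 2) := by
  obtain ⟨A, hA, rfl⟩ := hμ
  have hwm : Measurable (waldRV (X 0 * X 1) S) := by
    rw [show waldRV (X 0 * X 1) S = _ from funext (wald_formula S)]
    fun_prop
  have hAm : Measurable (A.mulVec) := by
    refine measurable_pi_lambda _ fun i => ?_
    simp only [Matrix.mulVec, dotProduct]
    fun_prop
  refine Measure.ext_of_lintegral _ fun F hF => ?_
  rw [lintegral_map hF hwm, lintegral_map (f := fun a => F (waldRV (X 0 * X 1) S a)) (hF.comp hwm) hAm, lintegral_map hF (by fun_prop)]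
  have hmp := measurePreserving_finTwoArrow (gaussianReal 0 1)
  have hmp' := hmp.symm
  have hFA : Measurable (fun z => F (waldRV (X 0 * X 1) S (A.mulVec z))) :=
    hF.comp (hwm.comp hAm)
  rw [_root_.stdGaussian, ← hmp'.map_eq, lintegral_map hFA hmp'.measurable]
  obtain ⟨s, α, hs, ha0, ha1⟩ := exists_polar (A 0 0) (A 0 1)
  obtain ⟨t, β, ht, hb0, hb1⟩ := exists_polar (A 1 0) (A 1 1)
  have hS00 : S 0 0 = s ^ 2 := by
    rw [hs, ← hA]; simp [Matrix.mul_apply, Fin.sum_univ_two]; ring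
  have hS11 : S 1 1 = t ^ 2 := by
    rw [ht, ← hA]; simp [Matrix.mul_apply, Fin.sum_univ_two]; ring
  have hsp : 0 < s ^ 2 := hS00 ▸ hSdiag 0
  have htp : 0 < t ^ 2 := hS11 ▸ hSdiag 1
  set m := (α + β) / 2 with hm
  set δ := (α - β) / 2 with hδ
  have hα : α = m + δ := by rw [hm, hδ]; ring
  have hβ : β = m - δ := by rw [hm, hδ]; ring
  have hS01 : S 0 1 + S 1 0 = 2 * (s * t * (cos δ ^ 2 - sin δ ^ 2)) := by
    have : S 0 1 + S 1 0 = 2 * (A 0 0 * A 1 0 + A 0 1 * A 1 1) := by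
      rw [← hA]; simp [Matrix.mul_apply, Fin.sum_univ_two]; ring
    rw [this, ha0, ha1, hb0, hb1, hα, hβ, cos_add, sin_add, cos_sub, sin_sub]
    linear_combination 2 * s * t * (cos δ ^ 2 - sin δ ^ 2) * sin_sq_add_cos_sq m
  have hrot : ((gaussianReal 0 1).prod (gaussianReal 0 1)).map
      (ContinuousLinearMap.rotation (E := ℝ) (-m)) =
      (gaussianReal 0 1).prod (gaussianReal 0 1) :=
    IsGaussian.map_rotation_eq_self (by simp) _
  rw [← hrot, lintegral_map (f := fun q => F (waldRV (X 0 * X 1) S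
    (A.mulVec (MeasurableEquiv.finTwoArrow.symm q)))) (hFA.comp hmp'.measurable) (by fun_prop)]
  rw [← key (c := cos δ ^ 2) (d := sin δ ^ 2) (F := fun w => F (1 / 4 * w)) (by positivity)
    (by positivity) (cos_sq_add_sin_sq δ) (by fun_prop)]
  refine lintegral_congr fun p => ?_
  obtain ⟨x, y⟩ := p
  rw [ContinuousLinearMap.rotation_apply]
  simp only [Function.comp]
  congr 1
  rw [wald_formula, hS00, hS11, hS01]
  set u := cos δ * x + sin δ * y with hu
  set v := cos δ * x - sin δ * y with hv
  set z : Fin 2 → ℝ := MeasurableEquiv.finTwoArrow.symm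
    (cos (-m) • x + sin (-m) • y, -sin (-m) • x + cos (-m) • y) with hz
  have hz0 : z 0 = cos m * x - sin m * y := by
    simp [hz, MeasurableEquiv.finTwoArrow]; ring
  have hz1 : z 1 = sin m * x + cos m * y := by
    simp [hz, MeasurableEquiv.finTwoArrow]
  have hx0 : (A.mulVec z) 0 = s * u := by
    simp only [Matrix.mulVec, dotProduct, Fin.sum_univ_two, hz0, hz1, ha0, ha1, hα, cos_add, sin_add]
    rw [hu]
    linear_combination s * (cos δ * x + sin δ * y) * sin_sq_add_cos_sq m
  have hx1 : (A.mulVec z) 1 = t * v := by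
    simp only [Matrix.mulVec, dotProduct, Fin.sum_univ_two, hz0, hz1, hb0, hb1, hβ, cos_sub, sin_sub]
    rw [hv]
    linear_combination t * (cos δ * x - sin δ * y) * sin_sq_add_cos_sq m
  rw [hx0, hx1]
  have huv : u * v = cos δ ^ 2 * x ^ 2 - sin δ ^ 2 * y ^ 2 := by rw [hu, hv]; ring
  have hden : s ^ 2 * (t * v) ^ 2 + 2 * (s * t * (cos δ ^ 2 - sin δ ^ 2)) * (s * u * (t * v)) +
      t ^ 2 * (s * u) ^ 2 = (s ^ 2 * t ^ 2) *
      (4 * ((cos δ ^ 2) ^ 2 * x ^ 2 + (sin δ ^ 2) ^ 2 * y ^ 2)) := by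
    have h := sin_sq_add_cos_sq δ
    have : u ^ 2 + v ^ 2 + 2 * (cos δ ^ 2 - sin δ ^ 2) * (u * v) =
      4 * ((cos δ ^ 2) ^ 2 * x ^ 2 + (sin δ ^ 2) ^ 2 * y ^ 2) := by
      rw [huv, hu, hv]
      linear_combination (-2) * (cos δ ^ 2 * x ^ 2 + sin δ ^ 2 * y ^ 2) * h
    linear_combination s ^ 2 * t ^ 2 * this
  have hnum : (s * u * (t * v)) ^ 2 = (s ^ 2 * t ^ 2) * (u * v) ^ 2 := by ring
  rw [hden, hnum, mul_div_mul_left _ _ (by positivity), huv, mul_comm 4, ← div_div]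
  ring
end
end

section
/- Let f(x) = x₁^{α₁}·x₂^{α₂} with real exponents α₁, α₂ > 0, and let Σ be any positive semidefinite 2×2 matrix with positive diagonal entries. Then W_{f,Σ} is distributed as (1/(α₁+α₂)²)·χ²₁. -/
open MeasureTheory ProbabilityTheory Matrix MvPolynomial Real

noncomputable section

lemma gauss_unique (A B : Matrix (Fin 2) (Fin 2) ℝ) (h : A * Aᵀ = B * Bᵀ) :
    (_root_.stdGaussian (Fin 2)).map A.mulVec = (_root_.stdGaussian (Fin 2)).map B.mulVec := by
  have mA : ∀ A : Matrix (Fin 2) (Fin 2) ℝ, Measurable A.mulVec := fun A =>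
    (Continuous.matrix_mulVec continuous_const continuous_id).measurable
  have mT : Measurable (WithLp.toLp 2 : (Fin 2 → ℝ) → EuclideanSpace ℝ (Fin 2)) := by fun_prop
  have mO : Measurable (WithLp.ofLp : EuclideanSpace ℝ (Fin 2) → (Fin 2 → ℝ)) := by fun_prop
  have key : ∀ (A : Matrix (Fin 2) (Fin 2) ℝ) (t : EuclideanSpace ℝ (Fin 2)),
      charFun (((_root_.stdGaussian (Fin 2)).map A.mulVec).map (WithLp.toLp 2)) t =
        Complex.exp (-((((A * Aᵀ) *ᵥ t.ofLp) ⬝ᵥ t.ofLp : ℝ) : ℂ) / 2) := by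
    intro A t
    have h1 : charFun (((_root_.stdGaussian (Fin 2)).map A.mulVec).map (WithLp.toLp 2)) t =
        charFun ((_root_.stdGaussian (Fin 2)).map (WithLp.toLp 2)) (WithLp.toLp 2 (Aᵀ *ᵥ t.ofLp)) := by
      rw [charFun_apply, charFun_apply, integral_map, integral_map, integral_map]
      · congr 1
        ext z
        congr 3
        simp [EuclideanSpace.inner_eq_star_dotProduct, dotProduct, Fin.sum_univ_two]
        ring
      all_goals first | exact (mA A).aemeasurable | exact mT.aemeasurable | skip
      all_goals exact (Continuous.aestronglyMeasurable (by fun_prop))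
    rw [h1]
    have : (_root_.stdGaussian (Fin 2)).map (WithLp.toLp 2) =
      ProbabilityTheory.stdGaussian (EuclideanSpace ℝ (Fin 2)) := map_pi_eq_stdGaussian
    rw [this, charFun_stdGaussian]
    congr 3
    rw [← Complex.ofReal_pow, EuclideanSpace.norm_sq_eq]
    simp [Matrix.mulVec, dotProduct, Fin.sum_univ_two, Matrix.mul_apply]
    ring
  have : IsProbabilityMeasure (_root_.stdGaussian (Fin 2)) := by
    unfold _root_.stdGaussian; infer_instance
  have : ∀ A : Matrix (Fin 2) (Fin 2) ℝ, IsProbabilityMeasure ((_root_.stdGaussian (Fin 2)).map A.mulVec) :=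
    fun A => Measure.isProbabilityMeasure_map (mA A).aemeasurable
  have : ∀ A : Matrix (Fin 2) (Fin 2) ℝ, IsProbabilityMeasure (((_root_.stdGaussian (Fin 2)).map A.mulVec).map (WithLp.toLp 2 : (Fin 2 → ℝ) → EuclideanSpace ℝ (Fin 2))) :=
    fun A => Measure.isProbabilityMeasure_map mT.aemeasurable
  have e : ((_root_.stdGaussian (Fin 2)).map A.mulVec).map (WithLp.toLp 2) = ((_root_.stdGaussian (Fin 2)).map B.mulVec).map (WithLp.toLp 2 : (Fin 2 → ℝ) → EuclideanSpace ℝ (Fin 2)) := by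
    apply Measure.ext_of_charFun
    ext t
    rw [key, key, h]
  have e2 := congrArg (Measure.map (WithLp.ofLp : EuclideanSpace ℝ (Fin 2) → (Fin 2 → ℝ))) e
  rw [Measure.map_map mO mT, Measure.map_map mO mT] at e2
  have : (WithLp.ofLp : EuclideanSpace ℝ (Fin 2) → (Fin 2 → ℝ)) ∘ (WithLp.toLp 2) = id := rfl
  rwa [this, Measure.map_id, Measure.map_id] at e2

lemma cauchy_identity (p d s : ℝ) (hp : 0 < p) (hp1 : p < 1) (hs : 0 < s) :
    1 / (1 + (s - d) ^ 2) +
      ((1 - p) * (1 + d ^ 2) / p / s ^ 2) * (1 / (1 + (-((1 - p) * (1 + d ^ 2) / p) / s - d) ^ 2)) =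
    (p + (1 - p) * (1 + d ^ 2) / s ^ 2) *
      (1 / (1 + (p * s + (1 - 2 * p) * d - (1 - p) * (1 + d ^ 2) / s) ^ 2)) := by
  have h1 : 1 + (s - d) ^ 2 ≠ 0 := by positivity
  have h2 : (p * s) ^ 2 + ((1 - p) * (1 + d ^ 2) + p * d * s) ^ 2 ≠ 0 := by positivity
  have h3 : s ^ 2 + (p * s ^ 2 + (1 - 2 * p) * d * s - (1 - p) * (1 + d ^ 2)) ^ 2 ≠ 0 := by positivity
  have e2 : 1 + (-((1 - p) * (1 + d ^ 2) / p) / s - d) ^ 2 =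
    ((p * s) ^ 2 + ((1 - p) * (1 + d ^ 2) + p * d * s) ^ 2) / (p * s) ^ 2 := by
    field_simp; ring
  have e3 : 1 + (p * s + (1 - 2 * p) * d - (1 - p) * (1 + d ^ 2) / s) ^ 2 =
    (s ^ 2 + (p * s ^ 2 + (1 - 2 * p) * d * s - (1 - p) * (1 + d ^ 2)) ^ 2) / s ^ 2 := by
    field_simp
  rw [e2, e3]
  field_simp
  ring

lemma cauchy_inv (p d : ℝ) (hp : 0 < p) (hp1 : p < 1) (h : ℝ → ENNReal) (hh : Measurable h) :
    ∫⁻ t, ENNReal.ofReal (1 / (1 + t ^ 2)) * h (p * t + (1 - p) * ((d * t - 1) / (d + t))) =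
    ∫⁻ t, ENNReal.ofReal (1 / (1 + t ^ 2)) * h t := by
  obtain ⟨k, hk⟩ : ∃ k, k = (1 - p) * (1 + d ^ 2) / p := ⟨_, rfl⟩
  have hq : 0 < 1 - p := by linarith
  have hkp : 0 < k := by rw [hk]; positivity
  let Φ : ℝ → ℝ := fun s => p * s + (1 - 2 * p) * d - (1 - p) * (1 + d ^ 2) / s
  let G : ℝ → ENNReal := fun s => ENNReal.ofReal (1 / (1 + (s - d) ^ 2)) * h (Φ s)
  have hΦm : Measurable Φ := by fun_prop
  have s1 : ∫⁻ t, ENNReal.ofReal (1 / (1 + t ^ 2)) * h (p * t + (1 - p) * ((d * t - 1) / (d + t)))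
      = ∫⁻ s, G s := by
    rw [← lintegral_sub_right_eq_self _ d]
    apply lintegral_congr_ae
    filter_upwards [Measure.ae_ne volume (0:ℝ)] with s hs
    simp only [G, Φ]
    congr 2
    rw [show d + (s - d) = s by ring]
    field_simp
    ring
  have s2 : ∫⁻ s, G s = (∫⁻ s in Set.Ioi 0, G s) + ∫⁻ s in Set.Iio 0, G s := by
    rw [← lintegral_add_compl G (measurableSet_Ioi (a := (0:ℝ))), Set.compl_Ioi,
      setLIntegral_congr Iio_ae_eq_Iic.symm]
  have im1 : (fun s : ℝ => -k / s) '' Set.Ioi 0 = Set.Iio 0 := by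
    ext y
    simp only [Set.mem_image, Set.mem_Ioi, Set.mem_Iio]
    constructor
    · rintro ⟨s, hs, rfl⟩
      exact div_neg_of_neg_of_pos (by linarith) hs
    · intro hy
      exact ⟨-k / y, div_pos_of_neg_of_neg (by linarith) hy, by field_simp⟩
  have s3 : ∫⁻ s in Set.Iio 0, G s = ∫⁻ s in Set.Ioi 0, ENNReal.ofReal |k / s ^ 2| * G (-k / s) := by
    rw [← im1]
    apply lintegral_image_eq_lintegral_abs_deriv_mul measurableSet_Ioi
    · intro x hx
      have hx : x ≠ 0 := ne_of_gt hx
      have := ((hasDerivAt_inv hx).const_mul (-k)).hasDerivWithinAt (s := Set.Ioi 0)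
      simp only [← div_eq_mul_inv] at this
      have e : k / x ^ 2 = -k * -(x ^ 2)⁻¹ := by rw [div_eq_mul_inv]; ring
      rw [e]
      exact this
    · intro x hx y hy hxy
      have hx : x ≠ 0 := ne_of_gt hx
      have hy : y ≠ 0 := ne_of_gt hy
      simp only at hxy
      field_simp at hxy
      linarith
  have im2 : Φ '' Set.Ioi 0 = Set.univ := by
    rw [Set.eq_univ_iff_forall]
    intro y
    obtain ⟨b, hb⟩ : ∃ b, b = y - (1 - 2 * p) * d := ⟨_, rfl⟩
    obtain ⟨c, hc⟩ : ∃ c, c = (1 - p) * (1 + d ^ 2) := ⟨_, rfl⟩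
    have hc0 : 0 < c := by rw [hc]; positivity
    have hD : 0 < b ^ 2 + 4 * p * c := by positivity
    have hsq := Real.sq_sqrt hD.le
    have hpos : 0 < b + √(b ^ 2 + 4 * p * c) := by
      have : |b| < √(b ^ 2 + 4 * p * c) := by
        apply Real.lt_sqrt_of_sq_lt
        rw [sq_abs]; nlinarith [mul_pos hp hc0]
      linarith [neg_abs_le b]
    refine ⟨(b + √(b ^ 2 + 4 * p * c)) / (2 * p), by simp only [Set.mem_Ioi]; positivity, ?_⟩
    simp only [Φ]
    rw [← hc]
    have : y = b + (1 - 2 * p) * d := by rw [hb]; ring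
    rw [this]
    generalize √(b ^ 2 + 4 * p * c) = r at *
    have : p * ((b + r) / (2 * p)) - c / ((b + r) / (2 * p)) = b := by
      field_simp
      nlinarith
    linarith
  have s4 : ∫⁻ t, ENNReal.ofReal (1 / (1 + t ^ 2)) * h t = ∫⁻ s in Set.Ioi 0,
      ENNReal.ofReal |p + (1 - p) * (1 + d ^ 2) / s ^ 2| *
       (ENNReal.ofReal (1 / (1 + (Φ s) ^ 2)) * h (Φ s)) := by
    rw [← setLIntegral_univ, ← im2]
    apply lintegral_image_eq_lintegral_abs_deriv_mul measurableSet_Ioi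
      (g := fun t => ENNReal.ofReal (1 / (1 + t ^ 2)) * h t)
    · intro x hx
      have hx : x ≠ 0 := ne_of_gt hx
      have := ((((hasDerivAt_id x).const_mul p).add_const ((1 - 2 * p) * d)).sub ((hasDerivAt_inv hx).const_mul ((1 - p) * (1 + d ^ 2)))).hasDerivWithinAt (s := Set.Ioi 0)
      have e : p + (1 - p) * (1 + d ^ 2) / x ^ 2 = p * 1 - (1 - p) * (1 + d ^ 2) * -(x ^ 2)⁻¹ := by
        rw [div_eq_mul_inv]; ring
      rw [e]
      exact this
    · intro x hx y hy hxy
      have hx : 0 < x := hx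
      have hy : 0 < y := hy
      simp only [Φ] at hxy
      have e : (x - y) * (p * x * y + (1 - p) * (1 + d ^ 2)) = 0 := by
        field_simp at hxy
        linarith
      have : 0 < p * x * y + (1 - p) * (1 + d ^ 2) := by positivity
      rcases mul_eq_zero.1 e with h | h <;> linarith
  rw [s1, s2, s3, s4, ← lintegral_add_left (by simp only [G]; fun_prop)]
  apply setLIntegral_congr_fun measurableSet_Ioi
  intro s hs
  have hs : 0 < s := hs
  have hΦσ : Φ (-k / s) = Φ s := by
    simp only [Φ, hk]
    field_simp
    ring
  simp only [G]
  rw [hΦσ, ← mul_assoc, ← mul_assoc, ← add_mul, abs_of_pos (by positivity), abs_of_pos (by positivity),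
    ← ENNReal.ofReal_mul (by positivity), ← ENNReal.ofReal_mul (by positivity),
    ← ENNReal.ofReal_add (by positivity) (by positivity)]
  congr 2
  rw [hk]
  exact cauchy_identity p d s hp hp1 hs

lemma lintegral_scale (a : ℝ) (ha : a ≠ 0) (f : ℝ → ENNReal) (hf : Measurable f) :
    ∫⁻ y, f y = ENNReal.ofReal |a| * ∫⁻ t, f (t * a) := by
  conv_lhs => rw [← Real.smul_map_volume_mul_right ha]
  rw [lintegral_smul_measure, lintegral_map hf (by fun_prop), smul_eq_mul]

lemma gauss_lintegral (f : ℝ → ENNReal) (hf : Measurable f) :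
    ∫⁻ x, f x ∂(gaussianReal 0 1) =
      ∫⁻ x, ENNReal.ofReal ((√(2 * π))⁻¹ * Real.exp (-x ^ 2 / 2)) * f x := by
  rw [gaussianReal_of_var_ne_zero _ one_ne_zero,
    lintegral_withDensity_eq_lintegral_mul _ (measurable_gaussianPDF 0 1) hf]
  apply lintegral_congr
  intro x
  simp [gaussianPDF, gaussianPDFReal]

lemma ratio_polar (H : ℝ → ℝ → ENNReal) (hH : Measurable (Function.uncurry H)) :
    ∫⁻ x, ∫⁻ y, H (x ^ 2 + y ^ 2) (y / x) ∂(gaussianReal 0 1) ∂(gaussianReal 0 1) =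
    ∫⁻ r, ENNReal.ofReal (|r| * Real.exp (-r ^ 2 / 2) / (2 * π)) *
      ∫⁻ t, ENNReal.ofReal (1 / (1 + t ^ 2)) * H (r ^ 2) t := by
  have hm : ∀ {X : Type} [MeasurableSpace X] (f g : X → ℝ), Measurable f → Measurable g →
      Measurable (fun x => H (f x) (g x)) := fun f g hf hg => hH.comp (hf.prodMk hg)
  rw [gauss_lintegral _ (Measurable.lintegral_prod_right (hm (fun q : ℝ × ℝ => q.1 ^ 2 + q.2 ^ 2) (fun q => q.2 / q.1) (by fun_prop) (by fun_prop)))]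
  let g : ℝ → ENNReal := fun x => ENNReal.ofReal ((√(2 * π))⁻¹ * Real.exp (-x ^ 2 / 2))
  have hg : Measurable g := by fun_prop
  have st1 : ∀ᵐ x : ℝ, g x * ∫⁻ y, H (x ^ 2 + y ^ 2) (y / x) ∂(gaussianReal 0 1) =
      ∫⁻ t, g x * (ENNReal.ofReal |x| * (g (t * x) * H (x ^ 2 + (t * x) ^ 2) t)) := by
    filter_upwards [Measure.ae_ne volume (0:ℝ)] with x hx
    rw [gauss_lintegral _ (hm _ _ (by fun_prop) (by fun_prop)), lintegral_scale x hx (fun y => g y * H (x ^ 2 + y ^ 2) (y / x))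
      (Measurable.mul (by fun_prop) (hm _ _ (by fun_prop) (by fun_prop)))]
    rw [← lintegral_const_mul, ← lintegral_const_mul]
    · apply lintegral_congr
      intro t
      rw [mul_div_cancel_right₀ t hx]
    · exact Measurable.const_mul (Measurable.mul (by fun_prop) (hm _ _ (by fun_prop) (by fun_prop))) _
    · exact (Measurable.mul (by fun_prop) (hm _ _ (by fun_prop) (by fun_prop)))
  rw [lintegral_congr_ae st1, lintegral_lintegral_swap]
  swap
  · apply Measurable.aemeasurable
    refine Measurable.mul (f := fun q : ℝ × ℝ => g q.1) (by fun_prop) ?_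
    refine Measurable.mul (by fun_prop) ?_
    exact Measurable.mul (by fun_prop) (hm _ _ (by fun_prop) (by fun_prop))
  have st2 : ∀ t : ℝ, ∫⁻ x, g x * (ENNReal.ofReal |x| * (g (t * x) * H (x ^ 2 + (t * x) ^ 2) t)) =
      ∫⁻ r, ENNReal.ofReal (|r| * Real.exp (-r ^ 2 / 2) / (2 * π)) *
        (ENNReal.ofReal (1 / (1 + t ^ 2)) * H (r ^ 2) t) := by
    intro t
    have h1 : 0 < 1 + t ^ 2 := by positivity
    have h2 : 0 < (√(1 + t ^ 2))⁻¹ := by positivity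
    have h3 : (√(1 + t ^ 2))⁻¹ ^ 2 = 1 / (1 + t ^ 2) := by
      rw [inv_pow, Real.sq_sqrt h1.le, one_div]
    have hM : Measurable fun x => g x * (ENNReal.ofReal |x| * (g (t * x) * H (x ^ 2 + (t * x) ^ 2) t)) :=
      Measurable.mul (by fun_prop) (Measurable.mul (by fun_prop) (Measurable.mul (by fun_prop) (hm _ _ (by fun_prop) (by fun_prop))))
    rw [lintegral_scale _ h2.ne' _ hM, ← lintegral_const_mul]
    swap
    · exact hM.comp (measurable_id.mul_const _)
    apply lintegral_congr
    intro r
    generalize (√(1 + t ^ 2))⁻¹ = a at *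
    have e1 : (r * a) ^ 2 + (t * (r * a)) ^ 2 = r ^ 2 := by
      have : (r * a) ^ 2 + (t * (r * a)) ^ 2 = r ^ 2 * (a ^ 2 * (1 + t ^ 2)) := by ring
      rw [this, h3]; field_simp
    rw [e1]
    simp only [← mul_assoc]
    congr 1
    simp only [g]
    rw [← ENNReal.ofReal_mul (by positivity), ← ENNReal.ofReal_mul (by positivity), ← ENNReal.ofReal_mul (by positivity), ← ENNReal.ofReal_mul (by positivity)]
    congr 1
    rw [abs_mul, abs_of_pos h2, ← h3]
    have e2 : Real.exp (-r ^ 2 / 2) = Real.exp (-(r * a) ^ 2 / 2) * Real.exp (-(t * (r * a)) ^ 2 / 2) := by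
      rw [← Real.exp_add]; congr 1; rw [← e1]; ring
    have e3 : (√(2 * π))⁻¹ * (√(2 * π))⁻¹ = 1 / (2 * π) := by
      rw [← mul_inv, Real.mul_self_sqrt (by positivity), one_div]
    rw [e2, div_eq_mul_one_div (_ * _) (2 * π), ← e3]
    ring_nf
  simp_rw [st2]
  rw [lintegral_lintegral_swap]
  · apply lintegral_congr
    intro r
    rw [lintegral_const_mul]
    exact Measurable.mul (by fun_prop) (hm _ _ (by fun_prop) (by fun_prop))
  · apply Measurable.aemeasurable
    refine Measurable.mul (f := fun q : ℝ × ℝ => ENNReal.ofReal (|q.2| * Real.exp (-q.2 ^ 2 / 2) / (2 * π))) (by fun_prop) ?_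
    exact Measurable.mul (by fun_prop) (hm _ _ (by fun_prop) (by fun_prop))

lemma wald_alg (a b c x y u v : ℝ) (ha : a ≠ 0) (hx : x ≠ 0) (hw : b * x + c * y ≠ 0)
    (hu : 0 < u) (hv : 0 < v) :
    (u / (a * x) * (a ^ 2 * (u / (a * x)) + a * b * (v / (b * x + c * y))) +
      v / (b * x + c * y) * (a * b * (u / (a * x)) + (b ^ 2 + c ^ 2) * (v / (b * x + c * y))))⁻¹ =
    (x ^ 2 + y ^ 2) / ((u + v) ^ 2 * (1 + (u / (u + v) * (y / x) +
      (1 - u / (u + v)) * ((b * (y / x) - c) / (b + c * (y / x)))) ^ 2)) := by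
  rw [inv_eq_iff_eq_inv, inv_div]
  have huv : u + v ≠ 0 := by positivity
  have hxy : x ^ 2 + y ^ 2 ≠ 0 := by positivity
  have e1 : (b * (y / x) - c) / (b + c * (y / x)) = (b * y - c * x) / (b * x + c * y) := by
    rw [show b * (y / x) - c = (b * y - c * x) / x by field_simp,
      show b + c * (y / x) = (b * x + c * y) / x by field_simp]
    rw [div_div_div_cancel_right₀ hx]
  have e2 : u / (u + v) * (y / x) + (1 - u / (u + v)) * ((b * y - c * x) / (b * x + c * y)) =
      (u * y * (b * x + c * y) + v * x * (b * y - c * x)) / ((u + v) * x * (b * x + c * y)) := by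
    generalize b * x + c * y = w at *
    field_simp
    ring
  rw [e1, e2]
  generalize hwd : b * x + c * y = w at *
  field_simp
  rw [← hwd]
  ring

lemma cauchy_inv' (p b c : ℝ) (hp : 0 < p) (hp1 : p < 1) (hbc : b ≠ 0 ∨ c ≠ 0)
    (h : ℝ → ENNReal) (hh : Measurable h) :
    ∫⁻ t, ENNReal.ofReal (1 / (1 + t ^ 2)) * h (p * t + (1 - p) * ((b * t - c) / (b + c * t))) =
    ∫⁻ t, ENNReal.ofReal (1 / (1 + t ^ 2)) * h t := by
  by_cases hc : c = 0
  · have hb : b ≠ 0 := by tauto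
    apply lintegral_congr
    intro t
    congr 2
    rw [hc, zero_mul, add_zero, sub_zero, mul_div_cancel_left₀ t hb]
    ring
  · rw [← cauchy_inv p (b / c) hp hp1 h hh]
    apply lintegral_congr
    intro t
    congr 4
    rw [← mul_div_mul_left (b / c * t - 1) (b / c + t) hc]
    congr 1 <;> field_simp

lemma chol (S : Matrix (Fin 2) (Fin 2) ℝ) (hS : S.PosSemidef) (hSdiag : ∀ i, 0 < S i i) :
    ∃ a b c : ℝ, a ≠ 0 ∧ (b ≠ 0 ∨ c ≠ 0) ∧ S = !![a ^ 2, a * b; a * b, b ^ 2 + c ^ 2] := by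
  have h0 := hSdiag 0
  have h1 := hSdiag 1
  have hdet := hS.det_nonneg
  have hsym : S 1 0 = S 0 1 := by
    have := hS.isHermitian.apply 0 1
    simpa using this
  rw [Matrix.det_fin_two, hsym] at hdet
  have ha : 0 < √(S 0 0) := Real.sqrt_pos.2 h0
  have ha2 := Real.sq_sqrt h0.le
  have hc : 0 ≤ S 1 1 - (S 0 1 / √(S 0 0)) ^ 2 := by
    rw [div_pow, ha2, sub_nonneg, div_le_iff₀ h0]
    nlinarith
  have hc2 := Real.sq_sqrt hc
  have key : S 1 1 = (S 0 1 / √(S 0 0)) ^ 2 + √(S 1 1 - (S 0 1 / √(S 0 0)) ^ 2) ^ 2 := by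
    rw [hc2]; ring
  refine ⟨√(S 0 0), S 0 1 / √(S 0 0), √(S 1 1 - (S 0 1 / √(S 0 0)) ^ 2), ha.ne', ?_, ?_⟩
  · by_contra hcon
    push Not at hcon
    rw [hcon.1, zero_pow two_ne_zero, sub_zero] at key
    have := hcon.2
    rw [hcon.1, zero_pow two_ne_zero, sub_zero] at this
    rw [this] at key
    norm_num at key
    linarith
  · rw [← key, ha2, mul_div_cancel₀ _ ha.ne']
    ext i j
    fin_cases i <;> fin_cases j <;> simp [hsym]

lemma std_two (F : (Fin 2 → ℝ) → ENNReal) (hF : Measurable F) :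
    ∫⁻ z, F z ∂(_root_.stdGaussian (Fin 2)) =
      ∫⁻ x, ∫⁻ y, F ![x, y] ∂(gaussianReal 0 1) ∂(gaussianReal 0 1) := by
  have mp := measurePreserving_piFinTwo (α := fun _ : Fin 2 => ℝ) (fun _ => gaussianReal 0 1)
  have m2 : Measurable fun q : ℝ × ℝ => F ![q.1, q.2] := by
    apply hF.comp
    rw [measurable_pi_iff]
    intro i
    fin_cases i <;> simp <;> fun_prop
  rw [← lintegral_prod (fun q : ℝ × ℝ => F ![q.1, q.2]) m2.aemeasurable, ← mp.lintegral_comp m2]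
  unfold _root_.stdGaussian
  apply lintegral_congr
  intro z
  congr 1
  ext i
  fin_cases i <;> rfl

/-- Let `f(x) = x₁^{α₁} x₂^{α₂}` with real exponents `α₁, α₂ > 0` and let `Σ`
be a positive semidefinite `2×2` matrix with positive diagonal entries.  Then
`W_{f,Σ} ~ (α₁+α₂)⁻² χ²₁`.  Here `W_{f,Σ} = f(X)²/(∇f(X)ᵀ Σ ∇f(X))` is expressed through
the identity `∇f(x) = f(x)·(α₁/x₁, α₂/x₂)`, under which the factor `f(X)²` cancels and
`W_{f,Σ} = ((α₁/X₁, α₂/X₂) Σ (α₁/X₁, α₂/X₂)ᵀ)⁻¹` almost surely. -/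
theorem bivariate_monomial_waldRV
    (S : Matrix (Fin 2) (Fin 2) ℝ) (hS : S.PosSemidef) (hSdiag : ∀ i, 0 < S i i)
    (α : Fin 2 → ℝ) (hα : ∀ i, 0 < α i)
    (μ : Measure (Fin 2 → ℝ)) (hμ : IsCenteredGaussian μ S) :
    μ.map (fun x => ((fun i => α i / x i) ⬝ᵥ S.mulVec (fun i => α i / x i))⁻¹) =
      (gaussianReal 0 1).map (fun z => z ^ 2 / (α 0 + α 1) ^ 2) := by
  obtain ⟨a, b, c, ha, hbc, rfl⟩ := chol S hS hSdiag
  obtain ⟨A, hA, rfl⟩ := hμ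
  have hB : A * Aᵀ = !![a, 0; b, c] * !![a, 0; b, c]ᵀ := by
    rw [hA]
    ext i j
    fin_cases i <;> fin_cases j <;> simp [Matrix.mul_apply, Fin.sum_univ_two] <;> ring
  rw [gauss_unique A _ hB]
  have h0 := hα 0
  have h1 := hα 1
  generalize hu : α 0 = u at *
  generalize hv : α 1 = v at *
  have mB : Measurable (!![a, 0; b, c] : Matrix (Fin 2) (Fin 2) ℝ).mulVec :=
    (Continuous.matrix_mulVec continuous_const continuous_id).measurable
  have mW : Measurable (fun x : Fin 2 → ℝ => ((fun i => α i / x i) ⬝ᵥ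
      (!![a ^ 2, a * b; a * b, b ^ 2 + c ^ 2] : Matrix (Fin 2) (Fin 2) ℝ).mulVec (fun i => α i / x i))⁻¹) := by
    simp only [dotProduct, Matrix.mulVec, Fin.sum_univ_two]
    fun_prop
  have hp : 0 < u / (u + v) := by positivity
  have hp1 : u / (u + v) < 1 := by rw [div_lt_one (by positivity)]; linarith
  have hna : ∀ r : ℝ, ∀ᵐ y ∂(gaussianReal 0 1), y ≠ r := by
    have : NullSingletonClass (gaussianReal 0 1) := nullSingletonClass_gaussianReal one_ne_zero
    intro r
    exact Measure.ae_ne _ r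
  let Φ : ℝ → ℝ := fun t => u / (u + v) * t + (1 - u / (u + v)) * ((b * t - c) / (b + c * t))
  have mΦ : Measurable Φ := by fun_prop
  apply Measure.ext_of_lintegral
  intro h hh
  rw [lintegral_map hh mW, lintegral_map hh (by fun_prop)]
  refine (lintegral_map (hh.comp mW) mB).trans ?_
  refine (std_two _ ((hh.comp mW).comp mB)).trans ?_
  have L : ∀ᵐ x ∂(gaussianReal 0 1), ∫⁻ y, (fun z => (h ∘ fun x : Fin 2 → ℝ => ((fun i => α i / x i) ⬝ᵥ
      (!![a ^ 2, a * b; a * b, b ^ 2 + c ^ 2] : Matrix (Fin 2) (Fin 2) ℝ).mulVec (fun i => α i / x i))⁻¹)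
      ((!![a, 0; b, c] : Matrix (Fin 2) (Fin 2) ℝ).mulVec z)) ![x, y] ∂(gaussianReal 0 1) =
      ∫⁻ y, h ((x ^ 2 + y ^ 2) / ((u + v) ^ 2 * (1 + (Φ (y / x)) ^ 2))) ∂(gaussianReal 0 1) := by
    filter_upwards [hna 0] with x hx
    apply lintegral_congr_ae
    filter_upwards [hna (-(b * x) / c)] with y hy
    have hw : b * x + c * y ≠ 0 := by
      intro hw
      by_cases hc : c = 0
      · have hb : b ≠ 0 := by tauto
        rw [hc] at hw
        simp [hb, hx] at hw
      · apply hy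
        field_simp
        linarith
    simp only [Φ]
    rw [← wald_alg a b c x y u v ha hx hw h0 h1]
    simp [Matrix.mulVec, dotProduct, Fin.sum_univ_two, hu, hv]
    rw [mul_comm x a, mul_comm x b, mul_comm y c]
  have R : ∀ᵐ x ∂(gaussianReal 0 1), h (x ^ 2 / (u + v) ^ 2) =
      ∫⁻ y, h ((x ^ 2 + y ^ 2) / ((u + v) ^ 2 * (1 + (y / x) ^ 2))) ∂(gaussianReal 0 1) := by
    filter_upwards [hna 0] with x hx
    have : ∀ y : ℝ, (x ^ 2 + y ^ 2) / ((u + v) ^ 2 * (1 + (y / x) ^ 2)) = x ^ 2 / (u + v) ^ 2 := by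
      intro y
      have h2 : x ^ 2 + y ^ 2 ≠ 0 := by positivity
      rw [show 1 + (y / x) ^ 2 = (x ^ 2 + y ^ 2) / x ^ 2 by field_simp]
      field_simp
    simp [this]
  refine (lintegral_congr_ae L).trans (Eq.trans ?_ (lintegral_congr_ae R).symm)
  have m1 : Measurable (Function.uncurry fun ρ t : ℝ => h (ρ / ((u + v) ^ 2 * (1 + (Φ t) ^ 2)))) :=
    hh.comp (by fun_prop)
  have m2 : Measurable (Function.uncurry fun ρ t : ℝ => h (ρ / ((u + v) ^ 2 * (1 + t ^ 2)))) :=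
    hh.comp (by fun_prop)
  rw [ratio_polar (fun ρ t => h (ρ / ((u + v) ^ 2 * (1 + (Φ t) ^ 2)))) m1,
    ratio_polar (fun ρ t => h (ρ / ((u + v) ^ 2 * (1 + t ^ 2)))) m2]
  apply lintegral_congr
  intro r
  congr 1
  exact cauchy_inv' (u / (u + v)) b c hp hp1 hbc
    (fun s => h (r ^ 2 / ((u + v) ^ 2 * (1 + s ^ 2)))) (hh.comp (by fun_prop))
end
end

section
/- Let X = (X₁,X₂)ᵀ and Y = (Y₁,Y₂)ᵀ be independent random vectors, each distributed N₂(0,Σ), where Σ is a positive semidefinite 2×2 matrix with positive diagonal entries. If p₁, p₂ are nonnegative real numbers with p₁ + p₂ = 1, then the random variable p₁·(Y₁/X₁) + p₂·(Y₂/X₂) has the standard Cauchy distribution. -/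
open MeasureTheory ProbabilityTheory Matrix MvPolynomial Real

noncomputable section

/-- The standard Cauchy distribution, with density `1/(π(1+t²))` with respect to Lebesgue
measure. -/
def stdCauchy : Measure ℝ :=
  volume.withDensity fun t => ENNReal.ofReal (1 / (Real.pi * (1 + t ^ 2)))

/-- The Cayley type kernel. -/
def cayK (u w : ℂ) : ℂ := (1 - u * w) / (1 + u * w)

lemma cayK_re_nonneg {u w : ℂ} (hu : ‖u‖ = 1) (hw : ‖w‖ ≤ 1) : 0 ≤ (cayK u w).re := by
  unfold cayK
  have h : ‖u * w‖ ≤ 1 := by rw [norm_mul, hu, one_mul]; exact hw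
  generalize u * w = z at h
  have h2 : Complex.normSq z ≤ 1 := by
    rw [Complex.normSq_eq_norm_sq]; nlinarith [norm_nonneg z]
  rw [Complex.normSq_apply] at h2
  rw [Complex.div_re, ← add_div]
  apply div_nonneg _ (Complex.normSq_nonneg _)
  simp
  nlinarith

lemma cayK_den_ne {u w : ℂ} (hu : ‖u‖ = 1) (hw : ‖w‖ < 1) : 1 + u * w ≠ 0 := by
  intro h
  have : u * w = -1 := by linear_combination h
  have h2 : ‖u * w‖ = 1 := by rw [this]; simp
  rw [norm_mul, hu, one_mul] at h2
  linarith

/-- the bounded analytic function -/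
def cayF (t p q : ℝ) (u v w : ℂ) : ℂ := Complex.exp (-(t * (p * cayK u w + q * cayK v w)))

lemma cayF_norm_le {t p q : ℝ} (ht : 0 ≤ t) (hp : 0 ≤ p) (hq : 0 ≤ q) {u v w : ℂ}
    (hu : ‖u‖ = 1) (hv : ‖v‖ = 1) (hw : ‖w‖ ≤ 1) : ‖cayF t p q u v w‖ ≤ 1 := by
  unfold cayF
  rw [Complex.norm_exp, Real.exp_le_one_iff]
  have h1 := cayK_re_nonneg hu hw
  have h2 := cayK_re_nonneg hv hw
  simp
  positivity

lemma cayF_diffAt {t p q : ℝ} {u v w : ℂ}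
    (hu : 1 + u * w ≠ 0) (hv : 1 + v * w ≠ 0) : DifferentiableAt ℂ (cayF t p q u v) w := by
  unfold cayF cayK
  fun_prop (disch := assumption)

lemma cayF_measurable {t p q : ℝ} {u v : ℂ} : Measurable (cayF t p q u v) := by
  unfold cayF cayK
  fun_prop

lemma circle_ae_ne {u : ℂ} (hu : ‖u‖ = 1) :
    ∀ᵐ θ : ℝ, 1 + u * circleMap 0 1 θ ≠ 0 := by
  have : ({θ : ℝ | 1 + u * circleMap 0 1 θ = 0}).Countable := by
    have hu0 : u ≠ 0 := by rintro rfl; simp at hu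
    have : {θ : ℝ | 1 + u * circleMap 0 1 θ = 0} ⊆ Set.preimage (circleMap 0 1) {-u⁻¹} := by
      intro θ h
      simp only [Set.mem_ofPred_eq, Set.mem_preimage, Set.mem_singleton_iff] at *
      field_simp
      linear_combination h
    exact ((Set.countable_singleton _).preimage_circleMap 0 one_ne_zero).mono this
  filter_upwards [this.ae_notMem volume] with θ h
  exact h

lemma cayF_avg {t p q : ℝ} (ht : 0 ≤ t) (hp : 0 ≤ p) (hq : 0 ≤ q) (hpq : p + q = 1) {u v : ℂ}
    (hu : ‖u‖ = 1) (hv : ‖v‖ = 1) :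
    circleAverage (cayF t p q u v) 0 1 = Complex.exp (-t) := by
  have hval : cayF t p q u v 0 = Complex.exp (-t) := by
    have : (p : ℂ) + q = 1 := by exact_mod_cast hpq
    simp [cayF, cayK, this]
  have hr : ∀ n : ℕ, (0 : ℝ) ≤ 1 - 1 / ((n : ℝ) + 1) ∧ 1 - 1 / ((n : ℝ) + 1) < 1 := by
    intro n
    have : (0 : ℝ) < 1 / ((n : ℝ) + 1) := by positivity
    have h2 : 1 / ((n : ℝ) + 1) ≤ 1 := by
      rw [div_le_one (by positivity)]; linarith [Nat.cast_nonneg (α := ℝ) n]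
    constructor <;> linarith
  have h1 : ∀ n : ℕ, circleAverage (cayF t p q u v) 0 (1 - 1 / ((n : ℝ) + 1))
      = Complex.exp (-t) := by
    intro n
    rw [← hval]
    have hd : ∀ z ∈ Metric.closedBall (0 : ℂ) |1 - 1 / ((n : ℝ) + 1)|,
        DifferentiableAt ℂ (cayF t p q u v) z := by
      intro z hz
      rw [abs_of_nonneg (hr n).1, mem_closedBall_zero_iff] at hz
      have : ‖z‖ < 1 := hz.trans_lt (hr n).2
      exact cayF_diffAt (cayK_den_ne hu this) (cayK_den_ne hv this)
    exact circleAverage_of_differentiable_on_off_countable Set.countable_empty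
      (fun z hz => (hd z hz).continuousAt.continuousWithinAt)
      (fun z hz => hd z (Metric.ball_subset_closedBall hz.1))
  have h2 : Filter.Tendsto
      (fun n : ℕ => circleAverage (cayF t p q u v) 0 (1 - 1 / ((n : ℝ) + 1)))
      Filter.atTop (nhds (circleAverage (cayF t p q u v) 0 1)) := by
    unfold circleAverage
    apply Filter.Tendsto.const_smul
    apply intervalIntegral.tendsto_integral_filter_of_dominated_convergence (fun _ => (1 : ℝ))
    · refine Filter.Eventually.of_forall fun n => ?_
      exact (cayF_measurable.comp (by fun_prop)).aestronglyMeasurable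
    · refine Filter.Eventually.of_forall fun n => Filter.Eventually.of_forall fun θ _ => ?_
      apply cayF_norm_le ht hp hq hu hv
      rw [norm_circleMap_zero, abs_of_nonneg (hr n).1]
      exact (hr n).2.le
    · simp
    · filter_upwards [circle_ae_ne hu, circle_ae_ne hv] with θ h1 h2 _
      have := (cayF_diffAt (t := t) (p := p) (q := q) h1 h2).continuousAt.tendsto
      refine this.comp ?_
      have hc : Continuous fun r : ℝ => circleMap 0 r θ := by
        unfold circleMap; fun_prop
      refine (hc.tendsto 1).comp ?_
      simpa using (tendsto_one_div_add_atTop_nhds_zero_nat (𝕜 := ℝ)).const_sub 1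
  simp_rw [h1] at h2
  exact tendsto_nhds_unique h2 tendsto_const_nhds |>.symm ▸ rfl

lemma cay_rot (x y θ : ℝ) (h : x ≠ 0) :
    ((((x : ℂ) + y * Complex.I) / (x - y * Complex.I))) ≠ 0 ∧
    ‖(((x : ℂ) + y * Complex.I) / (x - y * Complex.I))‖ = 1 ∧
    (((-Real.sin (-(θ / 2)) * x + Real.cos (-(θ / 2)) * y) /
      (Real.cos (-(θ / 2)) * x + Real.sin (-(θ / 2)) * y) : ℝ) : ℂ) * Complex.I =
      - cayK (((x : ℂ) + y * Complex.I) / (x - y * Complex.I)) (circleMap 0 1 θ) := by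
  have hne1 : ((x : ℂ) + y * Complex.I) ≠ 0 := by
    intro h0; apply h; simpa using congrArg Complex.re h0
  have hne2 : ((x : ℂ) - y * Complex.I) ≠ 0 := by
    intro h0; apply h; simpa using congrArg Complex.re h0
  refine ⟨div_ne_zero hne1 hne2, ?_, ?_⟩
  · have : (x : ℂ) - y * Complex.I = (starRingEnd ℂ) ((x : ℂ) + y * Complex.I) := by
      simp [sub_eq_add_neg]
    rw [norm_div, this, Complex.norm_conj, div_self (norm_ne_zero_iff.2 hne1)]
  · have he : circleMap 0 1 θ =
        ((Real.cos (θ / 2) : ℂ) + Real.sin (θ / 2) * Complex.I) ^ 2 := by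
      rw [Complex.ofReal_cos, Complex.ofReal_sin, ← Complex.exp_mul_I, ← Complex.exp_nat_mul]
      simp only [circleMap, zero_add, Complex.ofReal_one, one_mul]
      congr 1; push_cast; ring
    have hcs : (Real.cos (θ / 2) : ℂ) ^ 2 + (Real.sin (θ / 2) : ℂ) ^ 2 = 1 := by
      exact_mod_cast Real.cos_sq_add_sin_sq (θ / 2)
    rw [he, Real.sin_neg, Real.cos_neg]
    generalize (Real.cos (θ / 2)) = c at *
    generalize (Real.sin (θ / 2)) = s at *
    push_cast
    unfold cayK
    have hI := Complex.I_sq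
    have hEB : ((c : ℂ) - s * Complex.I) * (c + s * Complex.I) = 1 := by
      linear_combination hcs - (s : ℂ) ^ 2 * hI
    have hu : ((x : ℂ) + y * Complex.I) / (x - y * Complex.I) * (x - y * Complex.I)
        = x + y * Complex.I := div_mul_cancel₀ _ hne2
    have hb : ((c : ℂ) - s * Complex.I) ≠ 0 := by
      intro h0
      rw [h0, zero_mul] at hEB
      exact zero_ne_one hEB
    have e1 : (1 : ℂ) - (x + y * Complex.I) / (x - y * Complex.I) * (c + s * Complex.I) ^ 2
        = (-2 * Complex.I * (s * x + c * y)) /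
          ((c - s * Complex.I) * (x - y * Complex.I)) := by
      rw [eq_div_iff (mul_ne_zero hb hne2)]
      linear_combination -((c + s * Complex.I) ^ 2 * (c - s * Complex.I)) * hu
        - (x + y * Complex.I) * (c + s * Complex.I) * hEB
    have e2 : (1 : ℂ) + (x + y * Complex.I) / (x - y * Complex.I) * (c + s * Complex.I) ^ 2
        = (2 * (c * x - s * y)) /
          ((c - s * Complex.I) * (x - y * Complex.I)) := by
      rw [eq_div_iff (mul_ne_zero hb hne2)]
      linear_combination ((c + s * Complex.I) ^ 2 * (c - s * Complex.I)) * hu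
        + (x + y * Complex.I) * (c + s * Complex.I) * hEB + 2 * s * y * hI
    rw [e1, e2, div_div_div_cancel_right₀ (mul_ne_zero hb hne2)]
    rw [show -2 * Complex.I * (s * x + c * y) = 2 * (-(Complex.I * (s * x + c * y))) by ring,
      mul_div_mul_left _ _ two_ne_zero]
    simp only [neg_neg, neg_mul]
    rw [← sub_eq_add_neg]
    ring

lemma stdCauchy_eq : stdCauchy = cauchyMeasure 0 1 := by
  rw [cauchyMeasure_of_scale_ne_zero 0 one_ne_zero, stdCauchy]
  congr 1
  ext t
  simp only [cauchyPDF, cauchyPDFReal]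
  congr 1
  simp
  rw [add_comm, mul_comm]

lemma charFun_stdCauchy {t : ℝ} (ht : 0 ≤ t) : charFun stdCauchy t = Complex.exp (-t) := by
  have hA := cayF_avg ht zero_le_one le_rfl (add_zero (1 : ℝ)) (u := 1) (v := 1)
    (by simp) (by simp)
  rw [circleAverage_eq_integral_add (-π)] at hA
  rw [← hA, charFun_apply_real, stdCauchy, integral_withDensity_eq_integral_toReal_smul
    (by fun_prop) (by simp), ← setIntegral_univ, ← Real.image_tan_Ioo,
    integral_image_eq_integral_abs_deriv_smul measurableSet_Ioo
      (fun x hx => (Real.hasDerivAt_tan_of_mem_Ioo hx).hasDerivWithinAt) Real.injOn_tan,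
    ← integral_Ioc_eq_integral_Ioo,
    ← intervalIntegral.integral_of_le (by linarith [Real.pi_pos])]
  have e : ∀ θ : ℝ, cayF t 1 0 1 1 (circleMap 0 1 (θ + -π)) =
      Complex.exp (t * Real.tan (θ / 2 - π / 2) * Complex.I) := by
    intro θ
    obtain ⟨-, -, h⟩ := cay_rot 1 0 (θ + -π) one_ne_zero
    have h1 : (θ + -π) / 2 = θ / 2 - π / 2 := by ring
    rw [h1] at h
    simp only [Complex.ofReal_one, Complex.ofReal_zero, zero_mul, add_zero, sub_zero, div_one,
      mul_one, mul_zero, Real.sin_neg, neg_neg, Real.cos_neg, ← Real.tan_eq_sin_div_cos] at h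
    rw [cayF, mul_assoc, h]
    simp
  simp_rw [e]
  rw [intervalIntegral.integral_comp_div_sub
    (fun x => Complex.exp (t * Real.tan x * Complex.I)) two_ne_zero]
  rw [smul_smul, ← intervalIntegral.integral_smul]
  rw [show 0 / 2 - π / 2 = -(π / 2) by ring, show 2 * π / 2 - π / 2 = π / 2 by ring]
  apply intervalIntegral.integral_congr_ae
  have : ∀ᵐ x : ℝ, x ≠ π / 2 := by simp [ae_iff]
  filter_upwards [this] with x hx hx2
  rw [Set.uIoc_of_le (by linarith [Real.pi_pos])] at hx2
  have hc : 0 < Real.cos x := Real.cos_pos_of_mem_Ioo ⟨hx2.1, lt_of_le_of_ne hx2.2 hx⟩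
  rw [smul_smul]
  congr 1
  rw [ENNReal.toReal_ofReal (by positivity), abs_of_pos (by positivity), Real.tan_eq_sin_div_cos]
  have := Real.pi_pos
  have h3 : 1 + (Real.sin x / Real.cos x) ^ 2 = 1 / Real.cos x ^ 2 := by
    field_simp; linarith [Real.sin_sq_add_cos_sq x]
  rw [h3]
  field_simp

instance : IsGaussian (_root_.stdGaussian (Fin 2)) := by
  have h := map_pi_eq_stdGaussian (ι := Fin 2)
  have h2 : _root_.stdGaussian (Fin 2) =
      (ProbabilityTheory.stdGaussian (EuclideanSpace ℝ (Fin 2))).map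
        (PiLp.continuousLinearEquiv 2 ℝ (fun _ : Fin 2 => ℝ)) := by
    rw [← h, Measure.map_map (by fun_prop) (by fun_prop)]
    symm
    convert! Measure.map_id
  rw [h2]
  infer_instance

instance : IsProbabilityMeasure (_root_.stdGaussian (Fin 2)) := by
  unfold _root_.stdGaussian; infer_instance

lemma stdG_map_coord (i : Fin 2) :
    (_root_.stdGaussian (Fin 2)).map (fun z => z i) = gaussianReal 0 1 := by
  exact (measurePreserving_eval (fun _ : Fin 2 => gaussianReal 0 1) i).map_eq

lemma stdG_map_lin (a b : ℝ) :
    (_root_.stdGaussian (Fin 2)).map (fun z => a * z 0 + b * z 1) =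
      gaussianReal 0 (NNReal.mk (a ^ 2) (sq_nonneg a) + NNReal.mk (b ^ 2) (sq_nonneg b)) := by
  have hi : iIndepFun (fun (i : Fin 2) (z : Fin 2 → ℝ) => z i) (_root_.stdGaussian (Fin 2)) :=
    iIndepFun_pi (μ := fun _ : Fin 2 => gaussianReal 0 1) (X := fun _ => id)
      (fun _ => aemeasurable_id)
  have h01 := hi.indepFun (show (0 : Fin 2) ≠ 1 by decide)
  have h := gaussianReal_add_gaussianReal_of_indepFun
    (h01.comp (measurable_const_mul a) (measurable_const_mul b)) (m₁ := 0) (m₂ := 0)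
    (v₁ := NNReal.mk (a ^ 2) (sq_nonneg a)) (v₂ := NNReal.mk (b ^ 2) (sq_nonneg b)) ?_ ?_
  · rw [add_zero] at h
    exact h
  · rw [← Measure.map_map (by fun_prop) (by fun_prop), stdG_map_coord, gaussianReal_map_const_mul]
    simp
  · rw [← Measure.map_map (by fun_prop) (by fun_prop), stdG_map_coord, gaussianReal_map_const_mul]
    simp

lemma mu_facts {μ : Measure (Fin 2 → ℝ)} {S : Matrix (Fin 2) (Fin 2) ℝ}
    (hSdiag : ∀ i, 0 < S i i) (hμ : IsCenteredGaussian μ S) :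
    IsGaussian μ ∧ (∀ L : StrongDual ℝ (Fin 2 → ℝ), μ[L] = 0) ∧ ∀ i, ∀ᵐ x ∂μ, x i ≠ 0 := by
  obtain ⟨A, hA, rfl⟩ := hμ
  have hm : Measurable A.mulVec := (Matrix.mulVecLin A).continuous_of_finiteDimensional.measurable
  refine ⟨?_, ?_, ?_⟩
  · exact isGaussian_map (μ := _root_.stdGaussian (Fin 2))
      (Matrix.mulVecLin A).toContinuousLinearMap
  · intro L
    rw [integral_map hm.aemeasurable (by fun_prop)]
    have hl : ∀ z, L (A.mulVec z) =
      L (A.mulVec (Pi.single 0 1)) * z 0 + L (A.mulVec (Pi.single 1 1)) * z 1 := by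
      intro z
      have : z = z 0 • (Pi.single 0 1 : Fin 2 → ℝ) + z 1 • (Pi.single 1 1 : Fin 2 → ℝ) := by
        ext i; fin_cases i <;> simp
      conv_lhs => rw [this]
      rw [Matrix.mulVec_add, Matrix.mulVec_smul, Matrix.mulVec_smul, map_add, map_smul, map_smul]
      simp [mul_comm]
    rw [integral_congr_ae (Filter.Eventually.of_forall hl)]
    generalize L (A.mulVec (Pi.single 0 1)) = a
    generalize L (A.mulVec (Pi.single 1 1)) = b
    have := integral_map (μ := _root_.stdGaussian (Fin 2))
      (φ := fun z => a * z 0 + b * z 1) (f := fun x => x) (by fun_prop) (by fun_prop)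
    rw [← this, stdG_map_lin, integral_id_gaussianReal]
  · intro i
    rw [ae_map_iff hm.aemeasurable (by measurability)]
    have h := stdG_map_lin (A i 0) (A i 1)
    have hv : A i 0 ^ 2 + A i 1 ^ 2 = S i i := by
      rw [← hA]; simp [Matrix.mul_apply, Fin.sum_univ_two, sq]
    have hne : (NNReal.mk (A i 0 ^ 2) (sq_nonneg _) + NNReal.mk (A i 1 ^ 2) (sq_nonneg _)) ≠ 0 := by
      intro h0
      have := congrArg NNReal.toReal h0
      rw [NNReal.coe_add] at this
      have h3 := hSdiag i
      simp only [NNReal.coe_mk, NNReal.coe_zero] at this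
      linarith
    have := nullSingletonClass_gaussianReal (μ := 0) hne
    have h2 : ∀ᵐ x ∂(gaussianReal 0
        (NNReal.mk (A i 0 ^ 2) (sq_nonneg _) + NNReal.mk (A i 1 ^ 2) (sq_nonneg _))), x ≠ 0 := by
      simp [ae_iff]
    rw [← h, ae_map_iff (by fun_prop) (by measurability)] at h2
    filter_upwards [h2] with z hz
    simpa [Matrix.mulVec, dotProduct, Fin.sum_univ_two] using hz

lemma main_integral {μ : Measure (Fin 2 → ℝ)} [IsGaussian μ]
    (h0 : ∀ L : StrongDual ℝ (Fin 2 → ℝ), μ[L] = 0) (hne : ∀ i, ∀ᵐ x ∂μ, x i ≠ 0)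
    {t p q : ℝ} (ht : 0 ≤ t) (hp : 0 ≤ p) (hq : 0 ≤ q) (hpq : p + q = 1) :
    ∫ z : (Fin 2 → ℝ) × (Fin 2 → ℝ), Complex.exp
      (t * ((p * (z.2 0 / z.1 0) + q * (z.2 1 / z.1 1) : ℝ) : ℂ) * Complex.I) ∂(μ.prod μ)
      = Complex.exp (-t) := by
  set H : (Fin 2 → ℝ) × (Fin 2 → ℝ) → ℂ := fun z => Complex.exp
      (t * ((p * (z.2 0 / z.1 0) + q * (z.2 1 / z.1 1) : ℝ) : ℂ) * Complex.I) with hH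
  have hHm : Measurable H := by rw [hH]; fun_prop
  have hHn : ∀ z, ‖H z‖ = 1 := by
    intro z
    rw [hH]; dsimp only
    rw [← Complex.ofReal_mul, Complex.norm_exp_ofReal_mul_I]
  let R : ℝ → ((Fin 2 → ℝ) × (Fin 2 → ℝ)) → ((Fin 2 → ℝ) × (Fin 2 → ℝ)) :=
    fun θ => ContinuousLinearMap.rotation (-(θ / 2))
  have hRm : Measurable (Function.uncurry R) := by
    have : Function.uncurry R = fun w => (Real.cos (-(w.1 / 2)) • w.2.1 +
      Real.sin (-(w.1 / 2)) • w.2.2, -Real.sin (-(w.1 / 2)) • w.2.1 +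
      Real.cos (-(w.1 / 2)) • w.2.2) := by
      ext1 w; rfl
    rw [this]
    fun_prop
  have hrot : ∀ θ, ∫ z, H (R θ z) ∂(μ.prod μ) = ∫ z, H z ∂(μ.prod μ) := by
    intro θ
    conv_rhs => rw [← IsGaussian.map_rotation_eq_self_of_forall_strongDual_eq_zero h0 (-(θ / 2))]
    rw [integral_map (by fun_prop) hHm.aestronglyMeasurable]
  have hswap : ∫ θ in (0 : ℝ)..2 * π, ∫ z, H (R θ z) ∂(μ.prod μ) =
      ∫ z, (∫ θ in (0 : ℝ)..2 * π, H (R θ z)) ∂(μ.prod μ) := by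
    rw [intervalIntegral.integral_of_le (by positivity)]
    rw [integral_integral_swap]
    · simp_rw [intervalIntegral.integral_of_le (show (0 : ℝ) ≤ 2 * π by positivity)]
    · refine Integrable.of_bound (hHm.comp hRm).aestronglyMeasurable 1 ?_
      exact Filter.Eventually.of_forall fun w => (hHn _).le
  have hn1 : ∀ i, ∀ᵐ z ∂(μ.prod μ), z.1 i ≠ 0 := fun i =>
    Measure.quasiMeasurePreserving_fst.ae (hne i)
  have hin : ∀ᵐ z ∂(μ.prod μ),
      (∫ θ in (0 : ℝ)..2 * π, H (R θ z)) = (2 * π : ℝ) • Complex.exp (-t) := by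
    filter_upwards [hn1 0, hn1 1] with z hz0 hz1
    have hu := (cay_rot (z.1 0) (z.2 0) 0 hz0).2.1
    have hv := (cay_rot (z.1 1) (z.2 1) 0 hz1).2.1
    rw [← cayF_avg ht hp hq hpq hu hv, circleAverage, smul_smul, mul_inv_cancel₀ (by positivity),
      one_smul]
    congr 1
    ext θ
    have e0 := (cay_rot (z.1 0) (z.2 0) θ hz0).2.2
    have e1 := (cay_rot (z.1 1) (z.2 1) θ hz1).2.2
    simp only [hH, R, cayF, ContinuousLinearMap.rotation_apply, Pi.add_apply, Pi.smul_apply,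
      smul_eq_mul]
    congr 1
    rw [Complex.ofReal_add, Complex.ofReal_mul p, Complex.ofReal_mul q]
    linear_combination (t : ℂ) * p * e0 + (t : ℂ) * q * e1
  rw [integral_congr_ae hin] at hswap
  simp_rw [hrot] at hswap
  simp only [intervalIntegral.integral_const, sub_zero, integral_const, probReal_univ,
    one_smul] at hswap
  exact smul_right_injective ℂ (show (2 * π : ℝ) ≠ 0 by positivity) hswap

/-- Let `X = (X₁,X₂)ᵀ` and `Y = (Y₁,Y₂)ᵀ` be independent, each distributed
`N₂(0,Σ)` with `Σ` positive semidefinite with positive diagonal entries.  If `p₁, p₂ ≥ 0`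
and `p₁ + p₂ = 1`, then `p₁·(Y₁/X₁) + p₂·(Y₂/X₂)` has the standard Cauchy distribution. -/
theorem weighted_ratio_cauchy
    (S : Matrix (Fin 2) (Fin 2) ℝ) (hS : S.PosSemidef) (hSdiag : ∀ i, 0 < S i i)
    (μ : Measure (Fin 2 → ℝ)) (hμ : IsCenteredGaussian μ S)
    {Ω : Type*} [MeasurableSpace Ω] (P : Measure Ω) [IsProbabilityMeasure P]
    (Xv Yv : Ω → (Fin 2 → ℝ)) (hXmeas : Measurable Xv) (hYmeas : Measurable Yv)
    (hindep : IndepFun Xv Yv P) (hX : P.map Xv = μ) (hY : P.map Yv = μ)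
    (p : Fin 2 → ℝ) (hp : ∀ i, 0 ≤ p i) (hpsum : p 0 + p 1 = 1) :
    P.map (fun ω => p 0 * (Yv ω 0 / Xv ω 0) + p 1 * (Yv ω 1 / Xv ω 1)) = stdCauchy := by
  obtain ⟨hG, h0, hne⟩ := mu_facts hSdiag hμ
  have hprod : P.map (fun ω => (Xv ω, Yv ω)) = μ.prod μ := by
    have := (indepFun_iff_map_prod_eq_prod_map_map hXmeas.aemeasurable hYmeas.aemeasurable).1 hindep
    rw [this, hX, hY]
  have hm : Measurable (fun ω => p 0 * (Yv ω 0 / Xv ω 0) + p 1 * (Yv ω 1 / Xv ω 1)) := by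
    fun_prop
  have hfin : IsProbabilityMeasure stdCauchy := by rw [stdCauchy_eq]; infer_instance
  have hprob := Measure.isProbabilityMeasure_map (μ := P) hm.aemeasurable
  have hpos : ∀ t : ℝ, 0 ≤ t →
      charFun (P.map (fun ω => p 0 * (Yv ω 0 / Xv ω 0) + p 1 * (Yv ω 1 / Xv ω 1))) t
        = charFun stdCauchy t := by
    intro t ht
    rw [charFun_stdCauchy ht, ← main_integral h0 hne ht (hp 0) (hp 1) hpsum, ← hprod,
      charFun_apply_real, integral_map hm.aemeasurable (by fun_prop),
      integral_map (by fun_prop) (Measurable.aestronglyMeasurable (by fun_prop))]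
  apply Measure.ext_of_charFun
  ext t
  rcases le_total 0 t with ht | ht
  · exact hpos t ht
  · have := hpos (-t) (by linarith)
    rw [charFun_neg, charFun_neg] at this
    exact (starRingEnd ℂ).injective this
end
end

section
/- Let Σ be a positive definite 2×2 matrix and f(x₁,x₂) = ax₁² + 2bx₁x₂ + cx₂² a nonzero quadratic form with matrix A = [[a,b],[b,c]] ≠ 0. If the discriminant satisfies b² − ac ≥ 0, then W_{f,Σ} is distributed as (1/4)·χ²₁. -/
open MeasureTheory ProbabilityTheory Matrix MvPolynomial Real

noncomputable section

/-- A continuous unimodular function on the circle with vanishing positive Fourier-type moments. -/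
def GoodK (K : ℝ → ℂ) : Prop :=
  Continuous K ∧ (∀ t, ‖K t‖ = 1) ∧ ∀ m : ℕ, 1 ≤ m → ∫ t in (-π)..π, K t ^ m = 0

lemma goodK_of_analytic (N : ℂ → ℂ) (hd : ∀ z ∈ Metric.closedBall (0 : ℂ) 1, DifferentiableAt ℂ N z)
    (h0 : N 0 = 0) (h1 : ∀ t : ℝ, ‖N (circleMap 0 1 t)‖ = 1) :
    GoodK (fun t => N (circleMap 0 1 t)) := by
  refine ⟨?_, h1, fun m hm => ?_⟩
  · rw [continuous_iff_continuousAt]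
    intro t
    have hz : circleMap 0 1 t ∈ Metric.closedBall (0 : ℂ) 1 := by simp
    exact ContinuousAt.comp (f := circleMap 0 1) (g := N) (hd _ hz).continuousAt
      (continuous_circleMap 0 1).continuousAt
  · have hD : DiffContOnCl ℂ (fun z => N z ^ m) (Metric.ball 0 |(1 : ℝ)|) := by
      apply DifferentiableOn.diffContOnCl
      intro z hz
      rw [abs_one, closure_ball _ one_ne_zero] at hz
      exact ((hd z hz).pow m).differentiableWithinAt
    have h := hD.circleAverage
    rw [circleAverage_def] at h
    simp only [h0, zero_pow (by omega : m ≠ 0)] at h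
    have hpi : (2 * π)⁻¹ ≠ 0 := by positivity
    have h2 := (smul_eq_zero.1 h).resolve_left hpi
    have hper : Function.Periodic (fun t : ℝ => N (circleMap 0 1 t) ^ m) (2 * π) :=
      fun x => by simp [periodic_circleMap 0 1 x]
    have h3 := hper.intervalIntegral_add_eq (-π) 0
    rw [zero_add, h2, show -π + 2 * π = π by ring] at h3
    exact h3

lemma goodK_mixed {K : ℝ → ℂ} (hK : GoodK K) (j k : ℕ) :
    ∫ t in (-π)..π, K t ^ j * (starRingEnd ℂ) (K t) ^ k = if j = k then (2 * π : ℂ) else 0 := by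
  obtain ⟨hc, h1, hm⟩ := hK
  have hKK : ∀ t, K t * (starRingEnd ℂ) (K t) = 1 := fun t => by
    rw [Complex.mul_conj, Complex.normSq_eq_norm_sq, h1]; simp
  rcases lt_trichotomy j k with h | h | h
  · rw [if_neg h.ne]
    obtain ⟨d, rfl⟩ := Nat.exists_eq_add_of_lt h
    have : ∀ t, K t ^ j * (starRingEnd ℂ) (K t) ^ (j + d + 1) = (starRingEnd ℂ) (K t ^ (d + 1)) := by
      intro t
      rw [add_assoc, pow_add, ← mul_assoc, ← mul_pow, hKK, map_pow]; simp
    simp_rw [this]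
    have h2 := hm (d + 1) (by omega)
    rw [intervalIntegral.intervalIntegral_conj, h2, map_zero]
  · subst h
    simp_rw [← mul_pow, hKK]
    simp; ring
  · rw [if_neg h.ne']
    obtain ⟨d, rfl⟩ := Nat.exists_eq_add_of_lt h
    have : ∀ t, K t ^ (k + d + 1) * (starRingEnd ℂ) (K t) ^ k = K t ^ (d + 1) := by
      intro t
      rw [add_assoc, pow_add, mul_right_comm, ← mul_pow, hKK]; simp
    simp_rw [this]
    exact hm (d + 1) (by omega)

lemma goodK_moment {K : ℝ → ℂ} (hK : GoodK K) (n : ℕ) :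
    ((∫ t in (-π)..π, (K t).re ^ n : ℝ) : ℂ) =
      ∑ m ∈ Finset.range (n + 1), (if m = n - m then (2 * π : ℂ) else 0) * ((n.choose m : ℂ) / 2 ^ n) := by
  rw [← intervalIntegral.integral_ofReal]
  have : ∀ t, (((K t).re ^ n : ℝ) : ℂ) = ∑ m ∈ Finset.range (n + 1),
      (K t ^ m * (starRingEnd ℂ) (K t) ^ (n - m)) * ((n.choose m : ℂ) / 2 ^ n) := by
    intro t
    push_cast
    rw [Complex.re_eq_add_conj, div_pow, add_pow, Finset.sum_div]
    refine Finset.sum_congr rfl fun m _ => by ring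
  simp_rw [this]
  have hc := hK.1
  rw [intervalIntegral.integral_finsetSum]
  · refine Finset.sum_congr rfl fun m _ => ?_
    rw [intervalIntegral.integral_mul_const, goodK_mixed hK]
  · intro m _
    apply Continuous.intervalIntegrable
    have := Complex.continuous_conj.comp hc
    fun_prop

lemma goodK_moment_eq {K K' : ℝ → ℂ} (hK : GoodK K) (hK' : GoodK K') (n : ℕ) :
    ∫ t in (-π)..π, (K t).re ^ n = ∫ t in (-π)..π, (K' t).re ^ n := by
  have := (goodK_moment hK n).trans (goodK_moment hK' n).symm
  exact_mod_cast this

lemma goodK_poly_eq {K K' : ℝ → ℂ} (hK : GoodK K) (hK' : GoodK K') (P : Polynomial ℝ) :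
    ∫ t in (-π)..π, P.eval (K t).re = ∫ t in (-π)..π, P.eval (K' t).re := by
  have hc := Complex.continuous_re.comp hK.1
  have hc' := Complex.continuous_re.comp hK'.1
  simp only [Function.comp_def] at hc hc'
  simp_rw [Polynomial.eval_eq_sum_range]
  rw [intervalIntegral.integral_finsetSum, intervalIntegral.integral_finsetSum]
  · refine Finset.sum_congr rfl fun m _ => ?_
    rw [intervalIntegral.integral_const_mul, intervalIntegral.integral_const_mul,
      goodK_moment_eq hK hK']
  · intro m _
    apply Continuous.intervalIntegrable
    fun_prop
  · intro m _
    apply Continuous.intervalIntegrable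
    fun_prop

lemma goodK_approx {K : ℝ → ℂ} (hK : GoodK K) (F : ℝ → ℝ) (hF : Continuous F) (P : Polynomial ℝ)
    (ε : ℝ) (hP : ∀ x ∈ Set.Icc (-1 : ℝ) 1, |P.eval x - F x| < ε) :
    |(∫ t in (-π)..π, P.eval (K t).re) - ∫ t in (-π)..π, F (K t).re| ≤ ε * (2 * π) := by
  have hc := Complex.continuous_re.comp hK.1
  simp only [Function.comp_def] at hc
  rw [← intervalIntegral.integral_sub]
  · have := intervalIntegral.norm_integral_le_of_norm_le_const (a := -π) (b := π) (C := ε)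
      (f := fun t => P.eval (K t).re - F (K t).re) (fun t _ => by
        apply (hP _ _).le
        have := Complex.abs_re_le_norm (K t)
        rw [hK.2.1] at this
        exact abs_le.1 this)
    have h2 : |π - -π| = 2 * π := by rw [abs_of_nonneg] <;> linarith [pi_pos]
    rw [h2] at this
    exact this
  · apply Continuous.intervalIntegrable
    fun_prop
  · apply Continuous.intervalIntegrable
    fun_prop

lemma goodK_cont_eq {K K' : ℝ → ℂ} (hK : GoodK K) (hK' : GoodK K') (F : ℝ → ℝ)
    (hF : Continuous F) :
    ∫ t in (-π)..π, F (K t).re = ∫ t in (-π)..π, F (K' t).re := by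
  rw [← sub_eq_zero, ← abs_nonpos_iff]
  apply le_of_forall_pos_le_add
  intro ε hε
  obtain ⟨P, hP⟩ := exists_polynomial_near_of_continuousOn (-1) 1 F hF.continuousOn
    (ε / (4 * π)) (by positivity)
  have h1 := goodK_approx hK F hF P _ hP
  have h2 := goodK_approx hK' F hF P _ hP
  rw [goodK_poly_eq hK hK'] at h1
  have h3 : ε / (4 * π) * (2 * π) = ε / 2 := by field_simp; norm_num
  rw [h3] at h1 h2
  rw [abs_le] at *
  constructor <;> linarith [h1.1, h1.2, h2.1, h2.2]

lemma goodK_map_eq {K K' : ℝ → ℂ} (hK : GoodK K) (hK' : GoodK K') :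
    (volume.restrict (Set.Ioo (-π) π)).map (fun t => (K t).re) =
      (volume.restrict (Set.Ioo (-π) π)).map (fun t => (K' t).re) := by
  have hc := Complex.continuous_re.comp hK.1
  have hc' := Complex.continuous_re.comp hK'.1
  simp only [Function.comp_def] at hc hc'
  apply ext_of_forall_integral_eq_of_IsFiniteMeasure
  intro f
  rw [integral_map hc.aemeasurable (by fun_prop), integral_map hc'.aemeasurable (by fun_prop)]
  have h := goodK_cont_eq hK hK' f f.continuous
  have hpi : -π ≤ π := by linarith [pi_pos]
  rw [intervalIntegral.integral_of_le hpi, intervalIntegral.integral_of_le hpi,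
    integral_Ioc_eq_integral_Ioo, integral_Ioc_eq_integral_Ioo] at h
  exact h

/-- normalised quadratic ratio -/
def Qr (p q s x y : ℝ) : ℝ :=
  (p * (x ^ 2 + y ^ 2) + q * (x ^ 2 - y ^ 2) + 2 * s * x * y) ^ 2 /
    (((p + q) * x + s * y) ^ 2 + (s * x + (p - q) * y) ^ 2)

lemma Qr_polar (p q s r x y : ℝ) : Qr p q s (r * x) (r * y) = r ^ 2 * Qr p q s x y := by
  unfold Qr
  by_cases hr : r = 0
  · simp [hr]
  rw [show (p * ((r*x) ^ 2 + (r*y) ^ 2) + q * ((r*x) ^ 2 - (r*y) ^ 2) + 2 * s * (r*x) * (r*y)) ^ 2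
    = r ^ 2 * (r ^ 2 * (p * (x ^ 2 + y ^ 2) + q * (x ^ 2 - y ^ 2) + 2 * s * x * y) ^ 2) by ring,
    show ((p + q) * (r*x) + s * (r*y)) ^ 2 + (s * (r*x) + (p - q) * (r*y)) ^ 2 =
      r ^ 2 * (((p + q) * x + s * y) ^ 2 + (s * x + (p - q) * y) ^ 2) by ring,
    mul_div_mul_left _ _ (pow_ne_zero 2 hr), mul_div_assoc]

lemma circleMap01 (t : ℝ) : circleMap 0 1 t = ⟨cos t, sin t⟩ := by
  rw [circleMap_zero]
  apply Complex.ext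
  · simp [Complex.exp_ofReal_mul_I_re]
  · simp [Complex.exp_ofReal_mul_I_im]

lemma exists_goodK (p q s : ℝ) (h : p ^ 2 ≤ q ^ 2 + s ^ 2) (hne : 0 < q ^ 2 + s ^ 2) :
    ∃ K, GoodK K ∧ ∀ t, Qr p q s (cos t) (sin t) = (1 + (K t).re) / 2 := by
  set β : ℂ := ⟨q, s⟩ with hβ
  have hβn : ‖β‖ ^ 2 = q ^ 2 + s ^ 2 := by
    rw [← Complex.normSq_eq_norm_sq, Complex.normSq_apply]; simp [hβ]; ring
  have hβ0 : β ≠ 0 := by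
    intro h0; rw [h0] at hβn; simp at hβn; linarith
  rcases h.eq_or_lt with h | h
  · have hp : p ≠ 0 := by rintro rfl; simp at h; linarith
    refine ⟨_, goodK_of_analytic (fun w => p / β * w ^ 2) ?_ (by simp) ?_, ?_⟩
    · intro z _; fun_prop
    · intro t
      have : ‖β‖ = |p| := by
        rw [← abs_of_nonneg (norm_nonneg β)]
        rw [← sq_eq_sq_iff_abs_eq_abs]; linarith
      simp [this, hp]
    · intro t
      have hcs := sin_sq_add_cos_sq t
      have hre : ((p : ℂ) / β * circleMap 0 1 t ^ 2).re =
          (q * (cos t ^ 2 - sin t ^ 2) + 2 * s * cos t * sin t) / p := by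
        rw [circleMap01, Complex.mul_re, Complex.div_re, Complex.div_im, Complex.normSq_eq_norm_sq, hβn, ← h]
        simp [hβ, pow_two]
        field_simp
        ring
      simp only [hre]
      unfold Qr
      have hD : ((p + q) * cos t + s * sin t) ^ 2 + (s * cos t + (p - q) * sin t) ^ 2 =
         2 * p * (p * (cos t ^ 2 + sin t ^ 2) + q * (cos t ^ 2 - sin t ^ 2) + 2 * s * cos t * sin t) := by
        linear_combination (-(cos t ^ 2) - sin t ^ 2) * h
      rw [hD]
      have h1 : cos t ^ 2 + sin t ^ 2 = 1 := by linarith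
      rw [h1, mul_one]
      set n := p + q * (cos t ^ 2 - sin t ^ 2) + 2 * s * cos t * sin t with hn
      have h2 : q * (cos t ^ 2 - sin t ^ 2) + 2 * s * cos t * sin t = n - p := by rw [hn]; ring
      rw [h2]
      by_cases hn0 : n = 0
      · rw [hn0]; field_simp; simp
      · field_simp; ring
  · have hlt : |p| < ‖β‖ := by
      rw [← abs_of_nonneg (norm_nonneg β)]
      rw [← sq_lt_sq]; linarith
    have hden : ∀ w : ℂ, ‖w‖ ≤ 1 → β + p * w ^ 2 ≠ 0 := by
      intro w hw h0
      have h1 : β = - (p * w ^ 2) := by linear_combination h0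
      have h2 : ‖β‖ = |p| * ‖w‖ ^ 2 := by rw [h1]; simp
      have h3 : ‖w‖ ^ 2 ≤ 1 := pow_le_one₀ (norm_nonneg _) hw
      nlinarith [abs_nonneg p]
    have key : ∀ t : ℝ, circleMap 0 1 t * (starRingEnd ℂ) (circleMap 0 1 t) = 1 := fun t => by
      rw [Complex.mul_conj, Complex.normSq_eq_norm_sq]; simp
    refine ⟨_, goodK_of_analytic
      (fun w => w ^ 2 * (p + (starRingEnd ℂ) β * w ^ 2) / (β + p * w ^ 2)) ?_ (by simp) ?_, ?_⟩
    · intro z hz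
      have := hden z (by simpa using hz)
      fun_prop (disch := assumption)
    · intro t
      have h0 := hden (circleMap 0 1 t) (by simp)
      have e : (p + (starRingEnd ℂ) β * circleMap 0 1 t ^ 2) =
          circleMap 0 1 t ^ 2 * (starRingEnd ℂ) (β + p * circleMap 0 1 t ^ 2) := by
        simp only [map_add, map_mul, map_pow, Complex.conj_ofReal]
        linear_combination (-p * (circleMap 0 1 t * (starRingEnd ℂ) (circleMap 0 1 t) + 1)) * key t
      rw [e]
      simp only [norm_div, norm_mul, norm_pow, RCLike.norm_conj]
      simp [norm_ne_zero_iff.2 h0]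
    · intro t
      have h0 := hden (circleMap 0 1 t) (by simp)
      have hcs := sin_sq_add_cos_sq t
      have hns : Complex.normSq (β + p * circleMap 0 1 t ^ 2) =
         ((p + q) * cos t + s * sin t) ^ 2 + (s * cos t + (p - q) * sin t) ^ 2 := by
        rw [circleMap01, Complex.normSq_apply]
        simp [hβ, pow_two]
        grind
      have hpos := Complex.normSq_pos.2 h0
      simp only [Complex.div_re]
      rw [hns] at *
      unfold Qr
      rw [← add_div, eq_div_iff two_ne_zero, div_mul_eq_mul_div, div_eq_iff hpos.ne', add_mul, div_mul_cancel₀ _ hpos.ne']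
      rw [circleMap01]
      simp [hβ, pow_two]
      have hs : sin t ^ 2 = 1 - cos t ^ 2 := by linarith
      grind

lemma measurable_Qr (p q s : ℝ) : Measurable (fun z : ℝ × ℝ => Qr p q s z.1 z.2) := by
  unfold Qr
  fun_prop

lemma lintegral_Qr (p q s : ℝ) {K : ℝ → ℂ} (hK : GoodK K)
    (hQ : ∀ t, Qr p q s (cos t) (sin t) = (1 + (K t).re) / 2)
    (F : ℝ → ENNReal) (hF : Measurable F) :
    ∫⁻ z, F (Qr p q s z.1 z.2) ∂((gaussianReal 0 1).prod (gaussianReal 0 1)) =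
      ∫⁻ r in Set.Ioi (0 : ℝ), ENNReal.ofReal r * (ENNReal.ofReal ((2 * π)⁻¹ * exp (-r ^ 2 / 2)) *
        ∫⁻ u, F (r ^ 2 * ((1 + u) / 2))
          ∂((volume.restrict (Set.Ioo (-π) π)).map (fun t => (K t).re))) := by
  have hmQ := measurable_Qr p q s
  have hc := Complex.continuous_re.comp hK.1
  simp only [Function.comp_def] at hc
  rw [gaussianReal_of_var_ne_zero 0 one_ne_zero,
    prod_withDensity (measurable_gaussianPDF 0 1) (measurable_gaussianPDF 0 1),
    lintegral_withDensity_eq_lintegral_mul _ (by fun_prop)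
      (show Measurable (fun z : ℝ × ℝ => F (Qr p q s z.1 z.2)) from hF.comp hmQ),
    ← Measure.volume_eq_prod, ← lintegral_comp_polarCoord_symm]
  have e : ∀ z : ℝ × ℝ, ENNReal.ofReal z.1 • (((fun z : ℝ × ℝ => gaussianPDF 0 1 z.1 * gaussianPDF 0 1 z.2) *
      fun z : ℝ × ℝ => F (Qr p q s z.1 z.2)) (polarCoord.symm z)) =
      ENNReal.ofReal z.1 * (ENNReal.ofReal ((2 * π)⁻¹ * exp (-z.1 ^ 2 / 2)) *
        F (z.1 ^ 2 * ((1 + (K z.2).re) / 2))) := by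
    intro z
    rw [smul_eq_mul, Pi.mul_apply, polarCoord_symm_apply]
    simp only [Qr_polar, hQ]
    congr 2
    rw [gaussianPDF, gaussianPDF, ← ENNReal.ofReal_mul (gaussianPDFReal_nonneg _ _ _)]
    congr 1
    simp only [gaussianPDFReal, NNReal.coe_one, mul_one, sub_zero]
    rw [mul_mul_mul_comm, ← exp_add, ← mul_inv, mul_self_sqrt (by positivity)]
    congr 2
    have := sin_sq_add_cos_sq z.2
    linear_combination (-z.1 ^ 2 / 2) * this
  change ∫⁻ z in polarCoord.target, ENNReal.ofReal z.1 • (((fun z : ℝ × ℝ => gaussianPDF 0 1 z.1 * gaussianPDF 0 1 z.2) *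
      fun z : ℝ × ℝ => F (Qr p q s z.1 z.2)) (polarCoord.symm z)) = _
  simp_rw [e]
  have hm1 : Measurable (fun z : ℝ × ℝ => F (z.1 ^ 2 * ((1 + (K z.2).re) / 2))) := by
    refine hF.comp ((measurable_fst.pow_const 2).mul (Measurable.div_const ?_ 2))
    exact (hc.measurable.comp measurable_snd).const_add 1
  have hm2 : Measurable (fun z : ℝ × ℝ => ENNReal.ofReal ((2 * π)⁻¹ * exp (-z.1 ^ 2 / 2))) := by
    refine ENNReal.measurable_ofReal.comp (Measurable.const_mul ?_ _)
    exact Real.measurable_exp.comp ((measurable_fst.pow_const 2).neg.div_const 2)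
  have hm3 : Measurable (fun z : ℝ × ℝ => ENNReal.ofReal z.1) :=
    ENNReal.measurable_ofReal.comp measurable_fst
  have hm4 : ∀ r : ℝ, Measurable (fun u : ℝ => F (r ^ 2 * ((1 + u) / 2))) := fun r =>
    hF.comp (Measurable.const_mul ((measurable_id.const_add 1).div_const 2) _)
  have hm5 : ∀ r : ℝ, Measurable (fun t : ℝ => F (r ^ 2 * ((1 + (K t).re) / 2))) := fun r =>
    (hm4 r).comp hc.measurable
  rw [polarCoord_target, Measure.volume_eq_prod, ← Measure.prod_restrict,
    lintegral_prod _ (by exact (hm3.mul (hm2.mul hm1)).aemeasurable)]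
  refine lintegral_congr fun r => ?_
  rw [lintegral_map (hm4 r) hc.measurable]
  dsimp only
  rw [lintegral_const_mul _ (by exact (hm5 r).const_mul _), lintegral_const_mul _ (hm5 r)]

lemma map_Qr_eq (p q s : ℝ) (h : p ^ 2 ≤ q ^ 2 + s ^ 2) (hne : 0 < q ^ 2 + s ^ 2) :
    ((gaussianReal 0 1).prod (gaussianReal 0 1)).map (fun z => Qr p q s z.1 z.2) =
      (gaussianReal 0 1).map (fun x => x ^ 2) := by
  obtain ⟨K, hK, hQ⟩ := exists_goodK p q s h hne
  obtain ⟨K', hK', hQ'⟩ := exists_goodK 1 1 0 (by norm_num) (by norm_num)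
  have h1 : ((gaussianReal 0 1).prod (gaussianReal 0 1)).map (fun z => Qr p q s z.1 z.2) =
      ((gaussianReal 0 1).prod (gaussianReal 0 1)).map (fun z => Qr 1 1 0 z.1 z.2) := by
    refine Measure.ext_of_lintegral _ fun F hF => ?_
    rw [lintegral_map hF (measurable_Qr _ _ _), lintegral_map hF (measurable_Qr _ _ _),
      lintegral_Qr p q s hK hQ F hF, lintegral_Qr 1 1 0 hK' hQ' F hF, goodK_map_eq hK hK']
  have h2 : (fun z : ℝ × ℝ => Qr 1 1 0 z.1 z.2) = (fun x : ℝ => x ^ 2) ∘ Prod.fst := by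
    funext z
    simp only [Qr, Function.comp]
    by_cases hz : z.1 = 0
    · simp [hz]
    · field_simp; ring
  rw [h1, h2, ← Measure.map_map (by fun_prop) measurable_fst, Measure.map_fst_prod]
  simp

/-- Let `Σ` be positive definite `2×2` and
`f(x₁,x₂) = a x₁² + 2b x₁x₂ + c x₂²` a nonzero quadratic form with matrix
`A = !![a, b; b, c] ≠ 0`.  If `b² − ac ≥ 0`, then `W_{f,Σ} ~ (1/4)·χ²₁`. -/
theorem bivariate_quadratic_nonneg_disc (a b c : ℝ)
    (hA0 : !![a, b; b, c] ≠ (0 : Matrix (Fin 2) (Fin 2) ℝ))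
    (hdisc : b ^ 2 - a * c ≥ 0)
    (S : Matrix (Fin 2) (Fin 2) ℝ) (hS : S.PosDef)
    (μ : Measure (Fin 2 → ℝ)) (hμ : IsCenteredGaussian μ S) :
    μ.map (waldRV (C a * X 0 ^ 2 + C (2 * b) * X 0 * X 1 + C c * X 1 ^ 2) S) =
      (gaussianReal 0 1).map (fun z => 1 / 4 * z ^ 2) := by
  obtain ⟨L, hL, rfl⟩ := hμ
  have hdet : L.det ≠ 0 := by
    intro h0
    have := hS.det_pos
    rw [← hL, Matrix.det_mul, h0] at this
    simp at this
  rw [Matrix.det_fin_two] at hdet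
  set l := L 0 0 with hl
  set m := L 0 1 with hm
  set n := L 1 0 with hn
  set o := L 1 1 with ho
  -- entries of `Lᵀ A L`
  obtain ⟨B11, hB11⟩ : ∃ t, t = a * l ^ 2 + 2 * b * l * n + c * n ^ 2 := ⟨_, rfl⟩
  obtain ⟨B12, hB12⟩ : ∃ t, t = a * l * m + b * (l * o + m * n) + c * n * o := ⟨_, rfl⟩
  obtain ⟨B22, hB22⟩ : ∃ t, t = a * m ^ 2 + 2 * b * m * o + c * o ^ 2 := ⟨_, rfl⟩
  have hd : B11 * B22 - B12 ^ 2 = (a * c - b ^ 2) * (l * o - m * n) ^ 2 := by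
    rw [hB11, hB12, hB22]; ring
  have hle : B11 * B22 - B12 ^ 2 ≤ 0 := by
    rw [hd]; exact mul_nonpos_of_nonpos_of_nonneg (by linarith) (sq_nonneg _)
  have hpq : ((B11 + B22) / 2) ^ 2 ≤ ((B11 - B22) / 2) ^ 2 + B12 ^ 2 := by nlinarith
  have hne : 0 < ((B11 - B22) / 2) ^ 2 + B12 ^ 2 := by
    by_contra hcon
    have e1 : (B11 - B22) / 2 = 0 := by nlinarith [sq_nonneg ((B11 - B22) / 2), sq_nonneg B12]
    have e2 : B12 = 0 := by nlinarith [sq_nonneg ((B11 - B22) / 2), sq_nonneg B12]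
    have e3 : (B11 + B22) / 2 = 0 := by rw [e1, e2] at hpq; nlinarith [sq_nonneg ((B11 + B22) / 2)]
    have e4 : B11 = 0 := by linarith
    have e5 : B22 = 0 := by linarith
    have hD2 : (l * o - m * n) ^ 2 ≠ 0 := pow_ne_zero 2 hdet
    have ha : a = 0 := by
      have : a * (l * o - m * n) ^ 2 = 0 := by
        have : a * (l * o - m * n) ^ 2 = o ^ 2 * B11 - 2 * n * o * B12 + n ^ 2 * B22 := by
          rw [hB11, hB12, hB22]; ring
        rw [this, e4, e5, e2]; ring
      exact (mul_eq_zero.1 this).resolve_right hD2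
    have hc : c = 0 := by
      have : c * (l * o - m * n) ^ 2 = 0 := by
        have : c * (l * o - m * n) ^ 2 = m ^ 2 * B11 - 2 * l * m * B12 + l ^ 2 * B22 := by
          rw [hB11, hB12, hB22]; ring
        rw [this, e4, e5, e2]; ring
      exact (mul_eq_zero.1 this).resolve_right hD2
    have hb : b = 0 := by
      have : b * (l * o - m * n) ^ 2 = 0 := by
        have : b * (l * o - m * n) ^ 2 = - m * o * B11 + (l * o + m * n) * B12 - l * n * B22 := by
          rw [hB11, hB12, hB22]; ring
        rw [this, e4, e5, e2]; ring
      exact (mul_eq_zero.1 this).resolve_right hD2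
    apply hA0
    rw [ha, hb, hc]
    ext i j
    fin_cases i <;> fin_cases j <;> rfl
  have hmL : Measurable L.mulVec := (Continuous.matrix_mulVec continuous_const continuous_id).measurable
  have hcomp : waldRV (C a * X 0 ^ 2 + C (2 * b) * X 0 * X 1 + C c * X 1 ^ 2) S ∘ L.mulVec =
      (fun u => 1 / 4 * u) ∘ (fun z : ℝ × ℝ => Qr ((B11 + B22) / 2) ((B11 - B22) / 2) B12 z.1 z.2) ∘
        MeasurableEquiv.finTwoArrow := by
    funext z
    simp only [Function.comp, MeasurableEquiv.finTwoArrow_apply]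
    have hg0 : ∀ x : Fin 2 → ℝ, polyGrad (C a * X 0 ^ 2 + C (2 * b) * X 0 * X 1 + C c * X 1 ^ 2) x 0
        = 2 * (a * x 0 + b * x 1) := by
      intro x; simp [polyGrad, pderiv_X]; ring
    have hg1 : ∀ x : Fin 2 → ℝ, polyGrad (C a * X 0 ^ 2 + C (2 * b) * X 0 * X 1 + C c * X 1 ^ 2) x 1
        = 2 * (b * x 0 + c * x 1) := by
      intro x; simp [polyGrad, pderiv_X]; ring
    unfold waldRV
    rw [← hL]
    simp only [dotProduct, Matrix.mulVec, Fin.sum_univ_two, hg0, hg1, Matrix.mul_apply,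
      Matrix.transpose_apply, ← hl, ← hm, ← hn, ← ho]
    unfold Qr
    rw [← mul_div_assoc, one_div, inv_mul_eq_div, div_div]
    congr 1
    · simp only [map_add, map_mul, map_pow, eval_C, eval_X, Matrix.mulVec, dotProduct,
        Fin.sum_univ_two, ← hl, ← hm, ← hn, ← ho]
      rw [hB11, hB12, hB22]; ring
    · rw [hB11, hB12, hB22]; ring
  have hmw : Measurable (waldRV (C a * X 0 ^ 2 + C (2 * b) * X 0 * X 1 + C c * X 1 ^ 2) S) := by
    have hev : ∀ P : MvPolynomial (Fin 2) ℝ, Measurable (fun x : Fin 2 → ℝ => eval x P) :=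
      fun P => (MvPolynomial.continuous_eval P).measurable
    unfold waldRV polyGrad
    simp only [dotProduct, Matrix.mulVec, Fin.sum_univ_two]
    have h1 := hev (C a * X 0 ^ 2 + C (2 * b) * X 0 * X 1 + C c * X 1 ^ 2)
    have h2 := hev (pderiv 0 (C a * X 0 ^ 2 + C (2 * b) * X 0 * X 1 + C c * X 1 ^ 2))
    have h3 := hev (pderiv 1 (C a * X 0 ^ 2 + C (2 * b) * X 0 * X 1 + C c * X 1 ^ 2))
    exact (h1.pow_const 2).div ((h2.mul ((h2.const_mul _).add (h3.const_mul _))).add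
      (h3.mul ((h2.const_mul _).add (h3.const_mul _))))
  rw [Measure.map_map hmw hmL, hcomp,
    ← Measure.map_map (by fun_prop) ((measurable_Qr _ _ _).comp (MeasurableEquiv.measurable _)),
    ← Measure.map_map (measurable_Qr _ _ _) (MeasurableEquiv.measurable _)]
  unfold _root_.stdGaussian
  rw [(measurePreserving_finTwoArrow (gaussianReal 0 1)).map_eq, map_Qr_eq _ _ _ hpq hne,
    Measure.map_map (by fun_prop) (by fun_prop)]
  rfl
end
end

section
/- Let Σ be a positive definite 2×2 matrix and f(x₁,x₂) = ax₁² + 2bx₁x₂ + cx₂² a nonzero quadratic form with matrix A = [[a,b],[b,c]] ≠ 0. If b² − ac < 0, then W_{f,Σ} has the same distribution as (1/4)·(Z₁² + (4·det(AΣ)/trace(AΣ)²)·Z₂²), where Z₁ and Z₂ are independent standard normal random variables. -/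
open MeasureTheory ProbabilityTheory Matrix MvPolynomial Real

noncomputable section

/-- The degree one circle lift. -/
def psiAng (ρ x : ℝ) : ℝ := x - 2 * arctan (ρ * sin x / (1 + ρ * cos x))

/-- The explicit rational trigonometric function. -/
def kFun (ρ x : ℝ) : ℝ := sin x ^ 2 / (1 + ρ ^ 2 + 2 * ρ * cos x)

lemma aux_pos {ρ : ℝ} (hρ : ρ ^ 2 < 1) (x : ℝ) : 0 < 1 + ρ * cos x := by
  have h1 := abs_lt.1 ((sq_lt_one_iff_abs_lt_one ρ).1 hρ)
  have h2 : |ρ * cos x| < 1 := by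
    rw [abs_mul]
    exact lt_of_le_of_lt (mul_le_of_le_one_right (abs_nonneg _) (abs_cos_le_one x)) (abs_lt.2 h1)
  linarith [(abs_lt.1 h2).1]

lemma aux_D {ρ : ℝ} (hρ : ρ ^ 2 < 1) (x : ℝ) : 0 < 1 + ρ ^ 2 + 2 * ρ * cos x := by
  have h1 := aux_pos hρ x
  have h2 := sin_sq_add_cos_sq x
  have : 1 + ρ ^ 2 + 2 * ρ * cos x = (1 + ρ * cos x) ^ 2 + (ρ * sin x) ^ 2 := by
    linear_combination (-ρ ^ 2) * h2
  rw [this]; positivity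

lemma hasDerivAt_psi {ρ : ℝ} (hρ : ρ ^ 2 < 1) (x : ℝ) :
    HasDerivAt (psiAng ρ) ((1 - ρ ^ 2) / (1 + ρ ^ 2 + 2 * ρ * cos x)) x := by
  have h1 := aux_pos hρ x
  have hD := aux_D hρ x
  have h2 := sin_sq_add_cos_sq x
  have hD' : 1 + ρ ^ 2 + 2 * ρ * cos x = (1 + ρ * cos x) ^ 2 + (ρ * sin x) ^ 2 := by
    linear_combination (-ρ ^ 2) * h2
  have ha := ((hasDerivAt_sin x).const_mul ρ).div
    (((hasDerivAt_cos x).const_mul ρ).const_add 1) h1.ne'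
  have hb := (hasDerivAt_id x).sub ((ha.arctan).const_mul 2)
  refine hb.congr_deriv ?_
  have h3 : (1 : ℝ) + (ρ * sin x / (1 + ρ * cos x)) ^ 2
      = (1 + ρ ^ 2 + 2 * ρ * cos x) / (1 + ρ * cos x) ^ 2 := by
    rw [hD']; field_simp
  simp only [Pi.div_apply]
  rw [h3]
  field_simp
  linear_combination (-2 * ρ ^ 2) * h2

lemma aux_trig (u : ℝ) : cos (2 * arctan u) = (1 - u ^ 2) / (1 + u ^ 2) ∧
    sin (2 * arctan u) = 2 * u / (1 + u ^ 2) := by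
  have h : (0 : ℝ) < 1 + u ^ 2 := by positivity
  have hs := cos_sq_arctan u
  have hm : sin (arctan u) = u * cos (arctan u) := by
    have := tan_mul_cos (cos_arctan_pos u).ne'
    rw [tan_arctan] at this
    exact this.symm
  constructor
  · rw [cos_two_mul, hs]; field_simp; ring
  · rw [sin_two_mul, hm]
    have : 2 * (u * cos (arctan u)) * cos (arctan u) = 2 * u * cos (arctan u) ^ 2 := by ring
    rw [this, hs]; field_simp

lemma psi_trig {ρ : ℝ} (hρ : ρ ^ 2 < 1) (x : ℝ) :
    cos (psiAng ρ x) = (2 * ρ + (1 + ρ ^ 2) * cos x) / (1 + ρ ^ 2 + 2 * ρ * cos x) ∧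
    sin (psiAng ρ x) = (1 - ρ ^ 2) * sin x / (1 + ρ ^ 2 + 2 * ρ * cos x) := by
  have h1 := aux_pos hρ x
  have hD := aux_D hρ x
  have h2 := sin_sq_add_cos_sq x
  have hD' : 1 + ρ ^ 2 + 2 * ρ * cos x = (1 + ρ * cos x) ^ 2 + (ρ * sin x) ^ 2 := by
    linear_combination (-ρ ^ 2) * h2
  obtain ⟨hc, hs⟩ := aux_trig (ρ * sin x / (1 + ρ * cos x))
  have h3 : (1 : ℝ) + (ρ * sin x / (1 + ρ * cos x)) ^ 2
      = (1 + ρ ^ 2 + 2 * ρ * cos x) / (1 + ρ * cos x) ^ 2 := by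
    rw [hD']; field_simp
  rw [h3] at hc hs
  unfold psiAng
  rw [cos_sub, sin_sub, hc, hs]
  clear hc hs h3 hD'
  generalize 1 + ρ ^ 2 + 2 * ρ * cos x = D at *
  constructor
  · generalize hee : 1 + ρ * cos x = e at *
    field_simp
    subst hee
    linear_combination (2 * ρ + ρ ^ 2 * cos x) * h2
  · field_simp
    linear_combination (-ρ ^ 2) * sin x * h2

lemma k_psi {ρ : ℝ} (hρ : ρ ^ 2 < 1) (x : ℝ) : kFun ρ (psiAng ρ x + π) = kFun ρ x := by
  have hD := aux_D hρ x
  have hρ' : 0 < 1 - ρ ^ 2 := by linarith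
  obtain ⟨hc, hs⟩ := psi_trig hρ x
  unfold kFun
  rw [sin_add_pi, cos_add_pi, hc, hs]
  have : 1 + ρ ^ 2 + 2 * ρ * -((2 * ρ + (1 + ρ ^ 2) * cos x) / (1 + ρ ^ 2 + 2 * ρ * cos x))
     = (1 - ρ ^ 2) ^ 2 / (1 + ρ ^ 2 + 2 * ρ * cos x) := by
    generalize hDD : 1 + ρ ^ 2 + 2 * ρ * cos x = D at *
    field_simp
    linear_combination (-(1 + ρ ^ 2)) * hDD
  rw [this]
  clear this hc hs
  generalize hDD : 1 + ρ ^ 2 + 2 * ρ * cos x = D at *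
  field_simp

lemma k_phi {ρ : ℝ} (hρ : ρ ^ 2 < 1) (x : ℝ) :
    sin ((x + psiAng ρ x) / 2) ^ 2 = kFun ρ x := by
  have hD := aux_D hρ x
  obtain ⟨hc, hs⟩ := psi_trig hρ x
  have h2 := sin_sq_add_cos_sq x
  have : cos (x + psiAng ρ x) = 1 - 2 * sin ((x + psiAng ρ x) / 2) ^ 2 := by
    have h5 := cos_two_mul ((x + psiAng ρ x) / 2)
    have h6 := sin_sq_add_cos_sq ((x + psiAng ρ x) / 2)
    rw [show 2 * ((x + psiAng ρ x) / 2) = x + psiAng ρ x by ring] at h5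
    linear_combination h5 + 2 * h6
  have h4 : sin ((x + psiAng ρ x) / 2) ^ 2 = (1 - cos (x + psiAng ρ x)) / 2 := by
    rw [this]; ring
  rw [h4, cos_add, hc, hs, kFun]
  clear this h4 hc hs
  generalize hDD : 1 + ρ ^ 2 + 2 * ρ * cos x = D at *
  field_simp
  linear_combination (-(1 + ρ ^ 2)) * h2 - hDD

lemma k_periodic (ρ : ℝ) : Function.Periodic (kFun ρ) (2 * π) := by
  intro x; simp [kFun]

lemma k_cont {ρ : ℝ} (hρ : ρ ^ 2 < 1) : Continuous (kFun ρ) := by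
  unfold kFun
  exact Continuous.div (by fun_prop) (by fun_prop) (fun x => (aux_D hρ x).ne')

lemma core {ρ : ℝ} (hρ : ρ ^ 2 < 1) {F : ℝ → ℝ} (hF : Continuous F) :
    ∫ x in (0 : ℝ)..(2 * π), F (kFun ρ x) = ∫ x in (0 : ℝ)..(2 * π), F (sin (x / 2) ^ 2) := by
  have hk := k_cont hρ
  have hd : Continuous fun x : ℝ => (1 - ρ ^ 2) / (1 + ρ ^ 2 + 2 * ρ * cos x) :=
    Continuous.div (by fun_prop) (by fun_prop) (fun x => (aux_D hρ x).ne')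
  have hps : Continuous (psiAng ρ) :=
    continuous_iff_continuousAt.2 fun x => (hasDerivAt_psi hρ x).continuousAt
  have e0 : psiAng ρ 0 = 0 := by simp [psiAng]
  have e1 : psiAng ρ (2 * π) = 2 * π := by simp [psiAng]
  have hper : Function.Periodic (fun x => F (kFun ρ x)) (2 * π) := fun x => by
    simp only [k_periodic ρ x]
  have A1 : ∫ x in (0 : ℝ)..(2 * π), F (kFun ρ x) * ((1 - ρ ^ 2) / (1 + ρ ^ 2 + 2 * ρ * cos x))
      = ∫ x in (0 : ℝ)..(2 * π), F (kFun ρ x) := by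
    have := intervalIntegral.integral_comp_mul_deriv (a := 0) (b := 2 * π)
      (f := fun x => psiAng ρ x + π) (g := fun x => F (kFun ρ x))
      (f' := fun x => (1 - ρ ^ 2) / (1 + ρ ^ 2 + 2 * ρ * cos x))
      (fun x _ => (hasDerivAt_psi hρ x).add_const π) hd.continuousOn (hF.comp hk)
    simp only [Function.comp_def, k_psi hρ, e0, e1] at this
    rw [this, zero_add, add_comm (2 * π) π, hper.intervalIntegral_add_eq π 0, zero_add]
  have hper2 : Function.Periodic (fun x : ℝ => F (sin (x / 2) ^ 2)) (2 * π) := fun x => by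
    have : (x + 2 * π) / 2 = x / 2 + π := by ring
    simp only [this, sin_add_pi, neg_sq]
  have hc2 : Continuous (fun x : ℝ => F (sin (x / 2) ^ 2)) := by fun_prop
  have A2 : ∫ x in (0 : ℝ)..(2 * π),
        F (kFun ρ x) * (1 + (1 - ρ ^ 2) / (1 + ρ ^ 2 + 2 * ρ * cos x))
      = 2 * ∫ x in (0 : ℝ)..(2 * π), F (sin (x / 2) ^ 2) := by
    have := intervalIntegral.integral_comp_mul_deriv (a := 0) (b := 2 * π)
      (f := fun x => x + psiAng ρ x) (g := fun x => F (sin (x / 2) ^ 2))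
      (f' := fun x => 1 + (1 - ρ ^ 2) / (1 + ρ ^ 2 + 2 * ρ * cos x))
      (fun x _ => (hasDerivAt_id x).add (hasDerivAt_psi hρ x))
      (continuous_const.add hd).continuousOn hc2
    simp only [Function.comp_def, k_phi hρ, e0, e1, add_zero] at this
    rw [this, ← intervalIntegral.integral_add_adjacent_intervals (b := 2 * π)
      (hc2.intervalIntegrable _ _) (hc2.intervalIntegrable _ _),
      hper2.intervalIntegral_add_eq (2 * π) 0, zero_add]
    ring
  simp only [mul_add, mul_one] at A2
  have hc1 : Continuous (fun x => F (kFun ρ x)) := hF.comp hk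
  have hc3 : Continuous (fun x => F (kFun ρ x) * ((1 - ρ ^ 2) / (1 + ρ ^ 2 + 2 * ρ * cos x))) :=
    hc1.mul hd
  rw [intervalIntegral.integral_add (hc1.intervalIntegrable _ _)
    (hc3.intervalIntegrable _ _), A1] at A2
  linarith

lemma core2 {ρ : ℝ} (hρ : ρ ^ 2 < 1) (α : ℝ) {F : ℝ → ℝ} (hF : Continuous F) :
    ∫ x in (-π)..π, F (kFun ρ (2 * x - α)) = ∫ x in (-π)..π, F (sin x ^ 2) := by
  have hk := k_cont hρ
  have hper : Function.Periodic (fun x => F (kFun ρ x)) (2 * π) := fun x => by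
    simp only [k_periodic ρ x]
  have hper2 : Function.Periodic (fun x : ℝ => F (sin x ^ 2)) π := fun x => by
    simp only [sin_add_pi, neg_sq]
  have hc : Continuous (fun x => F (kFun ρ x)) := hF.comp hk
  have hc2 : Continuous (fun x : ℝ => F (sin x ^ 2)) := by fun_prop
  have h1 := core hρ hF
  rw [intervalIntegral.integral_comp_div (fun x => F (sin x ^ 2)) two_ne_zero] at h1
  rw [intervalIntegral.integral_comp_mul_sub (fun x => F (kFun ρ x)) two_ne_zero]
  have e1 : ∫ x in (2 * -π - α)..(2 * π - α), F (kFun ρ x)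
      = 2 * ∫ x in (0 : ℝ)..(2 * π), F (kFun ρ x) := by
    rw [← intervalIntegral.integral_add_adjacent_intervals (b := - α)
      (hc.intervalIntegrable _ _) (hc.intervalIntegrable _ _)]
    have a1 := hper.intervalIntegral_add_eq (2 * -π - α) 0
    have a2 := hper.intervalIntegral_add_eq (- α) 0
    rw [zero_add] at a1 a2
    rw [show 2 * -π - α + 2 * π = - α by ring] at a1
    rw [show - α + 2 * π = 2 * π - α by ring] at a2
    rw [a1, a2]; ring
  have e2 : ∫ x in (-π)..π, F (sin x ^ 2) = 2 * ∫ x in (0 : ℝ)..π, F (sin x ^ 2) := by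
    rw [← intervalIntegral.integral_add_adjacent_intervals (b := 0)
      (hc2.intervalIntegrable _ _) (hc2.intervalIntegrable _ _)]
    have a1 := hper2.intervalIntegral_add_eq (-π) 0
    rw [zero_add, neg_add_cancel] at a1
    rw [a1]; ring
  rw [e1, e2, h1]
  simp

open scoped ENNReal NNReal BoundedContinuousFunction

lemma lint_std : ∃ c : ℝ → ℝ≥0∞, ∀ h : (Fin 2 → ℝ) → ℝ≥0∞, Measurable h →
    ∫⁻ z, h z ∂(stdGaussian (Fin 2)) =
      ∫⁻ r in Set.Ioi (0 : ℝ), c r * ∫⁻ θ in Set.Ioo (-π) π, h ![r * cos θ, r * sin θ] := by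
  refine ⟨fun r => ENNReal.ofReal r *
    ENNReal.ofReal ((√(2 * π))⁻¹ * (√(2 * π))⁻¹ * rexp (- r ^ 2 / 2)), fun h hh => ?_⟩
  have hv : Measurable (fun p : ℝ × ℝ => (![p.1, p.2] : Fin 2 → ℝ)) := by
    refine measurable_pi_lambda _ fun i => ?_
    fin_cases i
    · exact measurable_fst
    · exact measurable_snd
  have hv2 : Measurable (fun p : ℝ × ℝ => (![p.1 * cos p.2, p.1 * sin p.2] : Fin 2 → ℝ)) :=
    hv.comp (f := fun p : ℝ × ℝ => (p.1 * cos p.2, p.1 * sin p.2)) (by fun_prop)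
  have hhv : Measurable (fun p : ℝ × ℝ => h ![p.1, p.2]) := hh.comp hv
  have mp := measurePreserving_finTwoArrow (gaussianReal 0 1)
  have e1 : ∫⁻ z, h z ∂(stdGaussian (Fin 2)) =
      ∫⁻ p, h ![p.1, p.2] ∂((gaussianReal 0 1).prod (gaussianReal 0 1)) := by
    rw [← mp.map_eq, lintegral_map hhv mp.measurable]
    refine lintegral_congr fun z => ?_
    congr 1
    ext i; fin_cases i <;> rfl
  rw [e1, gaussianReal_of_var_ne_zero 0 one_ne_zero,
    prod_withDensity (measurable_gaussianPDF _ _) (measurable_gaussianPDF _ _),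
    lintegral_withDensity_eq_lintegral_mul _ (by fun_prop) hhv,
    ← Measure.volume_eq_prod, ← lintegral_comp_polarCoord_symm]
  have ht : polarCoord.target = Set.Ioi (0 : ℝ) ×ˢ Set.Ioo (-π) π := rfl
  rw [ht, Measure.volume_eq_prod, ← Measure.prod_restrict]
  have e2 : ∀ p : ℝ × ℝ, (ENNReal.ofReal p.1 •
      (((fun z : ℝ × ℝ => gaussianPDF 0 1 z.1 * gaussianPDF 0 1 z.2) *
        fun p : ℝ × ℝ => h ![p.1, p.2]) (polarCoord.symm p))) =
      (ENNReal.ofReal p.1 *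
    ENNReal.ofReal ((√(2 * π))⁻¹ * (√(2 * π))⁻¹ * rexp (- p.1 ^ 2 / 2))) *
      h ![p.1 * cos p.2, p.1 * sin p.2] := by
    intro p
    simp only [Pi.mul_apply, polarCoord_symm_apply, smul_eq_mul, gaussianPDF_def,
      gaussianPDFReal_def, NNReal.coe_one, mul_one, sub_zero]
    rw [← mul_assoc, ← ENNReal.ofReal_mul (by positivity)]
    congr 3
    have : rexp (- p.1 ^ 2 / 2) =
      rexp (-(p.1 * cos p.2) ^ 2 / 2) * rexp (-(p.1 * sin p.2) ^ 2 / 2) := by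
      rw [← Real.exp_add]
      congr 1
      linear_combination (p.1 ^ 2 / 2) * sin_sq_add_cos_sq p.2
    rw [this]; ring
  simp_rw [e2]
  rw [lintegral_prod _ (by
    refine Measurable.aemeasurable (Measurable.mul (by fun_prop) (hh.comp hv2)))]
  refine lintegral_congr fun r => ?_
  dsimp only
  rw [lintegral_const_mul]
  exact hh.comp (hv2.comp (f := fun θ : ℝ => (r, θ)) (by fun_prop))

lemma wald_expl (a b c : ℝ) (S : Matrix (Fin 2) (Fin 2) ℝ) (x : Fin 2 → ℝ) :
    waldRV (C a * X 0 ^ 2 + C (2 * b) * X 0 * X 1 + C c * X 1 ^ 2) S x =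
      (a * x 0 ^ 2 + 2 * b * x 0 * x 1 + c * x 1 ^ 2) ^ 2 /
      ((2 * a * x 0 + 2 * b * x 1) *
          (S 0 0 * (2 * a * x 0 + 2 * b * x 1) + S 0 1 * (2 * b * x 0 + 2 * c * x 1)) +
        (2 * b * x 0 + 2 * c * x 1) *
          (S 1 0 * (2 * a * x 0 + 2 * b * x 1) + S 1 1 * (2 * b * x 0 + 2 * c * x 1))) := by
  have h0 : polyGrad (C a * X 0 ^ 2 + C (2 * b) * X 0 * X 1 + C c * X 1 ^ 2) x 0
      = 2 * a * x 0 + 2 * b * x 1 := by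
    simp [polyGrad, pderiv_X]; ring
  have h1 : polyGrad (C a * X 0 ^ 2 + C (2 * b) * X 0 * X 1 + C c * X 1 ^ 2) x 1
      = 2 * b * x 0 + 2 * c * x 1 := by
    simp [polyGrad, pderiv_X]; ring
  simp only [waldRV, dotProduct, Matrix.mulVec, Fin.sum_univ_two, h0, h1]
  simp

lemma wald_comp (a b c : ℝ) (B : Matrix (Fin 2) (Fin 2) ℝ) (z : Fin 2 → ℝ) (u v w : ℝ)
    (hu : u = a * B 0 0 ^ 2 + 2 * b * B 0 0 * B 1 0 + c * B 1 0 ^ 2)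
    (hv : v = a * B 0 0 * B 0 1 + b * (B 0 0 * B 1 1 + B 0 1 * B 1 0) + c * B 1 0 * B 1 1)
    (hw : w = a * B 0 1 ^ 2 + 2 * b * B 0 1 * B 1 1 + c * B 1 1 ^ 2) :
    waldRV (C a * X 0 ^ 2 + C (2 * b) * X 0 * X 1 + C c * X 1 ^ 2) (B * Bᵀ) (B.mulVec z) =
      (u * z 0 ^ 2 + 2 * v * z 0 * z 1 + w * z 1 ^ 2) ^ 2 /
      (4 * ((u * z 0 + v * z 1) ^ 2 + (v * z 0 + w * z 1) ^ 2)) := by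
  rw [wald_expl]
  simp only [Matrix.mulVec, dotProduct, Matrix.mul_apply, Fin.sum_univ_two, Matrix.transpose_apply]
  subst hu hv hw
  congr 1 <;> ring

lemma polar_quad (p q α r θ : ℝ) (hp : p ≠ 0) (hr : r ≠ 0) (hρ : (q / p) ^ 2 < 1) :
    ((p + q * cos α) * (r * cos θ) ^ 2 + 2 * (q * sin α) * (r * cos θ) * (r * sin θ)
      + (p - q * cos α) * (r * sin θ) ^ 2) ^ 2 /
    (4 * (((p + q * cos α) * (r * cos θ) + (q * sin α) * (r * sin θ)) ^ 2
      + ((q * sin α) * (r * cos θ) + (p - q * cos α) * (r * sin θ)) ^ 2))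
    = r ^ 2 / 4 * (1 - (q / p) ^ 2 * kFun (q / p) (2 * θ - α)) := by
  have h1 := sin_sq_add_cos_sq θ
  have h2 := sin_sq_add_cos_sq α
  have hD := aux_D hρ (2 * θ - α)
  have hC : cos (2 * θ - α) = (cos θ ^ 2 - sin θ ^ 2) * cos α + 2 * sin θ * cos θ * sin α := by
    rw [cos_sub, cos_two_mul', sin_two_mul]
  have hS : sin (2 * θ - α) ^ 2 = 1 - cos (2 * θ - α) ^ 2 := by
    linarith [sin_sq_add_cos_sq (2 * θ - α)]
  have hn : (p + q * cos α) * (r * cos θ) ^ 2 + 2 * (q * sin α) * (r * cos θ) * (r * sin θ)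
      + (p - q * cos α) * (r * sin θ) ^ 2 = r ^ 2 * (p * (1 + q / p * cos (2 * θ - α))) := by
    have : p * (1 + q / p * cos (2 * θ - α)) = p + q * cos (2 * θ - α) := by field_simp
    rw [this, hC]
    linear_combination (p * r ^ 2) * h1
  have hd : ((p + q * cos α) * (r * cos θ) + (q * sin α) * (r * sin θ)) ^ 2
      + ((q * sin α) * (r * cos θ) + (p - q * cos α) * (r * sin θ)) ^ 2
      = r ^ 2 * (p ^ 2 * (1 + (q / p) ^ 2 + 2 * (q / p) * cos (2 * θ - α))) := by
    have : p ^ 2 * (1 + (q / p) ^ 2 + 2 * (q / p) * cos (2 * θ - α))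
      = p ^ 2 + q ^ 2 + 2 * p * q * cos (2 * θ - α) := by field_simp
    rw [this, hC]
    linear_combination (r ^ 2 * p ^ 2 + r ^ 2 * q ^ 2) * h1
      + r ^ 2 * q ^ 2 * (sin θ ^ 2 + cos θ ^ 2) * h2
  rw [hn, hd, kFun, hS]
  clear hn hd hS hC
  generalize q / p = ρ at *
  generalize cos (2 * θ - α) = t at *
  generalize hDD : 1 + ρ ^ 2 + 2 * ρ * t = D at *
  have := hD.ne'
  field_simp
  linear_combination hDD

/-- Let `Σ` be positive definite `2×2` and
`f(x₁,x₂) = a x₁² + 2b x₁x₂ + c x₂²` a nonzero quadratic form with matrix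
`A = !![a, b; b, c] ≠ 0`.  If `b² − ac < 0`, then `W_{f,Σ}` has the same distribution as
`(1/4)(Z₁² + (4 det(AΣ)/trace(AΣ)²) Z₂²)` for independent standard normals `Z₁, Z₂`. -/
theorem bivariate_quadratic_neg_disc (a b c : ℝ)
    (hA0 : !![a, b; b, c] ≠ (0 : Matrix (Fin 2) (Fin 2) ℝ))
    (hdisc : b ^ 2 - a * c < 0)
    (S : Matrix (Fin 2) (Fin 2) ℝ) (hS : S.PosDef)
    (μ : Measure (Fin 2 → ℝ)) (hμ : IsCenteredGaussian μ S) :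
    μ.map (waldRV (C a * X 0 ^ 2 + C (2 * b) * X 0 * X 1 + C c * X 1 ^ 2) S) =
      (stdGaussian (Fin 2)).map
        (fun z => 1 / 4 * (z 0 ^ 2 +
          4 * (!![a, b; b, c] * S).det / (!![a, b; b, c] * S).trace ^ 2 * z 1 ^ 2)) := by
  obtain ⟨B, rfl, rfl⟩ := hμ
  obtain ⟨u, hu⟩ : ∃ u, u = a * B 0 0 ^ 2 + 2 * b * B 0 0 * B 1 0 + c * B 1 0 ^ 2 := ⟨_, rfl⟩
  obtain ⟨v, hv⟩ : ∃ v, v = a * B 0 0 * B 0 1 + b * (B 0 0 * B 1 1 + B 0 1 * B 1 0)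
    + c * B 1 0 * B 1 1 := ⟨_, rfl⟩
  obtain ⟨w, hw⟩ : ∃ w, w = a * B 0 1 ^ 2 + 2 * b * B 0 1 * B 1 1 + c * B 1 1 ^ 2 := ⟨_, rfl⟩
  have hdet : (!![a, b; b, c] * (B * Bᵀ)).det = u * w - v ^ 2 := by
    rw [Matrix.det_mul, Matrix.det_mul, Matrix.det_transpose, Matrix.det_fin_two_of,
      Matrix.det_fin_two B, hu, hv, hw]
    ring
  have htr : (!![a, b; b, c] * (B * Bᵀ)).trace = u + w := by
    rw [Matrix.trace_fin_two, Matrix.mul_apply, Matrix.mul_apply, Fin.sum_univ_two,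
      Fin.sum_univ_two, Matrix.mul_apply, Matrix.mul_apply, Matrix.mul_apply, Matrix.mul_apply]
    simp only [Fin.sum_univ_two, Matrix.transpose_apply, hu, hw, Matrix.of_apply,
      Matrix.cons_val_zero, Matrix.cons_val_one]
    ring
  have hpos : 0 < u * w - v ^ 2 := by
    rw [← hdet, Matrix.det_mul, Matrix.det_fin_two_of]
    exact mul_pos (by linarith) hS.det_pos
  rw [hdet, htr]
  have hq1 := Complex.norm_mul_cos_arg ⟨(u - w) / 2, v⟩
  have hq2 := Complex.norm_mul_sin_arg ⟨(u - w) / 2, v⟩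
  generalize ‖(⟨(u - w) / 2, v⟩ : ℂ)‖ = q at hq1 hq2
  generalize Complex.arg ⟨(u - w) / 2, v⟩ = α at hq1 hq2
  simp only at hq1 hq2
  obtain ⟨p, hp⟩ : ∃ p, p = (u + w) / 2 := ⟨_, rfl⟩
  have eu : u = p + q * cos α := by linarith
  have ew : w = p - q * cos α := by linarith
  have ev : v = q * sin α := hq2.symm
  have ed : u * w - v ^ 2 = p ^ 2 - q ^ 2 := by
    rw [eu, ew, ev]
    linear_combination (-q ^ 2) * sin_sq_add_cos_sq α
  have hp0 : p ≠ 0 := by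
    rintro rfl
    nlinarith [sq_nonneg q]
  have hρ : (q / p) ^ 2 < 1 := by
    rw [div_pow, div_lt_one (by positivity)]
    linarith
  have hk : 4 * (u * w - v ^ 2) / (u + w) ^ 2 = 1 - (q / p) ^ 2 := by
    rw [ed, show u + w = 2 * p by linarith]
    field_simp
    ring
  rw [hk]
  have hmB : Measurable B.mulVec := (Continuous.matrix_mulVec continuous_const continuous_id).measurable
  have hmW : Measurable (waldRV (C a * X 0 ^ 2 + C (2 * b) * X 0 * X 1 + C c * X 1 ^ 2)
      (B * Bᵀ)) := by
    rw [show waldRV (C a * X 0 ^ 2 + C (2 * b) * X 0 * X 1 + C c * X 1 ^ 2) (B * Bᵀ) = _ from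
      funext (wald_expl a b c (B * Bᵀ))]
    fun_prop
  have hmR : Measurable (fun z : Fin 2 → ℝ =>
      1 / 4 * (z 0 ^ 2 + (1 - (q / p) ^ 2) * z 1 ^ 2)) := by fun_prop
  rw [Measure.map_map hmW hmB]
  have : IsProbabilityMeasure (stdGaussian (Fin 2)) := by unfold _root_.stdGaussian; infer_instance
  have : IsFiniteMeasure ((stdGaussian (Fin 2)).map
    (waldRV (C a * X 0 ^ 2 + C (2 * b) * X 0 * X 1 + C c * X 1 ^ 2) (B * Bᵀ) ∘ B.mulVec)) := by
    infer_instance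
  refine ext_of_forall_lintegral_eq_of_IsFiniteMeasure fun f => ?_
  have hmf : Measurable (fun x => (f x : ℝ≥0∞)) :=
    measurable_coe_nnreal_ennreal.comp f.continuous.measurable
  rw [lintegral_map hmf (hmW.comp hmB), lintegral_map hmf hmR]
  obtain ⟨κ, hκ⟩ := lint_std
  refine (hκ _ (hmf.comp (hmW.comp hmB))).trans (Eq.trans ?_ (hκ _ (hmf.comp hmR)).symm)
  refine setLIntegral_congr_fun measurableSet_Ioi fun r hr => ?_
  have hr0 : r ≠ 0 := (Set.mem_Ioi.1 hr).ne'
  congr 1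
  obtain ⟨F, hF⟩ : ∃ F : ℝ → ℝ, F = fun y => (f (r ^ 2 / 4 * (1 - (q / p) ^ 2 * y)) : ℝ) :=
    ⟨_, rfl⟩
  have hFc : Continuous F := by
    rw [hF]
    exact NNReal.continuous_coe.comp (f.continuous.comp (by fun_prop))
  have hF0 : ∀ y, 0 ≤ F y := fun y => by rw [hF]; exact NNReal.coe_nonneg _
  have hkey := core2 hρ α hFc
  have conv : ∀ g : ℝ → ℝ, Continuous g → (∀ x, 0 ≤ g x) →
      ∫⁻ θ in Set.Ioo (-π) π, ENNReal.ofReal (g θ) = ENNReal.ofReal (∫ θ in (-π)..π, g θ) := by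
    intro g hg hg0
    rw [intervalIntegral.integral_of_le (by linarith [pi_pos]), integral_Ioc_eq_integral_Ioo,
      ofReal_integral_eq_lintegral_ofReal]
    · exact (hg.integrableOn_Icc (a := -π) (b := π)).mono_set Set.Ioo_subset_Icc_self
    · exact Filter.Eventually.of_forall hg0
  have hkc := k_cont hρ
  have c1 := conv (fun θ => F (kFun (q / p) (2 * θ - α))) (hFc.comp (hkc.comp (by fun_prop)))
    (fun _ => hF0 _)
  have c2 := conv (fun θ => F (sin θ ^ 2)) (by fun_prop) (fun _ => hF0 _)
  rw [hkey] at c1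
  refine Eq.trans ?_ ((c1.trans c2.symm).trans ?_)
  · refine lintegral_congr fun θ => ?_
    have := wald_comp a b c B ![r * cos θ, r * sin θ] u v w hu hv hw
    simp only [Function.comp_apply, this, hF, ENNReal.ofReal_coe_nnreal]
    rw [← polar_quad p q α r θ hp0 hr0 hρ, ← eu, ← ew, ← ev]
    rfl
  · refine lintegral_congr fun θ => ?_
    simp only [hF, ENNReal.ofReal_coe_nnreal]
    congr 2
    simp only [Matrix.cons_val_zero, Matrix.cons_val_one]
    linear_combination (-r ^ 2 / 4) * sin_sq_add_cos_sq θ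
end
end

section
/- Suppose the quadratic form f(x) = xᵀAx is given by a nonzero symmetric k×k matrix A, and suppose that Σ is a positive definite k×k matrix such that all eigenvalues of AΣ are nonnegative. Then W_{f,Σ} stochastically dominates (1/4)·χ²₁, i.e., W_{f,Σ} ≥_st (1/4)·χ²₁. -/
open MeasureTheory ProbabilityTheory Matrix MvPolynomial Real

noncomputable section

/-- The quadratic form `x ↦ xᵀ A x` as a polynomial. -/
def quadFormPoly {ι : Type*} [Fintype ι] (A : Matrix ι ι ℝ) : MvPolynomial ι ℝ :=
  ∑ i, ∑ j, C (A i j) * X i * X j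

theorem wq_eval {k : ℕ} (A : Matrix (Fin k) (Fin k) ℝ) (x : Fin k → ℝ) :
    eval x (quadFormPoly A) = x ⬝ᵥ A.mulVec x := by
  simp only [quadFormPoly, map_sum, map_mul, eval_C, eval_X, dotProduct, mulVec, Finset.mul_sum]
  exact Finset.sum_congr rfl fun i _ => Finset.sum_congr rfl fun j _ => by ring

theorem wq_grad {k : ℕ} (A : Matrix (Fin k) (Fin k) ℝ) (hA : A.IsSymm) (x : Fin k → ℝ) :
    polyGrad (quadFormPoly A) x = (2 : ℝ) • A.mulVec x := by
  ext l
  have h1 : ∀ i j, eval x (pderiv l (C (A i j) * X i * X j)) =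
      (if i = l then A i j * x j else 0) + (if j = l then A i j * x i else 0) := by
    intro i j
    simp only [Derivation.leibniz, pderiv_C, pderiv_X, smul_eq_mul, map_add, map_mul, eval_C,
      eval_X, mul_zero, add_zero, Pi.single_apply]
    split_ifs <;> simp <;> ring
  simp only [polyGrad, quadFormPoly, map_sum, h1, Finset.sum_add_distrib]
  have h2 : ∑ i, ∑ j, (if i = l then A i j * x j else 0) = (A.mulVec x) l := by
    rw [Finset.sum_comm]
    simp [mulVec, dotProduct]
  have h3 : ∑ i, ∑ j, (if j = l then A i j * x i else 0) = (A.mulVec x) l := by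
    simp only [Finset.sum_ite_eq', Finset.mem_univ, if_true, mulVec, dotProduct]
    exact Finset.sum_congr rfl fun i _ => by rw [hA.apply]
  rw [h2, h3, Pi.smul_apply, smul_eq_mul]; ring

theorem wq_parseval {k : ℕ} (b : OrthonormalBasis (Fin k) ℝ (EuclideanSpace ℝ (Fin k)))
    (x y : Fin k → ℝ) :
    ∑ j, (⇑(b j) ⬝ᵥ x) * (⇑(b j) ⬝ᵥ y) = x ⬝ᵥ y := by
  have h := b.sum_inner_mul_inner (WithLp.toLp 2 x) (WithLp.toLp 2 y)
  simp only [EuclideanSpace.inner_eq_star_dotProduct, star_trivial] at h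
  rw [dotProduct_comm x y, ← h]
  refine Finset.sum_congr rfl fun j _ => ?_
  rw [dotProduct_comm y]

theorem wq_law {k : ℕ} (v : EuclideanSpace ℝ (Fin k)) (hv : ‖v‖ = 1) :
    (Measure.pi fun _ : Fin k => gaussianReal 0 1).map (fun z => v.ofLp ⬝ᵥ z) =
      gaussianReal 0 1 := by
  have h := IsGaussian.map_eq_gaussianReal
    (μ := ProbabilityTheory.stdGaussian (EuclideanSpace ℝ (Fin k))) (innerSL ℝ v)
  rw [integral_strongDual_stdGaussian, variance_dual_stdGaussian, innerSL_apply_norm, hv,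
    ← map_pi_eq_stdGaussian, Measure.map_map (by fun_prop) (by fun_prop)] at h
  have e : (⇑(innerSL ℝ v) ∘ WithLp.toLp 2) = fun z : Fin k → ℝ => v.ofLp ⬝ᵥ z := by
    ext z
    simp [EuclideanSpace.inner_eq_star_dotProduct, dotProduct_comm]
  rw [e] at h
  simpa using h

theorem wq_chi (t : ℝ) : ((chiSq 1).map (fun y => 1 / 4 * y)) (Set.Ioi t) =
    gaussianReal 0 1 {u | t < 1 / 4 * u ^ 2} := by
  have h : (Measure.pi fun _ : Fin 1 => gaussianReal 0 1).map (Function.eval 0) =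
      gaussianReal 0 1 := (measurePreserving_eval (fun _ : Fin 1 => gaussianReal 0 1) 0).map_eq
  have hm : MeasurableSet {u : ℝ | t < 1 / 4 * u ^ 2} :=
    measurableSet_lt (by fun_prop) (by fun_prop)
  rw [chiSq, Measure.map_map (by fun_prop) (by fun_prop),
    Measure.map_apply (by fun_prop) measurableSet_Ioi, ← h, Measure.map_apply (by fun_prop) hm]
  unfold _root_.stdGaussian
  congr 1
  ext z
  simp

theorem wq_real {k : ℕ} (l u : Fin k → ℝ) (hl : ∀ i, 0 ≤ l i) (m : Fin k)
    (hm : ∀ i, l i ≤ l m) (hpos : 0 < l m) :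
    1 / 4 * u m ^ 2 ≤ (∑ i, l i * u i ^ 2) ^ 2 / (4 * ∑ i, l i ^ 2 * u i ^ 2) := by
  have h1 : ∑ i, l i ^ 2 * u i ^ 2 ≤ l m * ∑ i, l i * u i ^ 2 := by
    rw [Finset.mul_sum]
    refine Finset.sum_le_sum fun i _ => ?_
    have := mul_le_mul_of_nonneg_right (hm i) (mul_nonneg (hl i) (sq_nonneg (u i)))
    nlinarith
  have h2 : l m * u m ^ 2 ≤ ∑ i, l i * u i ^ 2 :=
    Finset.single_le_sum (f := fun i => l i * u i ^ 2)
      (fun i _ => mul_nonneg (hl i) (sq_nonneg _)) (Finset.mem_univ m)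
  have h3 : l m ^ 2 * u m ^ 2 ≤ ∑ i, l i ^ 2 * u i ^ 2 :=
    Finset.single_le_sum (f := fun i => l i ^ 2 * u i ^ 2)
      (fun i _ => by positivity) (Finset.mem_univ m)
  set P := ∑ i, l i * u i ^ 2
  set Q := ∑ i, l i ^ 2 * u i ^ 2
  by_cases hu : u m = 0
  · rw [hu]
    have : 0 ≤ Q := Finset.sum_nonneg fun i _ => by positivity
    have : 0 ≤ P ^ 2 / (4 * Q) := by positivity
    simpa using this
  · have hQ : 0 < Q := lt_of_lt_of_le (by positivity) h3
    have hP : 0 < P := lt_of_lt_of_le (by positivity) h2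
    rw [le_div_iff₀ (by positivity)]
    have a1 : u m ^ 2 * Q ≤ u m ^ 2 * (l m * P) := mul_le_mul_of_nonneg_left h1 (sq_nonneg _)
    have a2 : (l m * u m ^ 2) * P ≤ P * P := mul_le_mul_of_nonneg_right h2 hP.le
    nlinarith

/-- Suppose the quadratic form `f(x) = xᵀAx` is given by a nonzero symmetric
matrix `A`, and `Σ` is positive definite such that all eigenvalues `λ₁, …, λ_k` of `AΣ`
are nonnegative.  Then `W_{f,Σ} ≥_st (1/4)·χ²₁`. -/
theorem waldRV_quadratic_lower_bound {k : ℕ}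
    (A : Matrix (Fin k) (Fin k) ℝ) (hA : A.IsSymm) (hA0 : A ≠ 0)
    (S : Matrix (Fin k) (Fin k) ℝ) (hS : S.PosDef)
    (lam : Fin k → ℝ)
    (hlam : (A * S).charpoly = ∏ i, (Polynomial.X - Polynomial.C (lam i)))
    (hlam0 : ∀ i, 0 ≤ lam i)
    (μ : Measure (Fin k → ℝ)) (hμ : IsCenteredGaussian μ S) :
    ∀ t : ℝ, ((chiSq 1).map (fun y => 1 / 4 * y)) (Set.Ioi t) ≤
      μ.map (waldRV (quadFormPoly A) S) (Set.Ioi t) := by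
  intro t
  obtain ⟨B, hB, rfl⟩ := hμ
  have hmeas : Measurable (waldRV (quadFormPoly A) S) := by
    unfold waldRV
    simp only [wq_eval, wq_grad A hA]
    simp only [dotProduct, mulVec, Pi.smul_apply]
    fun_prop
  have hBm : Measurable B.mulVec := by
    unfold Matrix.mulVec dotProduct
    fun_prop
  rw [Measure.map_map hmeas hBm, Measure.map_apply (hmeas.comp hBm) measurableSet_Ioi, wq_chi]
  -- the transformed matrix
  obtain ⟨M, hMdef⟩ : ∃ M, M = Bᵀ * A * B := ⟨_, rfl⟩
  have hMs : Mᵀ = M := by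
    rw [hMdef]; simp [Matrix.transpose_mul, hA.eq, Matrix.mul_assoc]
  have hM : M.IsHermitian := by
    rw [Matrix.IsHermitian, Matrix.conjTranspose_eq_transpose_of_trivial, hMs]
  have hchar : M.charpoly = ∏ i, (Polynomial.X - Polynomial.C (lam i)) := by
    rw [← hlam, hMdef, Matrix.mul_assoc, Matrix.charpoly_mul_comm, Matrix.mul_assoc, hB]
  have hnn : ∀ i, 0 ≤ hM.eigenvalues i := by
    intro i
    have h1 := hM.charpoly_eq
    rw [hchar] at h1
    have h2 := congrArg (Polynomial.eval (hM.eigenvalues i)) h1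
    simp only [Polynomial.eval_prod, Polynomial.eval_sub, Polynomial.eval_X,
      Polynomial.eval_C] at h2
    have h3 : ∏ j, (hM.eigenvalues i - ((hM.eigenvalues j : ℝ))) = 0 :=
      Finset.prod_eq_zero (Finset.mem_univ i) (sub_self _)
    have h4 := h2.trans h3
    obtain ⟨j, -, hj⟩ := Finset.prod_eq_zero_iff.1 h4
    rw [sub_eq_zero.1 hj]
    exact hlam0 j
  have hM0 : M ≠ 0 := by
    intro h0
    apply hA0
    have hdet : IsUnit S.det := hS.det_pos.ne'.isUnit
    have h1 : S * A * S = 0 := by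
      have : S * A * S = B * M * Bᵀ := by
        rw [hMdef, ← hB]; simp only [Matrix.mul_assoc]
      rw [this, h0]; simp
    calc A = S⁻¹ * (S * A * S) * S⁻¹ := by
          rw [Matrix.mul_assoc S A S, Matrix.nonsing_inv_mul_cancel_left _ _ hdet,
            Matrix.mul_nonsing_inv_cancel_right _ _ hdet]
      _ = 0 := by rw [h1]; simp
  obtain ⟨i0, hi0⟩ : ∃ i, hM.eigenvalues i ≠ 0 := by
    by_contra! hcon
    exact hM0 (hM.eigenvalues_eq_zero_iff.1 (funext hcon))
  haveI : Nonempty (Fin k) := ⟨i0⟩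
  obtain ⟨m, hm⟩ := Finite.exists_max hM.eigenvalues
  have hpos : 0 < hM.eigenvalues m :=
    lt_of_lt_of_le (lt_of_le_of_ne (hnn i0) (Ne.symm hi0)) (hm i0)
  rw [← wq_law (hM.eigenvectorBasis m) (hM.eigenvectorBasis.orthonormal.1 m),
    Measure.map_apply (by unfold dotProduct; fun_prop)
      (measurableSet_lt (by fun_prop) (by fun_prop))]
  refine measure_mono fun z hz => ?_
  simp only [Set.mem_preimage, Set.mem_setOf_eq, Set.mem_Ioi, Function.comp_apply] at hz ⊢
  refine hz.trans_le ((wq_real hM.eigenvalues (fun i => ⇑(hM.eigenvectorBasis i) ⬝ᵥ z) hnn m hm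
    hpos).trans_eq ?_)
  have hev : ∀ j, ⇑(hM.eigenvectorBasis j) ⬝ᵥ M.mulVec z =
      hM.eigenvalues j * (⇑(hM.eigenvectorBasis j) ⬝ᵥ z) := by
    intro j
    rw [Matrix.dotProduct_mulVec, ← Matrix.mulVec_transpose, hMs, hM.mulVec_eigenvectorBasis,
      smul_dotProduct, smul_eq_mul]
  have e1 : ∑ i, hM.eigenvalues i * (⇑(hM.eigenvectorBasis i) ⬝ᵥ z) ^ 2 = z ⬝ᵥ M.mulVec z := by
    rw [← wq_parseval hM.eigenvectorBasis]
    exact Finset.sum_congr rfl fun i _ => by rw [hev]; ring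
  have e2 : ∑ i, hM.eigenvalues i ^ 2 * (⇑(hM.eigenvectorBasis i) ⬝ᵥ z) ^ 2 =
      M.mulVec z ⬝ᵥ M.mulVec z := by
    rw [← wq_parseval hM.eigenvectorBasis]
    exact Finset.sum_congr rfl fun i _ => by rw [hev]; ring
  have hMz : M.mulVec z = Bᵀ.mulVec (A.mulVec (B.mulVec z)) := by
    rw [hMdef, Matrix.mulVec_mulVec, Matrix.mulVec_mulVec, Matrix.mul_assoc]
  have hT : ∀ w y : Fin k → ℝ, w ⬝ᵥ Bᵀ.mulVec y = B.mulVec w ⬝ᵥ y := by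
    intro w y
    rw [Matrix.dotProduct_mulVec, Matrix.vecMul_transpose]
  have hS2 : ∀ y : Fin k → ℝ, y ⬝ᵥ S.mulVec y = Bᵀ.mulVec y ⬝ᵥ Bᵀ.mulVec y := by
    intro y
    rw [hT, ← hB, ← Matrix.mulVec_mulVec, dotProduct_comm]
  rw [e1, e2, waldRV, wq_eval, wq_grad A hA, hMz, hT, hS2, Matrix.mulVec_smul, smul_dotProduct,
    dotProduct_smul, smul_eq_mul, smul_eq_mul]
  congr 1
  ring
end
end

section
/- Let k₁, k₂ > 0 be integers and k = k₁ + k₂. If f(x₁,…,x_k) = x₁² + ··· + x_{k₁}² − x_{k₁+1}² − ··· − x_k², then W_f = W_{f,I} stochastically dominates (1/4)·χ²₁, i.e., W_f ≥_st (1/4)·χ²₁. -/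
open MeasureTheory ProbabilityTheory Matrix MvPolynomial Real

noncomputable section

open scoped ENNReal

/-- Gaussian factor. -/
def gE (u : ℝ) : ℝ≥0∞ := ENNReal.ofReal (Real.exp (-u / 2))

/-- Normalizing constant. -/
def gK : ℝ≥0∞ := ENNReal.ofReal (√(2 * π))⁻¹

@[fun_prop]
lemma measurable_gE : Measurable gE := by
  unfold gE; fun_prop

lemma gE_add (u v : ℝ) : gE (u + v) = gE u * gE v := by
  unfold gE
  rw [← ENNReal.ofReal_mul (Real.exp_pos _).le, ← Real.exp_add]
  congr 2; ring

lemma lintegral_gauss (f : ℝ → ℝ≥0∞) (hf : Measurable f) :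
    ∫⁻ x, f x ∂(gaussianReal 0 1) = gK * ∫⁻ x, f x * gE (x ^ 2) := by
  rw [gaussianReal_of_var_ne_zero _ one_ne_zero,
    lintegral_withDensity_eq_lintegral_mul _ (measurable_gaussianPDF 0 1) hf,
    ← lintegral_const_mul _ (by fun_prop)]
  refine lintegral_congr fun x => ?_
  have : gaussianPDF 0 1 x = gK * gE (x ^ 2) := by
    unfold gaussianPDF gK gE
    rw [← ENNReal.ofReal_mul (by positivity)]
    simp [gaussianPDFReal]
  simp only [Pi.mul_apply, this]
  ring

lemma lintegral_gauss2 (f : ℝ × ℝ → ℝ≥0∞) (hf : Measurable f) :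
    ∫⁻ x, ∫⁻ y, f (x, y) ∂(gaussianReal 0 1) ∂(gaussianReal 0 1)
      = gK * gK * ∫⁻ p : ℝ × ℝ, f p * gE (p.1 ^ 2 + p.2 ^ 2) := by
  have h1 : ∀ x, ∫⁻ y, f (x, y) ∂(gaussianReal 0 1) = gK * ∫⁻ y, f (x, y) * gE (y ^ 2) :=
    fun x => lintegral_gauss _ (by fun_prop)
  have hm : Measurable fun x => ∫⁻ y, f (x, y) * gE (y ^ 2) :=
    Measurable.lintegral_prod_right' (f := fun p : ℝ × ℝ => f p * gE (p.2 ^ 2)) (by fun_prop)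
  simp_rw [h1]
  rw [lintegral_const_mul _ hm, lintegral_gauss _ hm, Measure.volume_eq_prod,
    lintegral_prod _ (by fun_prop), mul_assoc]
  congr 2
  refine lintegral_congr fun x => ?_
  rw [← lintegral_mul_const _ (by fun_prop)]
  refine lintegral_congr fun y => ?_
  simp only [gE_add]; ring

lemma lintegral_polar (f : ℝ × ℝ → ℝ≥0∞) (hf : Measurable f) :
    ∫⁻ p : ℝ × ℝ, f p = ∫⁻ r in Set.Ioi (0:ℝ), ∫⁻ θ in Set.Ioo (-π) π,
      ENNReal.ofReal r * f (r * Real.cos θ, r * Real.sin θ) := by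
  rw [← lintegral_comp_polarCoord_symm]
  simp only [polarCoord_target, polarCoord_symm_apply, smul_eq_mul]
  rw [Measure.volume_eq_prod, ← Measure.prod_restrict, lintegral_prod _ (by fun_prop)]

lemma lintegral_cos_double (q : ℝ → ℝ≥0∞) (hq : Measurable q) :
    ∫⁻ θ in Set.Ioo (-π) π, q (Real.cos (2 * θ)) = ∫⁻ θ in Set.Ioo (-π) π, q (Real.cos θ) := by
  have : Fact (0 < 2 * π) := ⟨by positivity⟩
  let co : AddCircle (2 * π) → ℝ := Real.cos_periodic.lift
  have hco : ∀ x : ℝ, co (x : AddCircle (2 * π)) = Real.cos x := fun x =>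
    Real.cos_periodic.lift_coe x
  have hc : Measurable co := by
    apply Continuous.measurable
    exact continuous_coinduced_dom.mpr Real.continuous_cos
  have key := fun g : AddCircle (2 * π) → ℝ≥0∞ => AddCircle.lintegral_preimage (2 * π) (-π) g
  have e : -π + 2 * π = π := by ring
  rw [e] at key
  have hmp : MeasurePreserving (fun y : AddCircle (2 * π) => (2 : ℤ) • y) volume volume :=
    (AddCircle.ergodic_zsmul (by norm_num)).toMeasurePreserving
  have h1 := key (fun a => q (co a))
  have h2 := key (fun a => q (co ((2 : ℤ) • a)))
  rw [hmp.lintegral_comp (f := fun a => q (co a)) (hq.comp hc), ← h1] at h2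
  rw [← restrict_Ioo_eq_restrict_Ioc] at h2
  simp only [hco] at h2
  rw [← h2]
  refine lintegral_congr fun θ => ?_
  have : (2 : ℤ) • ((θ : ℝ) : AddCircle (2 * π)) = ((2 * θ : ℝ) : AddCircle (2 * π)) := by
    simp [two_mul, two_zsmul]
  rw [this, hco]

/-- The map `(x,y) ↦ (x²-y²)/√(x²+y²)` in Lebesgue coordinates. -/
lemma lintegral_square_map (Ψ : ℝ × ℝ → ℝ≥0∞) (hΨ : Measurable Ψ) :
    ∫⁻ p : ℝ × ℝ, Ψ (p.1 ^ 2 + p.2 ^ 2, (p.1 ^ 2 - p.2 ^ 2) / √(p.1 ^ 2 + p.2 ^ 2))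
      = ∫⁻ p : ℝ × ℝ, Ψ (p.1 ^ 2 + p.2 ^ 2, p.1) := by
  rw [lintegral_polar _ (by fun_prop), lintegral_polar _ (by fun_prop)]
  refine setLIntegral_congr_fun measurableSet_Ioi fun r hr => ?_
  have hr : 0 < r := hr
  have h := lintegral_cos_double (fun c => ENNReal.ofReal r * Ψ (r ^ 2, r * c)) (by fun_prop)
  have e : ∀ θ, (r * Real.cos θ) ^ 2 + (r * Real.sin θ) ^ 2 = r ^ 2 := fun θ => by
    rw [mul_pow, mul_pow, ← mul_add, Real.cos_sq_add_sin_sq, mul_one]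
  simp only [e, Real.sqrt_sq hr.le]
  rw [← h]
  refine lintegral_congr fun θ => ?_
  congr 3
  rw [Real.cos_two_mul']
  field_simp

lemma lintegral_even (f : ℝ → ℝ≥0∞) (he : ∀ x, f (-x) = f x) :
    ∫⁻ x, f x = 2 * ∫⁻ x in Set.Ioi (0:ℝ), f x := by
  rw [← lintegral_add_compl f (measurableSet_Ioi (a := (0:ℝ))), two_mul, Set.compl_Ioi,
    ← restrict_Iio_eq_restrict_Iic]
  congr 1
  have h := (Measure.measurePreserving_neg (volume : Measure ℝ)).setLIntegral_comp_preimage_emb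
    (MeasurableEquiv.neg ℝ).measurableEmbedding f (Set.Ioi 0)
  rw [← h]
  simp [he]

lemma radial (n : ℕ) : ∃ c : ℝ≥0∞, ∀ F : ℝ → ℝ≥0∞, Measurable F →
    ∫⁻ z, F (∑ i, z i ^ 2) ∂(Measure.pi fun _ : Fin (n + 1) => gaussianReal 0 1)
      = c * ∫⁻ x, F (x ^ 2) * ENNReal.ofReal (|x| ^ n) ∂(gaussianReal 0 1) := by
  induction n with
  | zero =>
    refine ⟨1, fun F hF => ?_⟩
    have := (measurePreserving_funUnique (gaussianReal 0 1) (Fin 1)).lintegral_comp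
      (f := fun x => F (x ^ 2)) (by fun_prop)
    simp only [Nat.reduceAdd, pow_zero, ENNReal.ofReal_one, mul_one, one_mul]
    rw [← this]
    exact lintegral_congr fun z => by simp
  | succ n ih =>
    obtain ⟨c, hc⟩ := ih
    refine ⟨c * (gK * (∫⁻ θ in Set.Ioo (-π) π, ENNReal.ofReal (|Real.sin θ| ^ n)) * 2⁻¹),
      fun F hF => ?_⟩
    have hmp := measurePreserving_piFinSuccAbove
      (fun _ : Fin (n + 2) => gaussianReal 0 1) 0
    have h1 : ∫⁻ z, F (∑ i, z i ^ 2) ∂(Measure.pi fun _ : Fin (n + 2) => gaussianReal 0 1)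
      = ∫⁻ x, ∫⁻ z, F (x ^ 2 + ∑ i, z i ^ 2)
        ∂(Measure.pi fun _ : Fin (n + 1) => gaussianReal 0 1) ∂(gaussianReal 0 1) := by
      rw [← lintegral_prod (fun p : ℝ × (Fin (n + 1) → ℝ) => F (p.1 ^ 2 + ∑ i, p.2 i ^ 2))
        (by fun_prop), ← hmp.lintegral_comp (by fun_prop)]
      refine lintegral_congr fun z => ?_
      simp [Fin.sum_univ_succ, MeasurableEquiv.piFinSuccAbove, Fin.insertNthEquiv, Fin.tail]
    rw [h1]
    simp_rw [fun x : ℝ => hc (fun u => F (x ^ 2 + u)) (by fun_prop)]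
    rw [lintegral_const_mul _ (Measurable.lintegral_prod_right'
      (f := fun p : ℝ × ℝ => F (p.1 ^ 2 + p.2 ^ 2) * ENNReal.ofReal (|p.2| ^ n)) (by fun_prop)),
      lintegral_gauss2 (fun p : ℝ × ℝ => F (p.1 ^ 2 + p.2 ^ 2) * ENNReal.ofReal (|p.2| ^ n))
        (by fun_prop), lintegral_gauss _ (by fun_prop), lintegral_polar _ (by fun_prop),
      lintegral_even _ (by simp)]
    have e : ∀ r θ, (r * Real.cos θ) ^ 2 + (r * Real.sin θ) ^ 2 = r ^ 2 := fun r θ => by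
      rw [mul_pow, mul_pow, ← mul_add, Real.cos_sq_add_sin_sq, mul_one]
    have h2 : ∫⁻ r in Set.Ioi (0:ℝ), ∫⁻ θ in Set.Ioo (-π) π, ENNReal.ofReal r *
        (F ((r * Real.cos θ) ^ 2 + (r * Real.sin θ) ^ 2) *
          ENNReal.ofReal (|r * Real.sin θ| ^ n) *
          gE ((r * Real.cos θ) ^ 2 + (r * Real.sin θ) ^ 2))
        = (∫⁻ θ in Set.Ioo (-π) π, ENNReal.ofReal (|Real.sin θ| ^ n)) *
          ∫⁻ r in Set.Ioi (0:ℝ), F (r ^ 2) * ENNReal.ofReal (|r| ^ (n + 1)) * gE (r ^ 2) := by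
      rw [← lintegral_const_mul _ (by fun_prop)]
      refine setLIntegral_congr_fun measurableSet_Ioi fun r hr => ?_
      have hr : 0 < r := hr
      simp only [e]
      rw [← lintegral_mul_const _ (by fun_prop)]
      refine lintegral_congr fun θ => ?_
      rw [abs_mul, mul_pow, ENNReal.ofReal_mul (by positivity), pow_succ |r| n,
        ENNReal.ofReal_mul (by positivity), abs_of_pos hr]
      ring
    rw [h2]
    have h3 : (2⁻¹ : ℝ≥0∞) * 2 = 1 := ENNReal.inv_mul_cancel (by norm_num) (by norm_num)
    set D := ∫⁻ θ in Set.Ioo (-π) π, ENNReal.ofReal (|Real.sin θ| ^ n)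
    set J := ∫⁻ r in Set.Ioi (0:ℝ), F (r ^ 2) * ENNReal.ofReal (|r| ^ (n + 1)) * gE (r ^ 2)
    calc c * (gK * gK * (D * J)) = c * (gK * gK * (D * J)) * 1 := by rw [mul_one]
      _ = c * (gK * gK * (D * J)) * (2⁻¹ * 2) := by rw [h3]
      _ = _ := by ring

lemma chebyshev (μ : Measure ℝ) [IsProbabilityMeasure μ] (S : Set ℝ) (hS : MeasurableSet S)
    (G : ℝ → ℝ≥0∞) (h : ∀ v ∈ S, ∀ v' ∉ S, G v' ≤ G v) :
    μ S * ∫⁻ v, G v ∂μ ≤ ∫⁻ v in S, G v ∂μ := by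
  set M := ⨆ v ∈ Sᶜ, G v
  have h1 : ∫⁻ v in Sᶜ, G v ∂μ ≤ M * μ Sᶜ := by
    rw [← setLIntegral_const]
    exact setLIntegral_mono' hS.compl fun v hv => le_iSup₂_of_le v hv le_rfl
  have h2 : M * μ S ≤ ∫⁻ v in S, G v ∂μ := by
    rw [← setLIntegral_const]
    exact setLIntegral_mono' hS fun v hv => iSup₂_le fun v' hv' => h v hv v' hv'
  rw [← lintegral_add_compl G hS, mul_add]
  calc _ ≤ μ S * ∫⁻ v in S, G v ∂μ + μ S * (M * μ Sᶜ) := by gcongr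
    _ = μ S * ∫⁻ v in S, G v ∂μ + μ Sᶜ * (M * μ S) := by ring
    _ ≤ μ S * ∫⁻ v in S, G v ∂μ + μ Sᶜ * ∫⁻ v in S, G v ∂μ := by gcongr
    _ = (μ S + μ Sᶜ) * ∫⁻ v in S, G v ∂μ := by ring
    _ = _ := by rw [prob_add_prob_compl hS, one_mul]

lemma add_mono_aux {P Q P' Q' : ℝ} (hQ' : 0 ≤ Q') (hPQ : Q ≤ P) (hP : P ≤ P')
    (h : P * Q ≤ P' * Q') : P + Q ≤ P' + Q' := by
  by_contra hh
  push Not at hh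
  have : 0 < P' := by
    by_contra h0
    nlinarith
  nlinarith [mul_nonneg (sub_nonneg.2 hP) (sub_nonneg.2 (hPQ.trans hP)), mul_pos this (sub_pos.2 hh)]

/-- The weight in the new coordinates. -/
def wt (m n : ℕ) (s v : ℝ) : ℝ :=
  √((s + √s * v) / 2) ^ m * √((s - √s * v) / 2) ^ n

lemma wt_neg (m n : ℕ) (s v : ℝ) : wt m n s (-v) = wt n m s v := by
  unfold wt
  rw [mul_comm]
  congr 3 <;> ring_nf

lemma wt_mono_aux (n d : ℕ) (w v v' : ℝ) (hv : 0 ≤ v) (hvv : v ≤ v') :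
    wt (n + d) n (v ^ 2 + w ^ 2) v + wt n (n + d) (v ^ 2 + w ^ 2) v ≤
    wt (n + d) n (v' ^ 2 + w ^ 2) v' + wt n (n + d) (v' ^ 2 + w ^ 2) v' := by
  have hv' := hv.trans hvv
  have key : ∀ u : ℝ, 0 ≤ u → 
      √((u ^ 2 + w ^ 2 + √(u ^ 2 + w ^ 2) * u) / 2) * √((u ^ 2 + w ^ 2 - √(u ^ 2 + w ^ 2) * u) / 2)
        = √(u ^ 2 + w ^ 2) * |w| / 2 := by
    intro u hu
    have hs := Real.sq_sqrt (show 0 ≤ u ^ 2 + w ^ 2 by positivity)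
    have hp := Real.sqrt_nonneg (u ^ 2 + w ^ 2)
    set R := √(u ^ 2 + w ^ 2)
    rw [← Real.sqrt_mul (by positivity), ← hs]
    rw [show (R ^ 2 + R * u) / 2 * ((R ^ 2 - R * u) / 2) = (R * |w| / 2) ^ 2 by
      rw [div_pow, mul_pow, sq_abs]
      linear_combination (R ^ 2 / 4) * hs]
    exact Real.sqrt_sq (by positivity)
  have hR : √(v ^ 2 + w ^ 2) ≤ √(v' ^ 2 + w ^ 2) := by gcongr
  have k1 := key v hv
  have k2 := key v' hv'
  have hpp : √((v ^ 2 + w ^ 2 + √(v ^ 2 + w ^ 2) * v) / 2) ≤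
    √((v' ^ 2 + w ^ 2 + √(v' ^ 2 + w ^ 2) * v') / 2) := by gcongr
  have hqp : √((v ^ 2 + w ^ 2 - √(v ^ 2 + w ^ 2) * v) / 2) ≤
      √((v ^ 2 + w ^ 2 + √(v ^ 2 + w ^ 2) * v) / 2) := by
    apply Real.sqrt_le_sqrt
    have : 0 ≤ √(v ^ 2 + w ^ 2) * v := by positivity
    linarith
  unfold wt
  set p := √((v ^ 2 + w ^ 2 + √(v ^ 2 + w ^ 2) * v) / 2)
  set q := √((v ^ 2 + w ^ 2 - √(v ^ 2 + w ^ 2) * v) / 2)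
  set p' := √((v' ^ 2 + w ^ 2 + √(v' ^ 2 + w ^ 2) * v') / 2)
  set q' := √((v' ^ 2 + w ^ 2 - √(v' ^ 2 + w ^ 2) * v') / 2)
  have hp0 : 0 ≤ p := Real.sqrt_nonneg _
  have hq0 : 0 ≤ q := Real.sqrt_nonneg _
  have hp0' : 0 ≤ p' := Real.sqrt_nonneg _
  have hq0' : 0 ≤ q' := Real.sqrt_nonneg _
  have hpq : p * q ≤ p' * q' := by
    rw [k1, k2]; gcongr
  have h1 : p ^ d + q ^ d ≤ p' ^ d + q' ^ d := by
    apply add_mono_aux (by positivity)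
    · gcongr
    · gcongr
    · rw [← mul_pow, ← mul_pow]; gcongr
  calc p ^ (n + d) * q ^ n + p ^ n * q ^ (n + d) = (p * q) ^ n * (p ^ d + q ^ d) := by ring
    _ ≤ (p' * q') ^ n * (p' ^ d + q' ^ d) := by gcongr
    _ = _ := by ring

lemma wt_mono (m n : ℕ) (w v v' : ℝ) (hvv : v ^ 2 ≤ v' ^ 2) :
    wt m n (v ^ 2 + w ^ 2) v + wt m n (v ^ 2 + w ^ 2) (-v) ≤
    wt m n (v' ^ 2 + w ^ 2) v' + wt m n (v' ^ 2 + w ^ 2) (-v') := by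
  have habs : ∀ u : ℝ, wt m n (u ^ 2 + w ^ 2) u + wt m n (u ^ 2 + w ^ 2) (-u) =
      wt m n (|u| ^ 2 + w ^ 2) |u| + wt n m (|u| ^ 2 + w ^ 2) |u| := by
    intro u
    rw [sq_abs, wt_neg]
    rcases abs_cases u with ⟨h, -⟩ | ⟨h, -⟩ <;> rw [h]
    rw [wt_neg, wt_neg, add_comm]
  rw [habs, habs]
  have h := sq_le_sq.1 hvv
  rcases le_total n m with hnm | hnm
  · obtain ⟨d, rfl⟩ := Nat.exists_eq_add_of_le hnm
    exact wt_mono_aux n d w _ _ (abs_nonneg _) h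
  · obtain ⟨d, rfl⟩ := Nat.exists_eq_add_of_le hnm
    have := wt_mono_aux m d w _ _ (abs_nonneg _) h
    linarith

@[fun_prop]
lemma measurable_wt (m n : ℕ) : Measurable fun p : ℝ × ℝ => wt m n p.1 p.2 := by
  unfold wt; fun_prop

lemma wt_nonneg (m n : ℕ) (s v : ℝ) : 0 ≤ wt m n s v := by
  unfold wt; positivity

lemma wt_xy (m n : ℕ) (x y : ℝ) :
    wt m n (x ^ 2 + y ^ 2) ((x ^ 2 - y ^ 2) / √(x ^ 2 + y ^ 2)) = |x| ^ m * |y| ^ n := by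
  have : √(x ^ 2 + y ^ 2) * ((x ^ 2 - y ^ 2) / √(x ^ 2 + y ^ 2)) = x ^ 2 - y ^ 2 := by
    by_cases h : √(x ^ 2 + y ^ 2) = 0
    · rw [h, zero_mul]
      rw [Real.sqrt_eq_zero (by positivity)] at h
      nlinarith [sq_nonneg x, sq_nonneg y]
    · field_simp
  unfold wt
  rw [this, show (x ^ 2 + y ^ 2 + (x ^ 2 - y ^ 2)) / 2 = x ^ 2 by ring,
    show (x ^ 2 + y ^ 2 - (x ^ 2 - y ^ 2)) / 2 = y ^ 2 by ring, Real.sqrt_sq_eq_abs,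
    Real.sqrt_sq_eq_abs]

lemma core_s15 (m n : ℕ) (S : Set ℝ) (hS : MeasurableSet S)
    (hS' : ∀ v ∈ S, ∀ v' ∉ S, v' ^ 2 ≤ v ^ 2) (hSn : ∀ v, -v ∈ S ↔ v ∈ S) :
    gaussianReal 0 1 S * ∫⁻ x, ∫⁻ y, ENNReal.ofReal (|x| ^ m * |y| ^ n)
        ∂(gaussianReal 0 1) ∂(gaussianReal 0 1) ≤
      ∫⁻ x, ∫⁻ y, S.indicator 1 ((x ^ 2 - y ^ 2) / √(x ^ 2 + y ^ 2)) *
        ENNReal.ofReal (|x| ^ m * |y| ^ n) ∂(gaussianReal 0 1) ∂(gaussianReal 0 1) := by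
  have hind : ∀ T : Set ℝ, MeasurableSet T → Measurable (T.indicator (1 : ℝ → ℝ≥0∞)) :=
    fun T hT => measurable_one.indicator hT
  have trans : ∀ T : Set ℝ, MeasurableSet T →
      ∫⁻ x, ∫⁻ y, T.indicator 1 ((x ^ 2 - y ^ 2) / √(x ^ 2 + y ^ 2)) *
        ENNReal.ofReal (|x| ^ m * |y| ^ n) ∂(gaussianReal 0 1) ∂(gaussianReal 0 1) =
      ∫⁻ y, ∫⁻ x in T, ENNReal.ofReal (wt m n (x ^ 2 + y ^ 2) x)
        ∂(gaussianReal 0 1) ∂(gaussianReal 0 1) := by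
    intro T hT
    have hT1 := hind T hT
    have hw := measurable_wt m n
    rw [lintegral_gauss2 (fun p : ℝ × ℝ => T.indicator 1
      ((p.1 ^ 2 - p.2 ^ 2) / √(p.1 ^ 2 + p.2 ^ 2)) * ENNReal.ofReal (|p.1| ^ m * |p.2| ^ n))
      (by fun_prop)]
    have := lintegral_square_map (fun p => T.indicator 1 p.2 *
      ENNReal.ofReal (wt m n p.1 p.2) * gE p.1) (by fun_prop)
    simp only [wt_xy] at this
    rw [this, ← lintegral_gauss2 (fun p : ℝ × ℝ => T.indicator 1 p.1 *
      ENNReal.ofReal (wt m n (p.1 ^ 2 + p.2 ^ 2) p.1)) (by fun_prop),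
      lintegral_lintegral_swap (by apply Measurable.aemeasurable; unfold Function.uncurry; fun_prop)]
    refine lintegral_congr fun y => ?_
    rw [← lintegral_indicator hT]
    refine lintegral_congr fun x => ?_
    by_cases hx : x ∈ T <;> simp [hx]
  have hu := trans Set.univ MeasurableSet.univ
  simp only [Set.indicator_univ, Pi.one_apply, one_mul, Measure.restrict_univ] at hu
  rw [trans S hS, hu, ← lintegral_const_mul _ (Measurable.lintegral_prod_left'
    (f := fun p : ℝ × ℝ => ENNReal.ofReal (wt m n (p.1 ^ 2 + p.2 ^ 2) p.1))
    (by have hw := measurable_wt m n; fun_prop))]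
  refine lintegral_mono fun y => ?_
  have hw := measurable_wt m n
  have hneg : MeasurePreserving (fun x : ℝ => -x) (gaussianReal 0 1) (gaussianReal 0 1) :=
    ⟨measurable_neg, by have := gaussianReal_map_neg (μ := 0) (v := 1); simpa using this⟩
  have sym : ∀ T : Set ℝ, MeasurableSet T → (∀ v, -v ∈ T ↔ v ∈ T) →
      ∫⁻ x in T, ENNReal.ofReal (wt m n (x ^ 2 + y ^ 2) x + wt m n (x ^ 2 + y ^ 2) (-x))
        ∂(gaussianReal 0 1) =
      2 * ∫⁻ x in T, ENNReal.ofReal (wt m n (x ^ 2 + y ^ 2) x) ∂(gaussianReal 0 1) := by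
    intro T hT hTn
    have h := hneg.setLIntegral_comp_preimage hT
      (f := fun x => ENNReal.ofReal (wt m n (x ^ 2 + y ^ 2) x)) (by fun_prop)
    have hpre : (fun x : ℝ => -x) ⁻¹' T = T := Set.ext hTn
    rw [hpre] at h
    simp only [neg_sq] at h
    simp_rw [ENNReal.ofReal_add (wt_nonneg _ _ _ _) (wt_nonneg _ _ _ _)]
    rw [lintegral_add_left (by fun_prop), h, two_mul]
  have hch := chebyshev (gaussianReal 0 1) S hS
    (fun x => ENNReal.ofReal (wt m n (x ^ 2 + y ^ 2) x + wt m n (x ^ 2 + y ^ 2) (-x)))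
    (fun v hv v' hv' => ENNReal.ofReal_le_ofReal (wt_mono m n y v' v (hS' v hv v' hv')))
  have su := sym Set.univ MeasurableSet.univ (by simp)
  simp only [Measure.restrict_univ] at su
  rw [sym S hS hSn, su, mul_left_comm] at hch
  exact (ENNReal.mul_le_mul_iff_right (by norm_num) (by norm_num)).1 hch

lemma law_split (k₁ k₂ : ℕ) (F : ℝ × ℝ → ℝ≥0∞) (hF : Measurable F) :
    ∫⁻ z, F (∑ i : Fin k₁, z (Fin.castAdd k₂ i) ^ 2, ∑ i : Fin k₂, z (Fin.natAdd k₁ i) ^ 2)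
      ∂(Measure.pi fun _ : Fin (k₁ + k₂) => gaussianReal 0 1) =
    ∫⁻ a, ∫⁻ b, F (∑ i, a i ^ 2, ∑ i, b i ^ 2)
      ∂(Measure.pi fun _ : Fin k₂ => gaussianReal 0 1)
      ∂(Measure.pi fun _ : Fin k₁ => gaussianReal 0 1) := by
  have h1 := measurePreserving_piCongrLeft (α := fun _ : Fin (k₁ + k₂) => ℝ)
    (fun _ : Fin (k₁ + k₂) => gaussianReal 0 1) (finSumFinEquiv (m := k₁) (n := k₂))
  have h2 := measurePreserving_sumPiEquivProdPi_symm (X := fun _ : Fin k₁ ⊕ Fin k₂ => ℝ)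
    (fun _ => gaussianReal 0 1)
  rw [← (h1.comp h2).lintegral_comp (by fun_prop), lintegral_prod _ (by
    apply Measurable.aemeasurable
    apply Measurable.comp (g := fun z : Fin (k₁ + k₂) → ℝ =>
      F (∑ i : Fin k₁, z (Fin.castAdd k₂ i) ^ 2, ∑ i : Fin k₂, z (Fin.natAdd k₁ i) ^ 2))
    · fun_prop
    · exact (h1.comp h2).measurable)]
  refine lintegral_congr fun a => lintegral_congr fun b => ?_
  have e1 : ∀ i, (MeasurableEquiv.piCongrLeft (fun _ : Fin (k₁ + k₂) => ℝ) finSumFinEquiv)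
      ((MeasurableEquiv.sumPiEquivProdPi fun _ : Fin k₁ ⊕ Fin k₂ => ℝ).symm (a, b))
      (Fin.castAdd k₂ i) = a i := by
    intro i
    rw [← finSumFinEquiv_apply_left, MeasurableEquiv.coe_piCongrLeft,
      Equiv.piCongrLeft_apply_apply]
    rfl
  have e2 : ∀ i, (MeasurableEquiv.piCongrLeft (fun _ : Fin (k₁ + k₂) => ℝ) finSumFinEquiv)
      ((MeasurableEquiv.sumPiEquivProdPi fun _ : Fin k₁ ⊕ Fin k₂ => ℝ).symm (a, b))
      (Fin.natAdd k₁ i) = b i := by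
    intro i
    rw [← finSumFinEquiv_apply_right, MeasurableEquiv.coe_piCongrLeft,
      Equiv.piCongrLeft_apply_apply]
    rfl
  simp only [Function.comp_apply, e1, e2]

lemma law_AB (m n : ℕ) : ∃ c : ℝ≥0∞, ∀ F : ℝ × ℝ → ℝ≥0∞, Measurable F →
    ∫⁻ z, F (∑ i : Fin (m + 1), z (Fin.castAdd (n + 1) i) ^ 2,
        ∑ i : Fin (n + 1), z (Fin.natAdd (m + 1) i) ^ 2)
      ∂(Measure.pi fun _ : Fin ((m + 1) + (n + 1)) => gaussianReal 0 1) =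
    c * ∫⁻ x, ∫⁻ y, F (x ^ 2, y ^ 2) * ENNReal.ofReal (|x| ^ m * |y| ^ n)
      ∂(gaussianReal 0 1) ∂(gaussianReal 0 1) := by
  obtain ⟨c, hc⟩ := radial m
  obtain ⟨d, hd⟩ := radial n
  refine ⟨c * d, fun F hF => ?_⟩
  rw [law_split _ _ F hF]
  simp_rw [fun a : ℝ => hd (fun u => F (a, u)) (by fun_prop)]
  have hm : Measurable fun a : ℝ => ∫⁻ y, F (a, y ^ 2) * ENNReal.ofReal (|y| ^ n)
      ∂(gaussianReal 0 1) :=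
    Measurable.lintegral_prod_right' (f := fun p : ℝ × ℝ => F (p.1, p.2 ^ 2) *
      ENNReal.ofReal (|p.2| ^ n)) (by fun_prop)
  rw [hc (fun a => d * ∫⁻ y, F (a, y ^ 2) * ENNReal.ofReal (|y| ^ n) ∂(gaussianReal 0 1))
    (by fun_prop), mul_assoc]
  congr 1
  rw [← lintegral_const_mul _ (Measurable.lintegral_prod_right' (f := fun p : ℝ × ℝ =>
    F (p.1 ^ 2, p.2 ^ 2) * ENNReal.ofReal (|p.1| ^ m * |p.2| ^ n)) (by fun_prop))]
  refine lintegral_congr fun x => ?_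
  rw [mul_assoc, ← lintegral_mul_const _ (by fun_prop)]
  congr 1
  refine lintegral_congr fun y => ?_
  rw [ENNReal.ofReal_mul (by positivity)]
  ring

lemma wald_eval (k₁ k₂ : ℕ) (z : Fin (k₁ + k₂) → ℝ) :
    waldRV (∑ i : Fin (k₁ + k₂), C (if (i : ℕ) < k₁ then (1 : ℝ) else -1) * X i ^ 2)
      (1 : Matrix (Fin (k₁ + k₂)) (Fin (k₁ + k₂)) ℝ) z =
    ((∑ i : Fin k₁, z (Fin.castAdd k₂ i) ^ 2) - ∑ i : Fin k₂, z (Fin.natAdd k₁ i) ^ 2) ^ 2 /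
      (4 * ((∑ i : Fin k₁, z (Fin.castAdd k₂ i) ^ 2) + ∑ i : Fin k₂, z (Fin.natAdd k₁ i) ^ 2)) := by
  have hg : ∀ j, polyGrad (∑ i : Fin (k₁ + k₂),
      C (if (i : ℕ) < k₁ then (1 : ℝ) else -1) * X i ^ 2) z j =
      (if (j : ℕ) < k₁ then (1 : ℝ) else -1) * (2 * z j) := by
    intro j
    unfold polyGrad
    rw [map_sum, map_sum, Finset.sum_eq_single j]
    · simp [Derivation.leibniz_pow]
    · intro i _ hij
      simp [Derivation.leibniz_pow, pderiv_X_of_ne hij]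
    · simp
  unfold waldRV
  rw [Matrix.one_mulVec]
  congr 1
  · rw [map_sum, Fin.sum_univ_add]
    simp [sub_eq_add_neg]
  · unfold dotProduct
    simp only [hg]
    rw [Fin.sum_univ_add, mul_add, Finset.mul_sum, Finset.mul_sum]
    congr 1
    · refine Finset.sum_congr rfl fun i _ => ?_
      simp; ring
    · refine Finset.sum_congr rfl fun i _ => ?_
      simp; ring

/-- Let `k₁, k₂ > 0` and `k = k₁ + k₂`.  If
`f(x) = x₁² + ⋯ + x_{k₁}² − x_{k₁+1}² − ⋯ − x_k²`, then `W_f = W_{f,I}` stochastically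
dominates `(1/4)·χ²₁`. -/
theorem waldRV_signature_lower_bound (k₁ k₂ : ℕ) (hk₁ : 0 < k₁) (hk₂ : 0 < k₂) :
    ∀ t : ℝ, ((chiSq 1).map (fun y => 1 / 4 * y)) (Set.Ioi t) ≤
      (stdGaussian (Fin (k₁ + k₂))).map
        (waldRV (∑ i : Fin (k₁ + k₂), C (if (i : ℕ) < k₁ then (1 : ℝ) else -1) * X i ^ 2)
          (1 : Matrix (Fin (k₁ + k₂)) (Fin (k₁ + k₂)) ℝ)) (Set.Ioi t) := by
  intro t
  obtain ⟨m, rfl⟩ := Nat.exists_eq_add_of_le' hk₁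
  obtain ⟨n, rfl⟩ := Nat.exists_eq_add_of_le' hk₂
  unfold chiSq
  change (((Measure.pi fun _ : Fin 1 => gaussianReal 0 1).map fun z => ∑ i, (z i) ^ 2).map
    (fun y => 1 / 4 * y)) (Set.Ioi t) ≤
    ((Measure.pi fun _ : Fin ((m + 1) + (n + 1)) => gaussianReal 0 1).map _) (Set.Ioi t)
  set S : Set ℝ := {v | t < 1 / 4 * v ^ 2} with hSdef
  have hS : MeasurableSet S := measurableSet_lt (by fun_prop) (by fun_prop)
  have hL : (((Measure.pi fun _ : Fin 1 => gaussianReal 0 1).map fun z => ∑ i, (z i) ^ 2).map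
      (fun y => 1 / 4 * y)) (Set.Ioi t) = gaussianReal 0 1 S := by
    rw [Measure.map_map (by fun_prop) (by fun_prop),
      Measure.map_apply (by fun_prop) measurableSet_Ioi,
      ← (measurePreserving_funUnique (gaussianReal 0 1) (Fin 1)).measure_preimage
        hS.nullMeasurableSet]
    congr 1
    ext z
    simp [hSdef]
  rw [hL]
  have hwm : Measurable (waldRV (∑ i : Fin ((m + 1) + (n + 1)),
      C (if (i : ℕ) < m + 1 then (1 : ℝ) else -1) * X i ^ 2)
      (1 : Matrix (Fin ((m + 1) + (n + 1))) (Fin ((m + 1) + (n + 1))) ℝ)) := by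
    rw [funext (wald_eval (m + 1) (n + 1))]
    fun_prop
  rw [Measure.map_apply hwm measurableSet_Ioi,
    ← lintegral_indicator_one (hwm measurableSet_Ioi)]
  obtain ⟨c, hc⟩ := law_AB m n
  have h1 := hc 1 measurable_one
  simp only [Pi.one_apply, lintegral_one, measure_univ, one_mul] at h1
  have hSi : Measurable (S.indicator (1 : ℝ → ℝ≥0∞)) := measurable_one.indicator hS
  have h2 := hc (fun p => S.indicator 1 ((p.1 - p.2) / √(p.1 + p.2))) (by fun_prop)
  have h3 := core_s15 m n S hS
    (fun v hv v' hv' => by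
      simp only [hSdef, Set.mem_ofPred_eq, not_lt] at hv hv'
      linarith)
    (fun v => by simp [hSdef])
  calc gaussianReal 0 1 S = gaussianReal 0 1 S * 1 := (mul_one _).symm
    _ ≤ _ := by
      rw [h1, mul_left_comm]
      exact mul_le_mul_right h3 c
    _ = _ := h2.symm
    _ = _ := by
      refine lintegral_congr fun z => ?_
      have hA : 0 ≤ ∑ i : Fin (m + 1), z (Fin.castAdd (n + 1) i) ^ 2 := by positivity
      have hB : 0 ≤ ∑ i : Fin (n + 1), z (Fin.natAdd (m + 1) i) ^ 2 := by positivity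
      have hmem : ((∑ i : Fin (m + 1), z (Fin.castAdd (n + 1) i) ^ 2 -
          ∑ i : Fin (n + 1), z (Fin.natAdd (m + 1) i) ^ 2) /
          √(∑ i : Fin (m + 1), z (Fin.castAdd (n + 1) i) ^ 2 +
          ∑ i : Fin (n + 1), z (Fin.natAdd (m + 1) i) ^ 2)) ∈ S ↔
          z ∈ waldRV (∑ i : Fin ((m + 1) + (n + 1)),
            C (if (i : ℕ) < m + 1 then (1 : ℝ) else -1) * X i ^ 2)
            (1 : Matrix (Fin ((m + 1) + (n + 1))) (Fin ((m + 1) + (n + 1))) ℝ) ⁻¹'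
            Set.Ioi t := by
        rw [Set.mem_preimage, wald_eval, Set.mem_Ioi, hSdef, Set.mem_ofPred_eq, div_pow,
          Real.sq_sqrt (add_nonneg hA hB), div_mul_div_comm, one_mul]
      by_cases hz : z ∈ waldRV (∑ i : Fin ((m + 1) + (n + 1)),
            C (if (i : ℕ) < m + 1 then (1 : ℝ) else -1) * X i ^ 2)
            (1 : Matrix (Fin ((m + 1) + (n + 1))) (Fin ((m + 1) + (n + 1))) ℝ) ⁻¹' Set.Ioi t
      · exact (Set.indicator_of_mem (hmem.2 hz) _).trans (Set.indicator_of_mem hz (1 : (Fin ((m + 1) + (n + 1)) → ℝ) → ℝ≥0∞)).symm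
      · exact (Set.indicator_of_notMem (fun h => hz (hmem.1 h)) _).trans
          (Set.indicator_of_notMem hz _).symm
end
end
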